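/- Let R be an associative ring with identity and Q a left rooted quiver. Then Φ(F(R)) is a cogenerator for Φ(GF(R)) in Rep(Q,R): for every X ∈ Φ(GF(R)) there is a short exact sequence 0 → X → F → Y → 0 in Rep(Q,R) with F ∈ Φ(F(R)) and Y ∈ Φ(GF(R)). -/

import Mathlib

open CategoryTheory CategoryTheory.Limits Opposite
open scoped DirectSum

universe w v u

namespace QuiverGF


section Cat

variable {A : Type u} [Category.{v} A] [Abelian A]

/-- `Ext¹(X,Y) = 0`, expressed as: every short exact sequence `0 → Y → E → X → 0` splits. -/
def ext1Zero (X Y : A) : Prop :=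
  ∀ (E : A) (f : Y ⟶ E) (g : E ⟶ X) (w : f ≫ g = 0),
    (ShortComplex.mk f g w).ShortExact → ∃ s : X ⟶ E, s ≫ g = 𝟙 X

/-- `extHigherZero n X Y` encodes `Ext^{n+1}(X,Y) = 0`, defined by dimension shifting along
short exact sequences `0 → Y → I → Z → 0` with `I` injective. -/
def extHigherZero : ℕ → A → A → Prop
  | 0 => fun X Y => ext1Zero X Y
  | n + 1 => fun X Y => ∀ (I Z : A) (f : Y ⟶ I) (g : I ⟶ Z) (w : f ≫ g = 0),
      Injective I → (ShortComplex.mk f g w).ShortExact → extHigherZero n X Z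

/-- The right `Ext¹`-orthogonal class. -/
def rightPerp (S : Set A) : Set A := {Y | ∀ X ∈ S, ext1Zero X Y}

/-- The left `Ext¹`-orthogonal class. -/
def leftPerp (S : Set A) : Set A := {X | ∀ Y ∈ S, ext1Zero X Y}

/-- `(X, Y)` is a cotorsion pair. -/
structure IsCotorsionPair (X Y : Set A) : Prop where
  right_eq : Y = rightPerp X
  left_eq : X = leftPerp Y

/-- Completeness of a pair of classes: every object admits approximation sequences. -/
def IsCompleteCP (X Y : Set A) : Prop :=
  (∀ M : A, ∃ (YM XM : A) (f : M ⟶ YM) (g : YM ⟶ XM) (w : f ≫ g = 0),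
     (ShortComplex.mk f g w).ShortExact ∧ YM ∈ Y ∧ XM ∈ X) ∧
  (∀ M : A, ∃ (YM XM : A) (f : YM ⟶ XM) (g : XM ⟶ M) (w : f ≫ g = 0),
     (ShortComplex.mk f g w).ShortExact ∧ YM ∈ Y ∧ XM ∈ X)

/-- Heredity: `Ext^i(X,Y) = 0` for all `i ≥ 1`. -/
def IsHereditaryCP (X Y : Set A) : Prop :=
  ∀ M ∈ X, ∀ N ∈ Y, ∀ n : ℕ, extHigherZero n M N

/-- A thick class of objects. -/
structure IsThick (W : Set A) : Prop where
  summand : ∀ Z ∈ W, ∀ (X : A) (i : X ⟶ Z) (r : Z ⟶ X), i ≫ r = 𝟙 X → X ∈ W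
  ext_closed : ∀ (S : ShortComplex A), S.ShortExact → S.X₁ ∈ W → S.X₃ ∈ W → S.X₂ ∈ W
  ker_epi : ∀ (S : ShortComplex A), S.ShortExact → S.X₂ ∈ W → S.X₃ ∈ W → S.X₁ ∈ W
  coker_mono : ∀ (S : ShortComplex A), S.ShortExact → S.X₁ ∈ W → S.X₂ ∈ W → S.X₃ ∈ W

/-- A Hovey triple. -/
structure IsHoveyTriple (C W F : Set A) : Prop where
  thick : IsThick W
  cp1 : IsCotorsionPair C (W ∩ F)
  cp1_complete : IsCompleteCP C (W ∩ F)
  cp2 : IsCotorsionPair (C ∩ W) F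
  cp2_complete : IsCompleteCP (C ∩ W) F

/-- A hereditary Hovey triple. -/
structure IsHereditaryHoveyTriple (C W F : Set A) extends IsHoveyTriple C W F : Prop where
  cp1_hereditary : IsHereditaryCP C (W ∩ F)
  cp2_hereditary : IsHereditaryCP (C ∩ W) F

/-- `f : C ⟶ M` is an `S`-cover of `M`. -/
def IsCover (S : Set A) {C M : A} (f : C ⟶ M) : Prop :=
  C ∈ S ∧ (∀ C' ∈ S, ∀ g : C' ⟶ M, ∃ h : C' ⟶ C, h ≫ f = g) ∧
    (∀ h : C ⟶ C, h ≫ f = f → IsIso h)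

/-- `f : M ⟶ E` is an `S`-envelope of `M`. -/
def IsEnvelope (S : Set A) {M E : A} (f : M ⟶ E) : Prop :=
  E ∈ S ∧ (∀ E' ∈ S, ∀ g : M ⟶ E', ∃ h : E ⟶ E', f ≫ h = g) ∧
    (∀ h : E ⟶ E, f ≫ h = f → IsIso h)

/-- A perfect pair of classes: X-covers and Y-envelopes always exist. -/
def IsPerfectCP (X Y : Set A) : Prop :=
  (∀ M : A, ∃ (C : A) (f : C ⟶ M), IsCover X f) ∧
  (∀ M : A, ∃ (E : A) (f : M ⟶ E), IsEnvelope Y f)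

/-- `W` is a cogenerator for `X`. -/
def IsCogenerator (W X : Set A) : Prop :=
  W ⊆ X ∧ ∀ M ∈ X, ∃ (W' X' : A) (f : M ⟶ W') (g : W' ⟶ X') (w : f ≫ g = 0),
    (ShortComplex.mk f g w).ShortExact ∧ W' ∈ W ∧ X' ∈ X

end Cat

section Quiver

variable (V : Type w) [Quiver.{w} V]

/-- A quiver is left rooted if it has no infinite sequence of arrows `• → • → • → ⋯`. -/
def LeftRooted : Prop := ¬ ∃ f : ℕ → V, ∀ n : ℕ, Nonempty (f n ⟶ f (n + 1))

variable {V}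
variable {A : Type u} [Category.{v} A]

/-- A vertex of `V`, seen as an object of the path category. -/
abbrev vtx (i : V) : Paths V := i

section Phi

variable [Abelian A] [HasCoproducts.{w} A]

/-- The canonical morphism `φᵢˣ : ⊕_{a : j ⟶ i} X(j) ⟶ X(i)`. -/
noncomputable def phi (X : Paths V ⥤ A) (i : V) :
    (∐ fun p : Σ j : V, j ⟶ i => X.obj (vtx p.1)) ⟶ X.obj (vtx i) :=
  Sigma.desc fun p => X.map p.2.toPath

/-- The class `Φ(S)` of representations. -/
noncomputable def PhiClass (S : Set A) : Set (Paths V ⥤ A) :=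
  {X | ∀ i : V, Mono (phi X i) ∧ X.obj (vtx i) ∈ S ∧ cokernel (phi X i) ∈ S}

end Phi

/-- The class of representations with all vertex values in `S`. -/
def RepClass (S : Set A) : Set (Paths V ⥤ A) := {X | ∀ i : V, X.obj (vtx i) ∈ S}

section Psi

variable [Abelian A] [HasProducts.{w} A]

/-- The canonical morphism `ψᵢʸ : Y(i) ⟶ Π_{a : i ⟶ j} Y(j)`. -/
noncomputable def psi (Y : Paths V ⥤ A) (i : V) :
    Y.obj (vtx i) ⟶ ∏ᶜ fun p : Σ j : V, i ⟶ j => Y.obj (vtx p.1) :=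
  Pi.lift fun p => Y.map p.2.toPath

/-- The class `Ψ(S)` of representations. -/
noncomputable def PsiClass (S : Set A) : Set (Paths V ⥤ A) :=
  {Y | ∀ i : V, Epi (psi Y i) ∧ Y.obj (vtx i) ∈ S ∧ kernel (psi Y i) ∈ S}

end Psi

end Quiver




section NcTensor

variable (R : Type u) [Ring R]

variable (E : Type u) [AddCommGroup E] [Module Rᵐᵒᵖ E]
variable (M : Type u) [AddCommGroup M] [Module R M]

/-- The defining relations of the tensor product `E ⊗_R M` of a right `R`-module `E`
and a left `R`-module `M` over a (possibly noncommutative) ring `R`. -/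
def ncRel : Submodule ℤ (TensorProduct ℤ E M) :=
  Submodule.span ℤ {z | ∃ (e : E) (r : R) (m : M),
    z = (MulOpposite.op r • e) ⊗ₜ[ℤ] m - e ⊗ₜ[ℤ] (r • m)}

/-- The tensor product `E ⊗_R M` of a right `R`-module `E` and a left `R`-module `M`. -/
abbrev NcTensor := TensorProduct ℤ E M ⧸ ncRel R E M

/-- The canonical generator `e ⊗ m` of `E ⊗_R M`. -/
noncomputable def NcTensor.tmul (e : E) (m : M) : NcTensor R E M :=
  Submodule.Quotient.mk (e ⊗ₜ[ℤ] m)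

variable {E M}
variable {E' : Type u} [AddCommGroup E'] [Module Rᵐᵒᵖ E']
variable {M' : Type u} [AddCommGroup M'] [Module R M']

/-- Functoriality of the tensor product. -/
noncomputable def NcTensor.map (f : E →ₗ[Rᵐᵒᵖ] E') (g : M →ₗ[R] M') :
    NcTensor R E M →ₗ[ℤ] NcTensor R E' M' :=
  Submodule.mapQ _ _
    (TensorProduct.map f.toAddMonoidHom.toIntLinearMap g.toAddMonoidHom.toIntLinearMap)
    (by
      refine Submodule.span_le.2 ?_
      rintro z ⟨e, r, m, rfl⟩
      refine Submodule.mem_comap.2 (Submodule.subset_span ?_)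
      exact ⟨f e, r, g m,
        (map_sub (TensorProduct.map f.toAddMonoidHom.toIntLinearMap
          g.toAddMonoidHom.toIntLinearMap) _ _).trans
          (by simp [TensorProduct.map_tmul, map_smul])⟩)

@[simp] lemma NcTensor.map_tmul (f : E →ₗ[Rᵐᵒᵖ] E') (g : M →ₗ[R] M') (e : E) (m : M) :
    NcTensor.map R f g (NcTensor.tmul R E M e m) = NcTensor.tmul R E' M' (f e) (g m) := by
  rfl

end NcTensor

section ModuleClasses

variable (R : Type u) [Ring R]

/-- A left `R`-module is flat if tensoring with it preserves injections of right `R`-modules. -/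
def IsFlatModule (M : ModuleCat.{u} R) : Prop :=
  ∀ (E E' : ModuleCat.{u} Rᵐᵒᵖ) (f : E ⟶ E'), Function.Injective f →
    Function.Injective (NcTensor.map R (f.hom : ↑E →ₗ[Rᵐᵒᵖ] ↑E') (LinearMap.id (M := ↑M)))

/-- Gorenstein flat left `R`-modules: cycles of exact complexes of flat modules which stay
exact after tensoring with any injective right `R`-module. -/
def IsGorensteinFlatModule (M : ModuleCat.{u} R) : Prop :=
  ∃ (F : ℤ → ModuleCat.{u} R) (d : ∀ n : ℤ, F n ⟶ F (n + 1)),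
    (∀ n, IsFlatModule R (F n)) ∧
    (∀ n, Function.Exact (d n) (d (n + 1))) ∧
    Nonempty (↑M ≃ₗ[R] ↥(LinearMap.ker ((d 0).hom : ↑(F 0) →ₗ[R] ↑(F (0 + 1))))) ∧
    ∀ (E : ModuleCat.{u} Rᵐᵒᵖ), Injective E → ∀ n : ℤ,
      Function.Exact (NcTensor.map R (LinearMap.id (M := ↑E)) ((d n).hom : ↑(F n) →ₗ[R] ↑(F (n + 1))))
        (NcTensor.map R (LinearMap.id (M := ↑E)) ((d (n + 1)).hom : ↑(F (n + 1)) →ₗ[R] ↑(F (n + 1 + 1))))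

/-- Projectively coresolved Gorenstein flat left `R`-modules. -/
def IsPGFModule (M : ModuleCat.{u} R) : Prop :=
  ∃ (P : ℤ → ModuleCat.{u} R) (d : ∀ n : ℤ, P n ⟶ P (n + 1)),
    (∀ n, Projective (P n)) ∧
    (∀ n, Function.Exact (d n) (d (n + 1))) ∧
    Nonempty (↑M ≃ₗ[R] ↥(LinearMap.ker ((d 0).hom : ↑(P 0) →ₗ[R] ↑(P (0 + 1))))) ∧
    ∀ (E : ModuleCat.{u} Rᵐᵒᵖ), Injective E → ∀ n : ℤ,
      Function.Exact (NcTensor.map R (LinearMap.id (M := ↑E)) ((d n).hom : ↑(P n) →ₗ[R] ↑(P (n + 1))))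
        (NcTensor.map R (LinearMap.id (M := ↑E)) ((d (n + 1)).hom : ↑(P (n + 1)) →ₗ[R] ↑(P (n + 1 + 1))))

/-- Gorenstein injective objects of an abelian category. -/
def IsGorensteinInjective {A : Type*} [Category A] [Abelian A] (M : A) : Prop :=
  ∃ (I : ℤ → A) (d : ∀ n : ℤ, I n ⟶ I (n + 1)),
    (∀ n, Injective (I n)) ∧
    (∀ n, ∃ w : d n ≫ d (n + 1) = 0, (ShortComplex.mk (d n) (d (n + 1)) w).Exact) ∧
    Nonempty (M ≅ kernel (d 0)) ∧
    ∀ (E : A), Injective E → ∀ n : ℤ,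
      Function.Exact (fun f : E ⟶ I n => f ≫ d n) (fun f : E ⟶ I (n + 1) => f ≫ d (n + 1))

end ModuleClasses



section Char

variable (R : Type u) [Ring R] (G : Type u) [AddCommGroup G]

section Left
variable (M : Type u) [AddCommGroup M] [Module R M]

/-- Right `R`-action on `Hom_ℤ(M, G)` for a left `R`-module `M`. -/
instance : SMul Rᵐᵒᵖ (M →+ G) :=
  ⟨fun r f => f.comp (DistribMulAction.toAddMonoidHom M r.unop)⟩

@[simp] lemma op_smul_addHom_apply (r : Rᵐᵒᵖ) (f : M →+ G) (m : M) :
    (r • f) m = f (r.unop • m) := rfl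

instance charRight : Module Rᵐᵒᵖ (M →+ G) where
  one_smul f := AddMonoidHom.ext fun m => by simp
  mul_smul r s f := AddMonoidHom.ext fun m => by simp [mul_smul]
  smul_zero r := AddMonoidHom.ext fun m => rfl
  smul_add r f g := AddMonoidHom.ext fun m => rfl
  add_smul r s f := AddMonoidHom.ext fun m => by simp [add_smul]
  zero_smul f := AddMonoidHom.ext fun m => by simp

end Left

section Right
variable (N : Type u) [AddCommGroup N] [Module Rᵐᵒᵖ N]

/-- Left `R`-action on `Hom_ℤ(N, G)` for a right `R`-module `N`. -/
instance : SMul R (N →+ G) :=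
  ⟨fun r f => f.comp (DistribMulAction.toAddMonoidHom N (MulOpposite.op r))⟩

@[simp] lemma smul_addHom_apply (r : R) (f : N →+ G) (n : N) :
    (r • f) n = f (MulOpposite.op r • n) := rfl

instance charLeft : Module R (N →+ G) where
  one_smul f := AddMonoidHom.ext fun n => by simp
  mul_smul r s f := AddMonoidHom.ext fun n => by simp [MulOpposite.op_mul, mul_smul]
  smul_zero r := AddMonoidHom.ext fun n => rfl
  smul_add r f g := AddMonoidHom.ext fun n => rfl
  add_smul r s f := AddMonoidHom.ext fun n => by simp [add_smul]
  zero_smul f := AddMonoidHom.ext fun n => by simp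

end Right

section Precomp

variable {R G}
variable {M N : Type u} [AddCommGroup M] [AddCommGroup N] [Module R M] [Module R N]

/-- Precomposition, as an `Rᵐᵒᵖ`-linear map between character modules. -/
def precompHom (h : M →ₗ[R] N) : (N →+ G) →ₗ[Rᵐᵒᵖ] (M →+ G) where
  toFun f := f.comp h.toAddMonoidHom
  map_add' f g := rfl
  map_smul' r f := AddMonoidHom.ext fun m => by simp [map_smul]

variable {P Q : Type u} [AddCommGroup P] [AddCommGroup Q] [Module Rᵐᵒᵖ P] [Module Rᵐᵒᵖ Q]

/-- Precomposition, as an `R`-linear map between character modules of right modules. -/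
def precompHomOp (h : P →ₗ[Rᵐᵒᵖ] Q) : (Q →+ G) →ₗ[R] (P →+ G) where
  toFun f := f.comp h.toAddMonoidHom
  map_add' f g := rfl
  map_smul' r f := AddMonoidHom.ext fun p => by simp [map_smul]

end Precomp

end Char


section Reps

variable (V : Type u) [Quiver.{u} V] (R : Type u) [Ring R]

/-- The category of representations of the quiver `V` with values in left `R`-modules. -/
abbrev RepL := Paths V ⥤ ModuleCat.{u} R

/-- The category of representations of the opposite quiver with values in right `R`-modules. -/
abbrev RepR := Paths Vᵒᵖ ⥤ ModuleCat.{u} Rᵐᵒᵖ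

/-- A vertex of `V`, seen as an object of the path category. -/
abbrev vtx' {V : Type u} [Quiver.{u} V] (i : V) : Paths V := i

/-- The representation `Hom(X, G) ∈ Rep(Qᵒᵖ, Rᵒᵖ)`, given vertexwise by `Hom_ℤ(X(i), G)`. -/
noncomputable def HomRepObj (X : RepL V R) (G : Type u) [AddCommGroup G] : RepR V R :=
  Paths.lift
    { obj := fun x => ModuleCat.of Rᵐᵒᵖ (↑(X.obj (vtx' x.unop)) →+ G)
      map := fun {x y} a =>
        ModuleCat.ofHom (precompHom (G := G) ((X.map a.unop.toPath).hom : ↑(X.obj (vtx' y.unop)) →ₗ[R] ↑(X.obj (vtx' x.unop))) :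
          _ →ₗ[Rᵐᵒᵖ] _) }

/-- The representation `Hom(Y, G) ∈ Rep(Q, R)` for `Y ∈ Rep(Qᵒᵖ, Rᵒᵖ)`. -/
noncomputable def HomRepObjOp (Y : RepR V R) (G : Type u) [AddCommGroup G] : RepL V R :=
  Paths.lift
    { obj := fun i => ModuleCat.of R (↑(Y.obj (vtx' (op i))) →+ G)
      map := fun {i j} a =>
        ModuleCat.ofHom (precompHomOp (G := G) ((Y.map a.op.toPath).hom : ↑(Y.obj (vtx' (op j))) →ₗ[Rᵐᵒᵖ] ↑(Y.obj (vtx' (op i)))) :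
          _ →ₗ[R] _) }

/-- The character representation `X⁺ = Hom(X, ℚ/ℤ)`. -/
noncomputable def charRep (X : RepL V R) : RepR V R :=
  HomRepObj V R X (ULift.{u} (AddCircle (1 : ℚ)))

section Tensor

variable {V R}

/-- The additive group structure of `E ⊗_R M` (no longer found under binders). -/
noncomputable instance NcTensor.instAddCommGroup (E : Type u) [AddCommGroup E] [Module Rᵐᵒᵖ E]
    (M : Type u) [AddCommGroup M] [Module R M] :
    AddCommGroup (NcTensor R E M) :=
  Submodule.Quotient.addCommGroup (ncRel R E M)

/-- The underlying group of the tensor product of representations before dividing out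
by the relations coming from arrows. -/
noncomputable abbrev repTensorBase (Y : RepR V R) (X : RepL V R) : Type u :=
  ⨁ (i : V), NcTensor R (↑(Y.obj (vtx' (op i)))) (↑(X.obj (vtx' i)))

open scoped Classical in
/-- The relations defining the tensor product of representations. -/
noncomputable def repTensorRel (Y : RepR V R) (X : RepL V R) :
    Submodule ℤ (repTensorBase Y X) :=
  Submodule.span ℤ {z | ∃ (i j : V) (a : i ⟶ j) (y : ↑(Y.obj (vtx' (op j)))) (x : ↑(X.obj (vtx' i))),
    z = DirectSum.of _ i (NcTensor.tmul R _ _ (Y.map a.op.toPath y) x)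
      - DirectSum.of _ j (NcTensor.tmul R _ _ y (X.map a.toPath x))}

/-- The tensor product `Y ⊗_Q X` of representations, for `Y ∈ Rep(Qᵒᵖ, Rᵒᵖ)` and
`X ∈ Rep(Q, R)`. -/
noncomputable abbrev RepTensor (Y : RepR V R) (X : RepL V R) : Type u :=
  repTensorBase Y X ⧸ repTensorRel Y X

open scoped Classical in
/-- Functoriality of the tensor product of representations. -/
noncomputable def RepTensor.map {Y Y' : RepR V R} {X X' : RepL V R}
    (g : Y ⟶ Y') (f : X ⟶ X') : RepTensor Y X →ₗ[ℤ] RepTensor Y' X' :=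
  Submodule.mapQ _ _
    (DirectSum.toModule ℤ V (repTensorBase Y' X') fun i =>
      (DirectSum.lof ℤ V _ i).comp
        (NcTensor.map R ((g.app (vtx' (op i))).hom : _ →ₗ[Rᵐᵒᵖ] _) ((f.app (vtx' i)).hom : _ →ₗ[R] _)))
    (by
      refine Submodule.span_le.2 ?_
      rintro z ⟨i, j, a, y, x, rfl⟩
      refine Submodule.mem_comap.2 ?_
      rw [map_sub, ← DirectSum.lof_eq_of ℤ, ← DirectSum.lof_eq_of ℤ,
        DirectSum.toModule_lof, DirectSum.toModule_lof]
      refine Submodule.subset_span ?_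
      refine ⟨i, j, a, g.app (vtx' (op j)) y, f.app (vtx' i) x, ?_⟩
      have hg : g.app (vtx' (op i)) (Y.map a.op.toPath y)
          = Y'.map a.op.toPath (g.app (vtx' (op j)) y) := by
        have h := g.naturality (a.op.toPath : vtx' (op j) ⟶ vtx' (op i))
        exact ConcreteCategory.congr_hom h y
      have hf : f.app (vtx' j) (X.map a.toPath x)
          = X'.map a.toPath (f.app (vtx' i) x) := by
        have h := f.naturality (a.toPath : vtx' i ⟶ vtx' j)
        exact ConcreteCategory.congr_hom h x
      simp only [LinearMap.comp_apply, NcTensor.map_tmul, DirectSum.lof_eq_of]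
      rw [hg, hf])

end Tensor

end Reps




section More

variable (V : Type u) [Quiver.{u} V] (R : Type u) [Ring R]

/-- Cotorsion left `R`-modules. -/
def IsCotorsionModule (M : ModuleCat.{u} R) : Prop :=
  ∀ F : ModuleCat.{u} R, IsFlatModule R F → ext1Zero F M

/-- A right coherent ring: every finitely generated right ideal is finitely presented. -/
def RightCoherent : Prop :=
  ∀ I : Submodule Rᵐᵒᵖ R, I.FG → Module.FinitePresentation Rᵐᵒᵖ ↥I

/-- Flat representations: colimits of projective representations. -/
def IsFlatRep (Xr : RepL V R) : Prop :=
  ∃ (J : Cat.{u, u}) (D : ↥J ⥤ RepL V R) (c : Limits.Cocone D),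
    (∀ j, Projective (D.obj j)) ∧ Nonempty (Limits.IsColimit c) ∧ Nonempty (c.pt ≅ Xr)

/-- Gorenstein flat representations. -/
def IsGorensteinFlatRep (Xr : RepL V R) : Prop :=
  ∃ (F : ℤ → RepL V R) (d : ∀ n : ℤ, F (n + 1) ⟶ F n),
    (∀ n, IsFlatRep V R (F n)) ∧
    (∀ n, ∃ w : d (n + 1) ≫ d n = 0, (ShortComplex.mk (d (n + 1)) (d n) w).Exact) ∧
    Nonempty (Xr ≅ cokernel (d 0)) ∧
    ∀ (E : RepR V R), Injective E → ∀ n : ℤ,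
      Function.Exact (RepTensor.map (𝟙 E) (d (n + 1))) (RepTensor.map (𝟙 E) (d n))

/-- Projectively coresolved Gorenstein flat representations. -/
def IsPGFRep (Xr : RepL V R) : Prop :=
  ∃ (P : ℤ → RepL V R) (d : ∀ n : ℤ, P (n + 1) ⟶ P n),
    (∀ n, Projective (P n)) ∧
    (∀ n, ∃ w : d (n + 1) ≫ d n = 0, (ShortComplex.mk (d (n + 1)) (d n) w).Exact) ∧
    Nonempty (Xr ≅ cokernel (d 0)) ∧
    ∀ (E : RepR V R), Injective E → ∀ n : ℤ,
      Function.Exact (RepTensor.map (𝟙 E) (d (n + 1))) (RepTensor.map (𝟙 E) (d n))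

end More

section Swap

variable (R : Type u) [Ring R]
variable (M : Type u) [AddCommGroup M] [Module R M]
variable (E : Type u) [AddCommGroup E] [Module Rᵐᵒᵖ E]

/-- Relations for the tensor product `M ⊗_{Rᵒᵖ} E` of a right `Rᵒᵖ`-module `M`
and a left `Rᵒᵖ`-module `E`. -/
def ncRel' : Submodule ℤ (TensorProduct ℤ M E) :=
  Submodule.span ℤ {z | ∃ (m : M) (r : R) (e : E),
    z = (r • m) ⊗ₜ[ℤ] e - m ⊗ₜ[ℤ] (MulOpposite.op r • e)}

/-- The tensor product `M ⊗_{Rᵒᵖ} E`. -/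
abbrev NcTensorSwap := TensorProduct ℤ M E ⧸ ncRel' R M E

/-- The additive group structure of `M ⊗_{Rᵒᵖ} E` (no longer found under binders). -/
noncomputable instance NcTensorSwap.instAddCommGroup :
    AddCommGroup (NcTensorSwap R M E) :=
  Submodule.Quotient.addCommGroup (ncRel' R M E)

variable {M E}

/-- The generator `m ⊗ e` of `M ⊗_{Rᵒᵖ} E`. -/
noncomputable def NcTensorSwap.tmul (m : M) (e : E) : NcTensorSwap R M E :=
  Submodule.Quotient.mk (m ⊗ₜ[ℤ] e)

variable (V : Type u) [Quiver.{u} V]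

/-- The base of the tensor product `X ⊗_{Qᵒᵖ} Y`. -/
noncomputable abbrev repTensorSwapBase (X : RepL V R) (Y : RepR V R) : Type u :=
  ⨁ (i : V), NcTensorSwap R (↑(X.obj i)) (↑(Y.obj (op i)))

open scoped Classical in
/-- The relations of the tensor product `X ⊗_{Qᵒᵖ} Y`. -/
noncomputable def repTensorSwapRel (X : RepL V R) (Y : RepR V R) :
    Submodule ℤ (repTensorSwapBase R V X Y) :=
  Submodule.span ℤ {z | ∃ (j i : V) (a : j ⟶ i) (x : ↑(X.obj j)) (y : ↑(Y.obj (op i))),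
    z = DirectSum.of _ i (NcTensorSwap.tmul R (X.map a.toPath x) y)
      - DirectSum.of _ j (NcTensorSwap.tmul R x (Y.map a.op.toPath y))}

/-- The tensor product `X ⊗_{Qᵒᵖ} Y` of representations, i.e. the tensor product over the
opposite quiver of the opposite ring. -/
noncomputable abbrev RepTensorSwap (X : RepL V R) (Y : RepR V R) : Type u :=
  repTensorSwapBase R V X Y ⧸ repTensorSwapRel R V X Y

end Swap

section Eval

variable {V : Type u} [Quiver.{u} V] {R : Type u} [Ring R]

/-- Evaluation helper identifying the vertex value of `Hom(X, G)` with `Hom_ℤ(X(i), G)`. -/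
def homRepEval (X : RepL V R) (G : Type u) [AddCommGroup G] {v : Vᵒᵖ}
    (s : ↑((HomRepObj V R X G).obj v)) : ↑(X.obj v.unop) →+ G := s

/-- Evaluation helper identifying the vertex value of `Hom(Y, G)` with `Hom_ℤ(Y(i), G)`. -/
def homRepOpEval (Y : RepR V R) (G : Type u) [AddCommGroup G] {i : V}
    (s : ↑((HomRepObjOp V R Y G).obj i)) : ↑(Y.obj (op i)) →+ G := s

end Eval

end QuiverGF

section Statements

open CategoryTheory CategoryTheory.Limits Opposite QuiverGF
open scoped DirectSum

/-!
A Gorenstein flat module is a cycle of an exact complex of flat modules. Summing all shifts of that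
complex, and removing the complementary summand by a swindle, reduces to the cycles of an exact
differential module `(F, d)` with `F` flat. Adjoin free generators to `F` until every chain map from
a bounded below complex of finitely generated free modules becomes null-homotopic. By the equational
criterion of flatness, the resulting exact differential module `X ⊇ F` has flat cycles, while `X/F`
is an exact differential module on a free module. Hence the cycles of `F` embed in a flat module
with cokernel a cycle of a periodic complex of free modules, i.e. a projectively coresolved
Gorenstein flat (PGF) module. By Šaroch and Šťovíček, `Ext¹(P, F) = 0` for `P` PGF and `F` flat;
this follows by filling cycles on countably generated subcomplexes and transfinite exhaustion.

For a representation `X` in `Φ(GF)`, choose at each vertex `i` an embedding of the extension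
`0 → ⨁ X(j) → X(i) → C_i(X) → 0` in an extension of flat modules, with PGF cokernels. Since
`Ext¹(PGF, flat) = 0`, the structure maps of `X` extend to the flat modules `G_i` which contain the
`X(i)`. The extended maps need not be injective, so `G` and the cokernel `L` of `X → G` are replaced
by mapping cylinders: embed `⨁ L_j`, over the arrows `j → i`, in a free module `M_i` with PGF
cokernel, and add to both the representation freely generated by the modules `M_i`. Then the
structure maps are injective, with flat cokernels for `G` and PGF cokernels for `L`.
-/

namespace QuiverGF

section ShortExact

variable {R : Type*} [Ring R]

section Factorization

variable {A B C D : Type*} [AddCommGroup A] [AddCommGroup B] [AddCommGroup C] [AddCommGroup D]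
  [Module R A] [Module R B] [Module R C] [Module R D]

theorem exists_factor_of_surjective (s : A →ₗ[R] B) (hs : Function.Surjective s) (t : A →ₗ[R] C)
    (h : ∀ a, s a = 0 → t a = 0) : ∃ t' : B →ₗ[R] C, ∀ a, t' (s a) = t a :=
  ⟨(LinearMap.ker s).liftQ t h ∘ₗ (s.quotKerEquivOfSurjective hs).symm.toLinearMap, fun a => by
    have : (s.quotKerEquivOfSurjective hs).symm (s a) = Submodule.Quotient.mk a :=
      (LinearEquiv.symm_apply_eq _).2 rfl
    rw [LinearMap.comp_apply, LinearEquiv.coe_coe, this]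
    rfl⟩

theorem exists_factor_of_injective {j : A →ₗ[R] B} {q : B →ₗ[R] C} (hj : Function.Injective j)
    (hjq : Function.Exact j q) (t : D →ₗ[R] B) (h : ∀ d, q (t d) = 0) :
    ∃ t' : D →ₗ[R] A, ∀ d, j (t' d) = t d :=
  ⟨(LinearEquiv.ofInjective j hj).symm.toLinearMap ∘ₗ
    t.codRestrict (LinearMap.range j) fun d => (hjq (t d)).1 (h d), fun _ =>
      congrArg Subtype.val ((LinearEquiv.ofInjective j hj).apply_symm_apply _)⟩

end Factorization

/-- `0 → K → P → C → 0` is a short exact sequence of modules. -/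
structure IsShortExact {K P C : Type*} [AddCommGroup K] [AddCommGroup P] [AddCommGroup C]
    [Module R K] [Module R P] [Module R C] (j : K →ₗ[R] P) (q : P →ₗ[R] C) : Prop where
  injective : Function.Injective j
  exact : Function.Exact j q
  surjective : Function.Surjective q

namespace IsShortExact

section Basic

variable {A B C : Type*} [AddCommGroup A] [AddCommGroup B] [AddCommGroup C]
  [Module R A] [Module R B] [Module R C] {j : A →ₗ[R] B} {q : B →ₗ[R] C}

theorem mk' (h₁ : ∀ a, j a = 0 → a = 0) (h₂ : ∀ a, q (j a) = 0)
    (h₃ : ∀ b, q b = 0 → ∃ a, j a = b) (h₄ : Function.Surjective q) : IsShortExact j q :=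
  ⟨(injective_iff_map_eq_zero j).2 h₁, fun b => ⟨h₃ b, fun ⟨a, ha⟩ => ha ▸ h₂ a⟩, h₄⟩

theorem apply_apply (S : IsShortExact j q) (a : A) : q (j a) = 0 :=
  S.exact.apply_apply_eq_zero a

theorem exists_of_apply_eq_zero (S : IsShortExact j q) {b : B} (h : q b = 0) : ∃ a, j a = b :=
  (S.exact b).1 h

theorem eq_zero_of_apply_eq_zero (S : IsShortExact j q) {a : A} (h : j a = 0) : a = 0 :=
  S.injective (h.trans (map_zero j).symm)

theorem of_surjective (q : B →ₗ[R] C) (h : Function.Surjective q) :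
    IsShortExact (LinearMap.ker q).subtype q :=
  ⟨Submodule.subtype_injective _, q.exact_subtype_ker_map, h⟩

theorem of_injective (j : A →ₗ[R] B) (h : Function.Injective j) :
    IsShortExact j (LinearMap.range j).mkQ :=
  ⟨h, j.exact_map_mkQ_range, Submodule.mkQ_surjective _⟩

variable (R A B) in
theorem inl_snd : IsShortExact (LinearMap.inl R A B) (LinearMap.snd R A B) :=
  ⟨LinearMap.inl_injective, .inl_snd, LinearMap.snd_surjective⟩

theorem comp_equiv {A' : Type*} [AddCommGroup A'] [Module R A'] (S : IsShortExact j q)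
    (e : A' ≃ₗ[R] A) : IsShortExact (j ∘ₗ e.toLinearMap) q :=
  ⟨S.injective.comp e.injective, LinearEquiv.precomp_exact_iff_exact.2 S.exact, S.surjective⟩

theorem equiv_comp {C' : Type*} [AddCommGroup C'] [Module R C'] (S : IsShortExact j q)
    (e : C ≃ₗ[R] C') : IsShortExact j (e.toLinearMap ∘ₗ q) :=
  ⟨S.injective, LinearEquiv.postcomp_exact_iff_exact.2 S.exact, e.surjective.comp S.surjective⟩

end Basic

section NineLemma

variable {A B C P X S A' B' C' : Type*} [AddCommGroup A] [AddCommGroup B] [AddCommGroup C]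
  [AddCommGroup P] [AddCommGroup X] [AddCommGroup S]
  [AddCommGroup A'] [AddCommGroup B'] [AddCommGroup C']
  [Module R A] [Module R B] [Module R C] [Module R P] [Module R X] [Module R S]
  [Module R A'] [Module R B'] [Module R C']
  {a : A →ₗ[R] P} {a' : P →ₗ[R] A'} {b : B →ₗ[R] X} {b' : X →ₗ[R] B'}
  {c : C →ₗ[R] S} {c' : S →ₗ[R] C'}

theorem nineLemma_coker {j : A →ₗ[R] B} {q : B →ₗ[R] C} {J : P →ₗ[R] X} {Q : X →ₗ[R] S}
    (hjq : IsShortExact j q) (hJQ : IsShortExact J Q) (ha : IsShortExact a a')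
    (hb : IsShortExact b b') (hc : IsShortExact c c') (hbj : ∀ x, b (j x) = J (a x))
    (hcq : ∀ x, c (q x) = Q (b x)) :
    ∃ (j' : A' →ₗ[R] B') (q' : B' →ₗ[R] C'), IsShortExact j' q' ∧
      (∀ p, j' (a' p) = b' (J p)) ∧ ∀ x, q' (b' x) = c' (Q x) := by
  obtain ⟨j', hj'⟩ := exists_factor_of_surjective a' ha.surjective (b' ∘ₗ J) fun p hp => by
    obtain ⟨x, rfl⟩ := ha.exists_of_apply_eq_zero hp
    rw [LinearMap.comp_apply, ← hbj, hb.apply_apply]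
  obtain ⟨q', hq'⟩ := exists_factor_of_surjective b' hb.surjective (c' ∘ₗ Q) fun p hp => by
    obtain ⟨x, rfl⟩ := hb.exists_of_apply_eq_zero hp
    rw [LinearMap.comp_apply, ← hcq, hc.apply_apply]
  simp only [LinearMap.comp_apply] at hj' hq'
  refine ⟨j', q', mk' (fun y hy => ?_) (fun y => ?_) (fun y hy => ?_) (fun y => ?_), hj', hq'⟩
  · obtain ⟨p, rfl⟩ := ha.surjective y
    obtain ⟨x, hx⟩ := hb.exists_of_apply_eq_zero ((hj' p).symm.trans hy)
    have hqx : q x = 0 := hc.eq_zero_of_apply_eq_zero (by rw [hcq, hx, hJQ.apply_apply])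
    obtain ⟨z, rfl⟩ := hjq.exists_of_apply_eq_zero hqx
    rw [← hJQ.injective ((hbj z).symm.trans hx), ha.apply_apply]
  · obtain ⟨p, rfl⟩ := ha.surjective y
    rw [hj', hq', hJQ.apply_apply, map_zero]
  · obtain ⟨x, rfl⟩ := hb.surjective y
    obtain ⟨z, hz⟩ := hc.exists_of_apply_eq_zero ((hq' x).symm.trans hy)
    obtain ⟨t, rfl⟩ := hjq.surjective z
    obtain ⟨p, hp⟩ := hJQ.exists_of_apply_eq_zero (b := x - b t) (by
      rw [map_sub, ← hcq, hz, sub_self])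
    exact ⟨a' p, by rw [hj', hp, map_sub, hb.apply_apply, sub_zero]⟩
  · obtain ⟨s, rfl⟩ := hc.surjective y
    obtain ⟨x, rfl⟩ := hJQ.surjective s
    exact ⟨b' x, hq' x⟩

theorem nineLemma_ker {J : P →ₗ[R] X} {Q : X →ₗ[R] S} {j' : A' →ₗ[R] B'} {q' : B' →ₗ[R] C'}
    (hJQ : IsShortExact J Q) (hjq' : IsShortExact j' q') (ha : IsShortExact a a')
    (hb : IsShortExact b b') (hc : IsShortExact c c') (hbJ : ∀ x, b' (J x) = j' (a' x))
    (hcQ : ∀ x, c' (Q x) = q' (b' x)) :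
    ∃ (j : A →ₗ[R] B) (q : B →ₗ[R] C), IsShortExact j q ∧ (∀ x, b (j x) = J (a x)) ∧
      ∀ x, c (q x) = Q (b x) := by
  obtain ⟨j, hj⟩ := exists_factor_of_injective hb.injective hb.exact (J ∘ₗ a) fun x => by
    rw [LinearMap.comp_apply, hbJ, ha.apply_apply, map_zero]
  obtain ⟨q, hq⟩ := exists_factor_of_injective hc.injective hc.exact (Q ∘ₗ b) fun x => by
    rw [LinearMap.comp_apply, hcQ, hb.apply_apply, map_zero]
  simp only [LinearMap.comp_apply] at hj hq
  refine ⟨j, q, mk' (fun x hx => ?_) (fun x => ?_) (fun x hx => ?_) (fun z => ?_), hj, hq⟩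
  · have hJa : J (a x) = 0 := by rw [← hj, hx, map_zero]
    exact ha.eq_zero_of_apply_eq_zero (hJQ.eq_zero_of_apply_eq_zero hJa)
  · exact hc.eq_zero_of_apply_eq_zero (by rw [hq, hj, hJQ.apply_apply])
  · obtain ⟨p, hp⟩ := hJQ.exists_of_apply_eq_zero (b := b x) (by rw [← hq, hx, map_zero])
    have hap : a' p = 0 := hjq'.eq_zero_of_apply_eq_zero (by rw [← hbJ, hp, hb.apply_apply])
    obtain ⟨y, rfl⟩ := ha.exists_of_apply_eq_zero hap
    exact ⟨y, hb.injective ((hj y).trans hp)⟩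
  · obtain ⟨y, hy⟩ := hJQ.surjective (c z)
    obtain ⟨p', hp'⟩ := hjq'.exists_of_apply_eq_zero (b := b' y) (by
      rw [← hcQ, hy, hc.apply_apply])
    obtain ⟨p, rfl⟩ := ha.surjective p'
    obtain ⟨w, hw⟩ := hb.exists_of_apply_eq_zero (b := y - J p) (by
      rw [map_sub, hbJ, hp', sub_self])
    exact ⟨w, hc.injective (by rw [hq, hw, map_sub, hy, hJQ.apply_apply, sub_zero])⟩

end NineLemma

section Constructions

variable {A B C D E P P' A' C' : Type*} [AddCommGroup A] [AddCommGroup B] [AddCommGroup C]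
  [AddCommGroup D] [AddCommGroup E] [AddCommGroup P] [AddCommGroup P'] [AddCommGroup A']
  [AddCommGroup C'] [Module R A] [Module R B] [Module R C] [Module R D] [Module R E] [Module R P]
  [Module R P'] [Module R A'] [Module R C'] {j : A →ₗ[R] B} {q : B →ₗ[R] C}

variable (R A D) in
theorem id_zero [Subsingleton D] : IsShortExact (LinearMap.id : A →ₗ[R] A) (0 : A →ₗ[R] D) :=
  ⟨Function.injective_id, (LinearMap.exact_zero_iff_surjective _ _).2 Function.surjective_id,
    Function.surjective_to_subsingleton _⟩

variable (R A D) in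
theorem zero_id [Subsingleton D] : IsShortExact (0 : D →ₗ[R] A) LinearMap.id :=
  ⟨Function.injective_of_subsingleton _,
    (LinearMap.exact_zero_iff_injective _ _).2 Function.injective_id, Function.surjective_id⟩

variable (D) in
theorem inl_comp (S : IsShortExact j q) :
    IsShortExact (LinearMap.inl R B D ∘ₗ j) (q.prodMap (LinearMap.id : D →ₗ[R] D)) :=
  mk' (fun _ h => S.eq_zero_of_apply_eq_zero (congrArg Prod.fst h))
    (fun a => Prod.ext (S.apply_apply a) rfl)
    (fun ⟨_, _⟩ h =>
      have ⟨a, ha⟩ := S.exists_of_apply_eq_zero (congrArg Prod.fst h)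
      ⟨a, Prod.ext ha (congrArg Prod.snd h).symm⟩)
    (Function.Surjective.prodMap S.surjective Function.surjective_id)

variable (D) in
theorem prodMap_id (S : IsShortExact j q) :
    IsShortExact (j.prodMap (LinearMap.id : D →ₗ[R] D)) (q ∘ₗ LinearMap.fst R B D) :=
  mk' (fun _ h =>
      Prod.ext (S.eq_zero_of_apply_eq_zero (Prod.ext_iff.1 h).1) (Prod.ext_iff.1 h).2)
    (fun a => S.apply_apply a.1)
    (fun ⟨_, d⟩ h => (S.exists_of_apply_eq_zero h).imp' (·, d) fun _ ha => Prod.ext ha rfl)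
    (S.surjective.comp Prod.fst_surjective)

theorem exists_coker_comp (S : IsShortExact j q) {i : B →ₗ[R] E} {p : E →ₗ[R] D}
    (T : IsShortExact i p) :
    ∃ (i' : C →ₗ[R] E ⧸ LinearMap.range (i ∘ₗ j)) (p' : (E ⧸ LinearMap.range (i ∘ₗ j)) →ₗ[R] D),
      IsShortExact i' p' :=
  have ⟨i', p', h, _⟩ := nineLemma_coker (id_zero R A Unit) T S
    (of_injective (i ∘ₗ j) (T.injective.comp S.injective)) (zero_id R D Unit) (fun _ => rfl)
    fun a => (T.apply_apply (j a)).symm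
  ⟨i', p', h⟩

theorem exists_ker_comp (S : IsShortExact j q) {i : D →ₗ[R] E} {p : E →ₗ[R] B}
    (T : IsShortExact i p) :
    ∃ (i' : D →ₗ[R] LinearMap.ker (q ∘ₗ p)) (p' : LinearMap.ker (q ∘ₗ p) →ₗ[R] A),
      IsShortExact i' p' ∧ ∀ d, (i' d).1 = i d :=
  have ⟨i', p', h, hi, _⟩ := nineLemma_ker T (zero_id R C Unit) (id_zero R D Unit)
    (of_surjective (q ∘ₗ p) (S.surjective.comp T.surjective)) S
    (fun d => (congrArg q (T.apply_apply d)).trans (map_zero q)) fun _ => rfl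
  ⟨i', p', h, hi⟩

theorem horseshoe_coker (S : IsShortExact j q) {a : A →ₗ[R] P} {a' : P →ₗ[R] A'}
    (SA : IsShortExact a a') {c : C →ₗ[R] P'} {c' : P' →ₗ[R] C'} (SC : IsShortExact c c')
    (t : B →ₗ[R] P) (ht : ∀ x, t (j x) = a x) :
    ∃ b : B →ₗ[R] P × P', Function.Injective b ∧
      ∃ (i : A' →ₗ[R] (P × P') ⧸ LinearMap.range b) (p : ((P × P') ⧸ LinearMap.range b) →ₗ[R] C'),
        IsShortExact i p := by
  have hb : Function.Injective (t.prod (c ∘ₗ q)) := by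
    refine (injective_iff_map_eq_zero _).2 fun x hx => ?_
    have htx : t x = 0 := congrArg Prod.fst hx
    have hcx : c (q x) = 0 := congrArg Prod.snd hx
    obtain ⟨y, rfl⟩ := S.exists_of_apply_eq_zero (SC.eq_zero_of_apply_eq_zero hcx)
    rw [SA.eq_zero_of_apply_eq_zero ((ht y).symm.trans htx), map_zero]
  obtain ⟨i, p, h, -⟩ := nineLemma_coker S (inl_snd R P P') SA (of_injective _ hb) SC
    (fun x => Prod.ext (ht x) (by simp [S.apply_apply])) fun x => rfl
  exact ⟨_, hb, i, p, h⟩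

theorem horseshoe_ker (S : IsShortExact j q) {a : A' →ₗ[R] P} {a' : P →ₗ[R] A}
    (SA : IsShortExact a a') {c : C' →ₗ[R] P'} {c' : P' →ₗ[R] C} (SC : IsShortExact c c')
    (t : P' →ₗ[R] B) (ht : ∀ x, q (t x) = c' x) :
    ∃ b : P × P' →ₗ[R] B, Function.Surjective b ∧
      ∃ (i : A' →ₗ[R] LinearMap.ker b) (p : LinearMap.ker b →ₗ[R] C'), IsShortExact i p := by
  have hb : Function.Surjective ((j ∘ₗ a').coprod t) := fun x => by
    obtain ⟨y', hy'⟩ := SC.surjective (q x)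
    obtain ⟨z, hz⟩ := S.exists_of_apply_eq_zero (b := x - t y') (by simp [ht, hy'])
    obtain ⟨y, rfl⟩ := SA.surjective z
    exact ⟨(y, y'), by simp [hz]⟩
  obtain ⟨i, p, h, -⟩ := nineLemma_ker (inl_snd R P P') S SA (of_surjective _ hb) SC
    (fun x => by simp) fun x => by simp [S.apply_apply, ht]
  exact ⟨_, hb, i, p, h⟩

theorem exists_of_projective [Module.Projective R P] (S : IsShortExact j q) {i : D →ₗ[R] P}
    {p : P →ₗ[R] C} (T : IsShortExact i p) :
    ∃ (i' : D →ₗ[R] A × P) (p' : A × P →ₗ[R] B), IsShortExact i' p' := by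
  obtain ⟨t, ht⟩ := Module.projective_lifting_property q p S.surjective
  replace ht : ∀ x, q (t x) = p x := LinearMap.congr_fun ht
  obtain ⟨v, hv⟩ := exists_factor_of_injective S.injective S.exact (t ∘ₗ i) fun d => by
    rw [LinearMap.comp_apply, ht, T.apply_apply]
  replace hv : ∀ d, j (v d) = t (i d) := hv
  refine ⟨(-v).prod i, j.coprod t, .mk' (fun d hd => ?_) (fun d => by simp [hv]) ?_ fun b => ?_⟩
  · exact T.eq_zero_of_apply_eq_zero (congrArg Prod.snd hd)
  · rintro ⟨a, x⟩ (h : j a + t x = 0)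
    obtain ⟨d, rfl⟩ := T.exists_of_apply_eq_zero (b := x) (by
      rw [← ht, eq_neg_of_add_eq_zero_right h, map_neg, S.apply_apply, neg_zero])
    exact ⟨d, Prod.ext (S.injective (by simp [hv, eq_neg_of_add_eq_zero_left h])) rfl⟩
  · obtain ⟨x, hx⟩ := T.surjective (q b)
    obtain ⟨a, ha⟩ := S.exists_of_apply_eq_zero (b := b - t x) (by simp [ht, hx])
    exact ⟨(a, x), by simp [ha]⟩

theorem directSum {ι : Type*} {K M N : ι → Type*} [∀ i, AddCommGroup (K i)]
    [∀ i, AddCommGroup (M i)] [∀ i, AddCommGroup (N i)] [∀ i, Module R (K i)]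
    [∀ i, Module R (M i)] [∀ i, Module R (N i)] {f : ∀ i, K i →ₗ[R] M i}
    {g : ∀ i, M i →ₗ[R] N i} (S : ∀ i, IsShortExact (f i) (g i)) :
    IsShortExact (DirectSum.lmap f) (DirectSum.lmap g) where
  injective := (DirectSum.lmap_injective f).2 fun i => (S i).injective
  exact := LinearMap.exact_iff.2 <| by
    rw [DirectSum.ker_lmap, DirectSum.range_lmap]
    simp only [fun i => LinearMap.exact_iff.1 (S i).exact]
  surjective := (DirectSum.lmap_surjective g).2 fun i => (S i).surjective

end Constructions

end IsShortExact

end ShortExact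

section CharacterGroups

/-- The group `ℚ/ℤ`, an injective cogenerator of abelian groups. It is lifted to the universe of
the modules so that the module structures `charLeft` and `charRight` apply to `Hom_ℤ(M, ℚ/ℤ)`. -/
abbrev QModZ : Type u := ULift.{u} (AddCircle (1 : ℚ))

/-- The character group `M⁺ = Hom_ℤ(M, ℚ/ℤ)`. It is a right module when `M` is a left module, and
conversely. -/
abbrev CharGroup (M : Type u) [AddCommGroup M] : Type u := M →+ QModZ.{u}

theorem exists_character_extension {T M : Type*} [AddCommGroup T] [AddCommGroup M] (α : T →+ M)
    (β : T →+ QModZ.{u}) (h : ∀ t, α t = 0 → β t = 0) :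
    ∃ χ : M →+ QModZ.{u}, ∀ t, χ (α t) = β t := by
  have hBaer : Module.Baer ℤ (AddCircle (1 : ℚ)) := Module.Baer.of_divisible _
  obtain ⟨χ, hχ⟩ := (hBaer.of_equiv ULift.moduleEquiv.symm).extension_property_addMonoidHom
    (QuotientAddGroup.kerLift α) (QuotientAddGroup.kerLift_injective α)
    (QuotientAddGroup.lift α.ker β h)
  exact ⟨χ, fun t => DFunLike.congr_fun hχ (QuotientAddGroup.mk t)⟩

theorem eq_zero_of_forall_character {M : Type*} [AddCommGroup M] {x : M}
    (h : ∀ χ : M →+ QModZ.{u}, χ x = 0) : x = 0 :=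
  CharacterModule.eq_zero_of_character_apply (A := M) fun χ =>
    ULift.up_injective (h ((AddEquiv.ulift (α := AddCircle (1 : ℚ))).symm.toAddMonoidHom.comp χ))

theorem mem_of_forall_character {M : Type*} [AddCommGroup M] {S : AddSubgroup M} {x : M}
    (h : ∀ χ : M →+ QModZ.{u}, (∀ s ∈ S, χ s = 0) → χ x = 0) : x ∈ S :=
  (QuotientAddGroup.eq_zero_iff x).1 <| eq_zero_of_forall_character fun χ =>
    h (χ.comp (QuotientAddGroup.mk' S)) fun s hs => by
      rw [AddMonoidHom.comp_apply, QuotientAddGroup.mk'_apply,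
        (QuotientAddGroup.eq_zero_iff s).2 hs, map_zero]

variable {R : Type u} [Ring R]

/-- The adjunction `Hom(E, M⁺) ≃ Hom(M, E⁺)` between right modules `E` and left modules `M`. -/
def charFlip {E M : Type u} [AddCommGroup E] [Module Rᵐᵒᵖ E] [AddCommGroup M] [Module R M] :
    (E →ₗ[Rᵐᵒᵖ] CharGroup M) ≃ (M →ₗ[R] CharGroup E) where
  toFun g :=
    { toFun := g.toAddMonoidHom.flip
      map_add' := map_add _
      map_smul' := fun r m => AddMonoidHom.ext fun e => by
        change g e (r • m) = g (MulOpposite.op r • e) m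
        rw [LinearMap.map_smul, op_smul_addHom_apply, MulOpposite.unop_op] }
  invFun g :=
    { toFun := g.toAddMonoidHom.flip
      map_add' := map_add _
      map_smul' := fun r e => AddMonoidHom.ext fun m => by
        change g m (r • e) = g (r.unop • m) e
        rw [LinearMap.map_smul, smul_addHom_apply, MulOpposite.op_unop] }
  left_inv _ := rfl
  right_inv _ := rfl

@[simp] theorem precompHom_apply {G M N : Type u} [AddCommGroup G] [AddCommGroup M]
    [AddCommGroup N] [Module R M] [Module R N] (h : M →ₗ[R] N) (f : N →+ G) (m : M) :
    precompHom h f m = f (h m) := rfl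

theorem IsShortExact.precompHom {K P C : Type u} [AddCommGroup K] [AddCommGroup P]
    [AddCommGroup C] [Module R K] [Module R P] [Module R C] {j : K →ₗ[R] P} {q : P →ₗ[R] C}
    (S : IsShortExact j q) :
    IsShortExact (precompHom (G := QModZ.{u}) q) (QuiverGF.precompHom (G := QModZ.{u}) j) := by
  refine .mk' (fun χ hχ => ?_) (fun χ => ?_) (fun χ hχ => ?_) (fun χ => ?_)
  · ext c : 1
    obtain ⟨p, rfl⟩ := S.surjective c
    exact DFunLike.congr_fun hχ p
  · ext k : 1
    rw [precompHom_apply, precompHom_apply, S.apply_apply, map_zero, AddMonoidHom.zero_apply]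
  · obtain ⟨ψ, hψ⟩ := exists_character_extension q.toAddMonoidHom χ fun p hp => by
      obtain ⟨k, rfl⟩ := S.exists_of_apply_eq_zero hp
      exact DFunLike.congr_fun hχ k
    exact ⟨ψ, AddMonoidHom.ext hψ⟩
  · obtain ⟨ψ, hψ⟩ := exists_character_extension j.toAddMonoidHom χ fun k hk => by
      rw [S.eq_zero_of_apply_eq_zero hk, map_zero]
    exact ⟨ψ, AddMonoidHom.ext hψ⟩

end CharacterGroups

section Flat

variable {R : Type u} [Ring R]

theorem injective_of_retract {S : Type u} [Ring S] {X Y : Type u} [AddCommGroup X]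
    [AddCommGroup Y] [Module S X] [Module S Y] (hY : Module.Injective S Y) (i : X →ₗ[S] Y)
    (p : Y →ₗ[S] X) (h : ∀ x, p (i x) = x) : Module.Injective S X where
  out _ _ _ _ _ _ f hf g := by
    obtain ⟨g', hg'⟩ := hY.out f hf (i ∘ₗ g)
    exact ⟨p ∘ₗ g', fun x => by rw [LinearMap.comp_apply, hg', LinearMap.comp_apply, h]⟩

theorem injective_prod {S : Type u} [Ring S] {X Y : Type u} [AddCommGroup X] [AddCommGroup Y]
    [Module S X] [Module S Y] (hX : Module.Injective S X) (hY : Module.Injective S Y) :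
    Module.Injective S (X × Y) where
  out _ _ _ _ _ _ f hf g := by
    obtain ⟨h₁, hh₁⟩ := hX.out f hf (LinearMap.fst S X Y ∘ₗ g)
    obtain ⟨h₂, hh₂⟩ := hY.out f hf (LinearMap.snd S X Y ∘ₗ g)
    exact ⟨h₁.prod h₂, fun x => Prod.ext (hh₁ x) (hh₂ x)⟩

variable (R) in
/-- Flatness of a left module, through Lambek's criterion: the character module is injective. -/
def IsFlat (M : Type u) [AddCommGroup M] [Module R M] : Prop :=
  Module.Injective Rᵐᵒᵖ (CharGroup M)

namespace IsFlat

variable {K P C : Type u} [AddCommGroup K] [AddCommGroup P] [AddCommGroup C]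
  [Module R K] [Module R P] [Module R C]

theorem retract (hP : IsFlat R P) (i : K →ₗ[R] P) (p : P →ₗ[R] K) (h : ∀ k, p (i k) = k) :
    IsFlat R K :=
  injective_of_retract hP (precompHom p) (precompHom i) fun χ => AddMonoidHom.ext fun k =>
    congrArg χ (h k)

theorem equiv (hP : IsFlat R P) (e : P ≃ₗ[R] K) : IsFlat R K :=
  hP.retract e.symm.toLinearMap e.toLinearMap e.apply_symm_apply

theorem exists_precompHom_leftInverse {j : K →ₗ[R] P} {q : P →ₗ[R] C} (S : IsShortExact j q)
    (hC : IsFlat R C) :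
    ∃ r : CharGroup P →ₗ[Rᵐᵒᵖ] CharGroup C, r ∘ₗ precompHom q = LinearMap.id := by
  obtain ⟨r, hr⟩ := hC.out _ S.precompHom.injective LinearMap.id
  exact ⟨r, LinearMap.ext hr⟩

theorem exists_precompHom_rightInverse {j : K →ₗ[R] P} {q : P →ₗ[R] C} (S : IsShortExact j q)
    (hC : IsFlat R C) :
    ∃ s : CharGroup K →ₗ[Rᵐᵒᵖ] CharGroup P, precompHom j ∘ₗ s = LinearMap.id := by
  have hsplit :=
    (S.precompHom.exact.split_tfae S.precompHom.injective S.precompHom.surjective).out 0 1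
  exact hsplit.2 (exists_precompHom_leftInverse S hC)

theorem of_extension {j : K →ₗ[R] P} {q : P →ₗ[R] C} (S : IsShortExact j q) (hK : IsFlat R K)
    (hC : IsFlat R C) : IsFlat R P := by
  have hsplit :=
    (S.precompHom.exact.split_tfae S.precompHom.injective S.precompHom.surjective).out 1 2
  obtain ⟨e, -⟩ := hsplit.1 (exists_precompHom_leftInverse S hC)
  exact injective_of_retract (injective_prod hC hK) e.toLinearMap e.symm.toLinearMap
    e.symm_apply_apply

theorem of_kernel {j : K →ₗ[R] P} {q : P →ₗ[R] C} (S : IsShortExact j q) (hP : IsFlat R P)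
    (hC : IsFlat R C) : IsFlat R K := by
  obtain ⟨s, hs⟩ := exists_precompHom_rightInverse S hC
  exact injective_of_retract hP s (precompHom j) (LinearMap.congr_fun hs)

theorem prod (hP : IsFlat R P) (hC : IsFlat R C) : IsFlat R (P × C) :=
  of_extension (.inl_snd R P C) hP hC

open scoped Classical in
theorem directSum {ι : Type u} {M : ι → Type u} [∀ i, AddCommGroup (M i)]
    [∀ i, Module R (M i)] (h : ∀ i, IsFlat R (M i)) : IsFlat R (⨁ i, M i) := by
  have : ∀ i, Module.Injective Rᵐᵒᵖ (CharGroup (M i)) := h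
  let restrict : CharGroup (⨁ i, M i) →ₗ[Rᵐᵒᵖ] ∀ i, CharGroup (M i) :=
    LinearMap.pi fun i => precompHom (DirectSum.lof R ι M i)
  have hrestrict : Function.Bijective restrict := by
    refine ⟨fun χ ψ h => DirectSum.addHom_ext' fun i => congrFun h i, fun χ => ?_⟩
    exact ⟨DirectSum.toAddMonoid χ, funext fun i => AddMonoidHom.ext fun m =>
      DirectSum.toAddMonoid_of χ i m⟩
  let e := LinearEquiv.ofBijective restrict hrestrict
  exact injective_of_retract (Module.Injective.pi Rᵐᵒᵖ _) e.toLinearMap e.symm.toLinearMap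
    e.symm_apply_apply

variable (R) in
theorem self : IsFlat R R where
  out X Y _ _ _ _ f hf g := by
    obtain ⟨χ, hχ⟩ := exists_character_extension f.toAddMonoidHom
      (charFlip g 1 : X →+ QModZ.{u}) fun x hx => by
        rw [hf (hx.trans (map_zero f).symm), map_zero]
    refine ⟨charFlip.symm (LinearMap.toSpanSingleton R (CharGroup Y) χ), fun x => ?_⟩
    refine AddMonoidHom.ext fun r => ?_
    calc χ (MulOpposite.op r • f x) = χ (f (MulOpposite.op r • x)) := by rw [map_smul f]
      _ = g (MulOpposite.op r • x) 1 := hχ _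
      _ = g x (r * 1) := by rw [map_smul]; rfl
      _ = g x r := by rw [mul_one]

theorem finsupp {B : Type u} (hP : IsFlat R P) : IsFlat R (B →₀ P) := by
  classical
  exact (directSum fun _ : B => hP).equiv (finsuppLEquivDirectSum R P B).symm

theorem of_free [Module.Free R P] : IsFlat R P :=
  (self R).finsupp.equiv (Module.Free.chooseBasis R P).repr.symm

end IsFlat

end Flat

section TensorHom

variable {R : Type u} [Ring R] {E M : Type u} [AddCommGroup E] [Module Rᵐᵒᵖ E] [AddCommGroup M]
  [Module R M]

theorem NcTensor.addHom_ext {G : Type*} [AddCommGroup G] {f g : NcTensor R E M →+ G}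
    (h : ∀ e m, f (NcTensor.tmul R E M e m) = g (NcTensor.tmul R E M e m)) : f = g := by
  ext z
  induction z using Submodule.Quotient.induction_on with
  | H z =>
    induction z using TensorProduct.induction_on with
    | zero => exact (map_zero f).trans (map_zero g).symm
    | tmul e m => exact h e m
    | add a b ha hb => rw [Submodule.Quotient.mk_add, map_add, map_add, ha, hb]

theorem NcTensor.tmul_smul (e : E) (r : R) (m : M) :
    NcTensor.tmul R E M e (r • m) = NcTensor.tmul R E M (MulOpposite.op r • e) m :=
  ((Submodule.Quotient.eq (ncRel R E M)).2 (Submodule.subset_span ⟨e, r, m, rfl⟩)).symm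

/-- The tensor-hom adjunction `(E ⊗_R M)⁺ ≃ Hom_R(M, E⁺)`. -/
noncomputable def NcTensor.charEquiv :
    CharGroup (NcTensor R E M) ≃ (M →ₗ[R] CharGroup E) where
  toFun χ :=
    { toFun m :=
        { toFun e := χ (NcTensor.tmul R E M e m)
          map_zero' := by
            rw [NcTensor.tmul, TensorProduct.zero_tmul, Submodule.Quotient.mk_zero, map_zero]
          map_add' a b := by
            rw [NcTensor.tmul, TensorProduct.add_tmul, Submodule.Quotient.mk_add, map_add]
            rfl }
      map_add' a b := AddMonoidHom.ext fun e => by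
        change χ (NcTensor.tmul R E M e (a + b)) = _
        rw [NcTensor.tmul, TensorProduct.tmul_add, Submodule.Quotient.mk_add, map_add]
        rfl
      map_smul' r m := AddMonoidHom.ext fun e => congrArg χ (NcTensor.tmul_smul e r m) }
  invFun φ :=
    (Submodule.liftQ (ncRel R E M)
      (TensorProduct.liftAddHom φ.toAddMonoidHom.flip fun n e m => by simp).toIntLinearMap <| by
        refine Submodule.span_le.2 ?_
        rintro _ ⟨e, r, m, rfl⟩
        refine LinearMap.mem_ker.2 ((map_sub _ _ _).trans (sub_eq_zero.2 ?_))
        exact (DFunLike.congr_fun (map_smul φ r m) e).symm).toAddMonoidHom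
  left_inv χ := NcTensor.addHom_ext fun _ _ => rfl
  right_inv φ := rfl

theorem isFlatModule_iff {M : ModuleCat.{u} R} : IsFlatModule R M ↔ IsFlat R M := by
  refine ⟨fun h => ⟨fun X Y _ _ _ _ f hf g => ?_⟩, fun h E E' f hf => ?_⟩
  · have hinj := h (.of _ X) (.of _ Y) (ModuleCat.ofHom f) hf
    obtain ⟨ψ, hψ⟩ := exists_character_extension
      (NcTensor.map R f (LinearMap.id (M := M))).toAddMonoidHom
      (NcTensor.charEquiv.symm (charFlip g)) fun z hz => by
        rw [hinj (hz.trans (map_zero _).symm), map_zero]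
    exact ⟨charFlip.symm (NcTensor.charEquiv ψ), fun x => AddMonoidHom.ext fun m =>
      hψ (NcTensor.tmul R X M x m)⟩
  · refine (injective_iff_map_eq_zero _).2 fun z hz => eq_zero_of_forall_character fun χ => ?_
    obtain ⟨g, hg⟩ := h.out f.hom hf (charFlip.symm (NcTensor.charEquiv χ))
    have hχ : χ = (NcTensor.charEquiv.symm (charFlip g)).comp
        (NcTensor.map R f.hom (LinearMap.id (M := M))).toAddMonoidHom :=
      NcTensor.addHom_ext fun e m => (DFunLike.congr_fun (hg e) m).symm
    rw [hχ]
    exact (congrArg _ hz).trans (map_zero _)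

section Exactness

variable {A B C : Type u} [AddCommGroup A] [AddCommGroup B] [AddCommGroup C]
  [Module R A] [Module R B] [Module R C] {d : A →ₗ[R] B} {d' : B →ₗ[R] C}

/-- `A → B → C` becomes exact after tensoring with any injective right module `E`. By the
tensor-hom adjunction this is exactness of `Hom(C, E⁺) → Hom(B, E⁺) → Hom(A, E⁺)`, which is the
form recorded here. -/
def InjTensorExact (d : A →ₗ[R] B) (d' : B →ₗ[R] C) : Prop :=
  ∀ (E : Type u) [AddCommGroup E] [Module Rᵐᵒᵖ E], Module.Injective Rᵐᵒᵖ E →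
    ∀ h : B →ₗ[R] CharGroup E, (∀ a, h (d a) = 0) →
      ∃ h' : C →ₗ[R] CharGroup E, ∀ b, h' (d' b) = h b

theorem NcTensor.map_exact_iff (hd : ∀ a, d' (d a) = 0) :
    Function.Exact (NcTensor.map R (LinearMap.id (R := Rᵐᵒᵖ) (M := E)) d)
      (NcTensor.map R (LinearMap.id (R := Rᵐᵒᵖ) (M := E)) d') ↔
    ∀ h : B →ₗ[R] CharGroup E, (∀ a, h (d a) = 0) →
      ∃ h' : C →ₗ[R] CharGroup E, ∀ b, h' (d' b) = h b := by
  set D := (NcTensor.map R (LinearMap.id (R := Rᵐᵒᵖ) (M := E)) d).toAddMonoidHom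
  set D' := (NcTensor.map R (LinearMap.id (R := Rᵐᵒᵖ) (M := E)) d').toAddMonoidHom
  have hDD' : D'.comp D = 0 := NcTensor.addHom_ext fun e a => by
    change NcTensor.tmul R E C e (d' (d a)) = 0
    rw [hd, NcTensor.tmul, TensorProduct.tmul_zero, Submodule.Quotient.mk_zero]
  refine ⟨fun hex h hh => ?_, fun H z => ⟨fun hz => ?_, ?_⟩⟩
  · have hχ : (NcTensor.charEquiv.symm h).comp D = 0 := NcTensor.addHom_ext fun e a =>
      DFunLike.congr_fun (hh a) e
    obtain ⟨ψ, hψ⟩ := exists_character_extension D' (NcTensor.charEquiv.symm h) fun t ht => by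
      obtain ⟨s, rfl⟩ := (hex t).1 ht
      exact DFunLike.congr_fun hχ s
    exact ⟨NcTensor.charEquiv ψ, fun b => AddMonoidHom.ext fun e => hψ (NcTensor.tmul R E B e b)⟩
  · refine mem_of_forall_character (S := D.range) fun χ hχ => ?_
    obtain ⟨h', hh'⟩ := H (NcTensor.charEquiv χ) fun a => AddMonoidHom.ext fun e =>
      hχ _ ⟨NcTensor.tmul R E A e a, rfl⟩
    have hfactor : χ = (NcTensor.charEquiv.symm h').comp D' := NcTensor.addHom_ext fun e b =>
      (DFunLike.congr_fun (hh' b) e).symm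
    rw [hfactor]
    exact (congrArg _ hz).trans (map_zero _)
  · rintro ⟨s, rfl⟩
    exact DFunLike.congr_fun hDD' s

end Exactness

end TensorHom

section ExtVanishing

variable {R : Type u} [Ring R]

variable (R) in
/-- `Ext¹_R(C, A) = 0`, expressed as: every homomorphism `K → A` extends along every
monomorphism `K → P` with cokernel `C`. -/
def ExtVanishes (C A : Type u) [AddCommGroup C] [AddCommGroup A] [Module R C] [Module R A] : Prop :=
  ∀ (K P : Type u) [AddCommGroup K] [AddCommGroup P] [Module R K] [Module R P]
    (j : K →ₗ[R] P) (q : P →ₗ[R] C), IsShortExact j q →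
      ∀ f : K →ₗ[R] A, ∃ g : P →ₗ[R] A, ∀ k, g (j k) = f k

variable {A C D K P X : Type u} [AddCommGroup A] [AddCommGroup C] [AddCommGroup D]
  [AddCommGroup K] [AddCommGroup P] [AddCommGroup X] [Module R A] [Module R C] [Module R D]
  [Module R K] [Module R P] [Module R X]

namespace IsShortExact

theorem pullback {j : K →ₗ[R] X} {q : X →ₗ[R] D} (S : IsShortExact j q) (t : C →ₗ[R] D) :
    IsShortExact
      ((LinearMap.inl R X C ∘ₗ j).codRestrict
        (LinearMap.eqLocus (q ∘ₗ LinearMap.fst R X C) (t ∘ₗ LinearMap.snd R X C))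
        fun k => by simp [S.apply_apply])
      (LinearMap.snd R X C ∘ₗ Submodule.subtype _) := by
  refine .mk' (fun k hk => S.eq_zero_of_apply_eq_zero ?_) (fun k => rfl) ?_ fun c => ?_
  · exact congrArg (fun w => (Subtype.val w).1) hk
  · rintro ⟨⟨x, c⟩, hw : q x = t c⟩ (rfl : c = 0)
    obtain ⟨k, hk⟩ := S.exists_of_apply_eq_zero (hw.trans (map_zero t))
    exact ⟨k, Subtype.ext (Prod.ext hk rfl)⟩
  · obtain ⟨x, hx⟩ := S.surjective (t c)
    exact ⟨⟨(x, c), hx⟩, rfl⟩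

theorem exists_pushout {j : K →ₗ[R] P} {q : P →ₗ[R] C} (S : IsShortExact j q) (f : K →ₗ[R] A) :
    ∃ (X : ModuleCat.{u} R) (i : A →ₗ[R] X) (π : X →ₗ[R] C) (u : P →ₗ[R] X),
      IsShortExact i π ∧ (∀ k, u (j k) = i (f k)) ∧ ∀ p, π (u p) = q p := by
  let N := LinearMap.range (f.prod (-j))
  obtain ⟨π, hπ⟩ := exists_factor_of_surjective N.mkQ N.mkQ_surjective
    (q ∘ₗ LinearMap.snd R A P) fun x hx => by
      obtain ⟨k, rfl⟩ := (Submodule.Quotient.mk_eq_zero N).1 hx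
      simp [S.apply_apply]
  have hfj : ∀ k, N.mkQ (0, j k) = N.mkQ (f k, 0) := fun k =>
    ((Submodule.Quotient.eq N).2 ⟨k, by simp⟩).symm
  refine ⟨.of R ((A × P) ⧸ N), N.mkQ ∘ₗ LinearMap.inl R A P, π, N.mkQ ∘ₗ LinearMap.inr R A P,
    .mk' (fun a ha => ?_) (fun a => ?_) (fun x hx => ?_) (fun c => ?_), hfj, fun p => hπ (0, p)⟩
  · obtain ⟨k, hk⟩ := (Submodule.Quotient.mk_eq_zero N).1 ha
    have hfk : f k = a := congrArg Prod.fst hk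
    have hjk : -j k = 0 := congrArg Prod.snd hk
    rw [← hfk, S.eq_zero_of_apply_eq_zero (neg_eq_zero.1 hjk), map_zero]
  · exact (hπ (a, 0)).trans (map_zero q)
  · obtain ⟨⟨a, p⟩, rfl⟩ := N.mkQ_surjective x
    obtain ⟨k, rfl⟩ := S.exists_of_apply_eq_zero ((hπ (a, p)).symm.trans hx)
    refine ⟨a + f k, ?_⟩
    have : ((a, j k) : A × P) = (a, 0) + (0, j k) := by simp
    rw [this, map_add N.mkQ, hfj, ← map_add N.mkQ]
    simp
  · obtain ⟨p, rfl⟩ := S.surjective c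
    exact ⟨N.mkQ (0, p), hπ (0, p)⟩

end IsShortExact

namespace ExtVanishes

theorem exists_lift (h : ExtVanishes R C A) {j : A →ₗ[R] X} {q : X →ₗ[R] D}
    (S : IsShortExact j q) (t : C →ₗ[R] D) : ∃ s : C →ₗ[R] X, ∀ c, q (s c) = t c := by
  have Spull := S.pullback t
  obtain ⟨r, hr⟩ := h _ _ _ _ Spull LinearMap.id
  obtain ⟨s, hs⟩ := exists_factor_of_surjective _ Spull.surjective
    (LinearMap.fst R X C ∘ₗ Submodule.subtype _ - j ∘ₗ r) fun w hw => by
      obtain ⟨a, rfl⟩ := Spull.exists_of_apply_eq_zero hw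
      rw [LinearMap.sub_apply, LinearMap.comp_apply j, hr]
      exact sub_self (j a)
  refine ⟨s, fun c => ?_⟩
  obtain ⟨⟨⟨x, c⟩, hx⟩, rfl⟩ := Spull.surjective c
  rw [hs]
  exact (map_sub q x _).trans ((congrArg _ (S.apply_apply _)).trans ((sub_zero _).trans hx))

theorem of_split (h : ∀ (X : Type u) [AddCommGroup X] [Module R X] (j : A →ₗ[R] X)
    (q : X →ₗ[R] C), IsShortExact j q → ∃ s : C →ₗ[R] X, ∀ c, q (s c) = c) :
    ExtVanishes R C A := by
  intro K P _ _ _ _ j q S f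
  obtain ⟨X, i, π, u, SX, huj, hπu⟩ := S.exists_pushout f
  obtain ⟨s, hs⟩ := h X i π SX
  obtain ⟨g, hg⟩ := exists_factor_of_injective SX.injective SX.exact (u - s ∘ₗ q) fun p => by
    simp [hs, hπu]
  exact ⟨g, fun k => SX.injective (by simp [hg, S.apply_apply, huj])⟩

theorem of_projective_presentation [Module.Projective R P] {j : K →ₗ[R] P} {q : P →ₗ[R] C}
    (S : IsShortExact j q) (h : ∀ f : K →ₗ[R] A, ∃ g : P →ₗ[R] A, ∀ k, g (j k) = f k) :
    ExtVanishes R C A := by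
  refine of_split fun X _ _ i π SX => ?_
  obtain ⟨u, hu⟩ := Module.projective_lifting_property π q SX.surjective
  replace hu : ∀ p, π (u p) = q p := LinearMap.congr_fun hu
  obtain ⟨v, hv⟩ := exists_factor_of_injective SX.injective SX.exact (u ∘ₗ j) fun k => by
    rw [LinearMap.comp_apply, hu, S.apply_apply]
  obtain ⟨g, hg⟩ := h v
  obtain ⟨s, hs⟩ := exists_factor_of_surjective q S.surjective (u - i ∘ₗ g) fun p hp => by
    obtain ⟨k, rfl⟩ := S.exists_of_apply_eq_zero hp
    simp [hg, hv]
  refine ⟨s, fun c => ?_⟩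
  obtain ⟨p, rfl⟩ := S.surjective c
  simp [hs, hu, SX.apply_apply]

theorem retract (h : ExtVanishes R D A) (i : C →ₗ[R] D) (p : D →ₗ[R] C) (hp : ∀ c, p (i c) = c) :
    ExtVanishes R C A :=
  of_split fun _ _ _ _ _ S => by
    obtain ⟨s, hs⟩ := h.exists_lift S p
    exact ⟨s ∘ₗ i, fun c => (hs (i c)).trans (hp c)⟩

theorem equiv (h : ExtVanishes R D A) (e : C ≃ₗ[R] D) : ExtVanishes R C A :=
  h.retract e.toLinearMap e.symm.toLinearMap e.symm_apply_apply

theorem of_extension {j : K →ₗ[R] D} {q : D →ₗ[R] C} (S : IsShortExact j q)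
    (hK : ExtVanishes R K A) (hC : ExtVanishes R C A) : ExtVanishes R D A := by
  intro K' P' _ _ _ _ j' q' S' f
  have hker := IsShortExact.of_surjective (q ∘ₗ q') (S.surjective.comp S'.surjective)
  obtain ⟨j₁, q₁, S₁, hj₁⟩ := S.exists_ker_comp S'
  obtain ⟨g₁, hg₁⟩ := hK _ _ j₁ q₁ S₁ f
  obtain ⟨g, hg⟩ := hC _ _ _ _ hker g₁
  exact ⟨g, fun k => by rw [← hg₁, ← hg, ← hj₁]; rfl⟩

open scoped Classical in
theorem directSum {ι : Type u} {M : ι → Type u} [∀ i, AddCommGroup (M i)]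
    [∀ i, Module R (M i)] (h : ∀ i, ExtVanishes R (M i) A) : ExtVanishes R (⨁ i, M i) A := by
  refine of_split fun X _ _ j q S => ?_
  choose s hs using fun i => (h i).exists_lift S (DirectSum.lof R ι M i)
  have hq : q ∘ₗ DirectSum.toModule R ι X s = LinearMap.id :=
    DirectSum.linearMap_ext R fun i => LinearMap.ext fun m => by simp [hs]
  exact ⟨_, LinearMap.congr_fun hq⟩

theorem of_projective [Module.Projective R C] : ExtVanishes R C A :=
  of_split fun _ _ _ _ q S =>
    (Module.projective_lifting_property q LinearMap.id S.surjective).imp fun _ =>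
      LinearMap.congr_fun

theorem charGroup_of_isFlat (hC : IsFlat R C) (N : Type u) [AddCommGroup N] [Module Rᵐᵒᵖ N] :
    ExtVanishes R C (CharGroup N) := by
  intro K P _ _ _ _ j q S f
  obtain ⟨s, hs⟩ := IsFlat.exists_precompHom_rightInverse S hC
  refine ⟨charFlip (s ∘ₗ charFlip.symm f), fun k => AddMonoidHom.ext fun n => ?_⟩
  exact DFunLike.congr_fun (LinearMap.congr_fun hs (charFlip.symm f n)) k

end ExtVanishes

end ExtVanishing

section PGF

variable {R : Type u} [Ring R]

variable (R) in
/-- The modules against which projectively coresolved Gorenstein flat modules have vanishing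
`Ext¹`: flat modules and character modules of injective modules. -/
inductive IsPGFCoefficient : ModuleCat.{u} R → Prop
  | of_isFlat (A : ModuleCat.{u} R) (h : IsFlat R A) : IsPGFCoefficient A
  | charGroup (E : ModuleCat.{u} Rᵐᵒᵖ) (h : Module.Injective Rᵐᵒᵖ E) :
      IsPGFCoefficient (.of R (CharGroup E))

variable (R) in
/-- A class of modules all of which are projectively coresolved Gorenstein flat, certified by
one step of a free resolution and one step of a free coresolution inside the class. Such classes
are the coinduction hypotheses for `IsPGF`. -/
structure PGFClass (𝒞 : ModuleCat.{u} R → Prop) : Prop where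
  ext : ∀ C, 𝒞 C → ∀ A, IsPGFCoefficient R A → ExtVanishes R C A
  exists_coresolution : ∀ C, 𝒞 C → ∃ (P C' : ModuleCat.{u} R) (j : C →ₗ[R] P) (q : P →ₗ[R] C'),
    Module.Free R P ∧ IsShortExact j q ∧ 𝒞 C'
  exists_resolution : ∀ C, 𝒞 C → ∃ (P C' : ModuleCat.{u} R) (j : C' →ₗ[R] P) (q : P →ₗ[R] C),
    Module.Free R P ∧ IsShortExact j q ∧ 𝒞 C'

variable (R) in
/-- Projectively coresolved Gorenstein flat modules: cycles of exact complexes of free modules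
with vanishing `Ext¹` into flat modules (and into `E⁺` for `E` injective, which amounts to
exactness under `E ⊗ -`). -/
def IsPGF (M : Type u) [AddCommGroup M] [Module R M] : Prop :=
  ∃ 𝒞, PGFClass R 𝒞 ∧ 𝒞 (ModuleCat.of R M)

variable {A B C : Type u} [AddCommGroup A] [AddCommGroup B] [AddCommGroup C]
  [Module R A] [Module R B] [Module R C]

namespace IsPGF

theorem pgfClass : PGFClass R (fun C => IsPGF R C) where
  ext := fun C ⟨_, h, hC⟩ => h.ext C hC
  exists_coresolution := fun C ⟨𝒞, h, hC⟩ =>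
    have ⟨P, C', j, q, hP, S, hC'⟩ := h.exists_coresolution C hC
    ⟨P, C', j, q, hP, S, 𝒞, h, hC'⟩
  exists_resolution := fun C ⟨𝒞, h, hC⟩ =>
    have ⟨P, C', j, q, hP, S, hC'⟩ := h.exists_resolution C hC
    ⟨P, C', j, q, hP, S, 𝒞, h, hC'⟩

theorem ext (h : IsPGF R C) (A : ModuleCat.{u} R) (hA : IsPGFCoefficient R A) :
    ExtVanishes R C A :=
  pgfClass.ext (.of R C) h A hA

theorem ext_of_isFlat (h : IsPGF R C) (hA : IsFlat R A) : ExtVanishes R C A :=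
  h.ext (.of R A) (.of_isFlat _ hA)

theorem exists_coresolution (h : IsPGF R C) :
    ∃ (P C' : ModuleCat.{u} R) (j : C →ₗ[R] P) (q : P →ₗ[R] C'),
      Module.Free R P ∧ IsShortExact j q ∧ IsPGF R C' :=
  pgfClass.exists_coresolution (.of R C) h

theorem exists_resolution (h : IsPGF R C) :
    ∃ (P C' : ModuleCat.{u} R) (j : C' →ₗ[R] P) (q : P →ₗ[R] C),
      Module.Free R P ∧ IsShortExact j q ∧ IsPGF R C' :=
  pgfClass.exists_resolution (.of R C) h

theorem equiv (h : IsPGF R C) (e : C ≃ₗ[R] A) : IsPGF R A := by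
  refine ⟨fun X => ∃ L : ModuleCat.{u} R, IsPGF R L ∧ Nonempty (L ≃ₗ[R] X), ⟨?_, ?_, ?_⟩,
    .of R C, h, ⟨e⟩⟩
  · rintro X ⟨L, hL, ⟨e⟩⟩ A hA
    exact (hL.ext A hA).equiv e.symm
  · rintro X ⟨L, hL, ⟨e⟩⟩
    obtain ⟨P, C', j, q, hP, S, hC'⟩ := hL.exists_coresolution
    exact ⟨P, C', _, q, hP, S.comp_equiv e.symm, C', hC', ⟨.refl _ _⟩⟩
  · rintro X ⟨L, hL, ⟨e⟩⟩
    obtain ⟨P, C', j, q, hP, S, hC'⟩ := hL.exists_resolution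
    exact ⟨P, C', j, _, hP, S.equiv_comp e, C', hC', ⟨.refl _ _⟩⟩

theorem of_free [Module.Free R C] : IsPGF R C := by
  refine ⟨fun X => Module.Free R X, ⟨fun X hX A _ => ?_, fun X hX => ?_, fun X hX => ?_⟩, ‹_›⟩
  · have := Module.Projective.of_free (R := R) (P := X)
    exact .of_projective
  · exact ⟨X, .of R PUnit.{u + 1}, _, _, hX, .id_zero R X PUnit.{u + 1},
      inferInstanceAs (Module.Free R PUnit.{u + 1})⟩
  · exact ⟨X, .of R PUnit.{u + 1}, _, _, hX, .zero_id R X PUnit.{u + 1},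
      inferInstanceAs (Module.Free R PUnit.{u + 1})⟩

theorem of_extension {j : A →ₗ[R] B} {q : B →ₗ[R] C} (S : IsShortExact j q) (hA : IsPGF R A)
    (hC : IsPGF R C) : IsPGF R B := by
  refine ⟨fun X => ∃ (L N : ModuleCat.{u} R) (j : L →ₗ[R] X) (q : X →ₗ[R] N), IsShortExact j q ∧
    IsPGF R L ∧ IsPGF R N, ⟨?_, ?_, ?_⟩, .of R A, .of R C, j, q, S, hA, hC⟩
  · rintro X ⟨L, N, j, q, S, hL, hN⟩ A hA
    exact .of_extension S (hL.ext A hA) (hN.ext A hA)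
  · rintro X ⟨L, N, j, q, S, hL, hN⟩
    obtain ⟨P₁, L', j₁, q₁, _, S₁, hL'⟩ := hL.exists_coresolution
    obtain ⟨P₂, N', j₂, q₂, _, S₂, hN'⟩ := hN.exists_coresolution
    obtain ⟨t, ht⟩ := hN.ext_of_isFlat (IsFlat.of_free (P := P₁)) _ _ _ _ S j₁
    obtain ⟨b, hb, i, p, h⟩ := S.horseshoe_coker S₁ S₂ t ht
    exact ⟨.of R (P₁ × P₂), .of R _, b, _, inferInstanceAs (Module.Free R (P₁ × P₂)),
      .of_injective b hb, L', N', i, p, h, hL', hN'⟩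
  · rintro X ⟨L, N, j, q, S, hL, hN⟩
    obtain ⟨P₁, L', j₁, q₁, _, S₁, hL'⟩ := hL.exists_resolution
    obtain ⟨P₂, N', j₂, q₂, _, S₂, hN'⟩ := hN.exists_resolution
    have := Module.Projective.of_free (R := R) (P := P₂)
    obtain ⟨t, ht⟩ := Module.projective_lifting_property q q₂ S.surjective
    obtain ⟨b, hb, i, p, h⟩ := S.horseshoe_ker S₁ S₂ t (LinearMap.congr_fun ht)
    exact ⟨.of R (P₁ × P₂), .of R _, _, b, inferInstanceAs (Module.Free R (P₁ × P₂)),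
      .of_surjective b hb, L', N', i, p, h, hL', hN'⟩

theorem prod (hA : IsPGF R A) (hC : IsPGF R C) : IsPGF R (A × C) :=
  .of_extension (.inl_snd R A C) hA hC

theorem of_prod_free [Module.Free R A] (h : IsPGF R (C × A)) : IsPGF R C := by
  have pad : ∀ X : ModuleCat.{u} R, IsPGF R X →
      ∃ P : ModuleCat.{u} R, Module.Free R P ∧ IsPGF R (X × P) := fun X hX =>
    ⟨.of R PUnit, inferInstanceAs (Module.Free R PUnit.{u + 1}),
      hX.equiv (LinearEquiv.prodUnique (M₂ := PUnit.{u + 1})).symm⟩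
  refine ⟨fun X => ∃ P : ModuleCat.{u} R, Module.Free R P ∧ IsPGF R (X × P), ⟨?_, ?_, ?_⟩,
    .of R A, ‹_›, h⟩
  · rintro X ⟨P, -, hX⟩ A hA
    exact (hX.ext A hA).retract (LinearMap.inl R X P) (LinearMap.fst R X P) fun c => rfl
  · rintro X ⟨P, _, hX⟩
    obtain ⟨Q, D, j, q, hQ, S, hD⟩ := hX.exists_coresolution
    obtain ⟨i, p, h⟩ := (IsShortExact.inl_snd R X P).exists_coker_comp S
    exact ⟨Q, .of R _, _, _, hQ, .of_injective _ (S.injective.comp LinearMap.inl_injective),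
      pad (.of R _) (.of_extension h .of_free hD)⟩
  · rintro X ⟨P, _, hX⟩
    obtain ⟨Q, D, j, q, hQ, S, hD⟩ := hX.exists_resolution
    have S' := S.equiv_comp (LinearEquiv.prodComm R X P)
    obtain ⟨i, p, h, -⟩ := (IsShortExact.inl_snd R P X).exists_ker_comp S'
    exact ⟨Q, .of R _, _, _, hQ,
      .of_surjective _ ((LinearMap.snd_surjective (R := R) (M := P) (M₂ := X)).comp S'.surjective),
      pad (.of R _) (.of_extension h hD .of_free)⟩

theorem of_kernel {j : A →ₗ[R] B} {q : B →ₗ[R] C} (S : IsShortExact j q) (hB : IsPGF R B)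
    (hC : IsPGF R C) : IsPGF R A := by
  obtain ⟨P, D, i, p, _, T, hD⟩ := hC.exists_resolution
  have := Module.Projective.of_free (R := R) (P := P)
  obtain ⟨i', p', S'⟩ := S.exists_of_projective T
  exact of_prod_free (.of_extension S' hD hB)

theorem of_periodic [Module.Free R B] {j : A →ₗ[R] B} {q : B →ₗ[R] A} (S : IsShortExact j q)
    (h : ∀ X, IsPGFCoefficient R X → ExtVanishes R A X) : IsPGF R A := by
  refine ⟨fun X => Nonempty (A ≃ₗ[R] X), ⟨?_, ?_, ?_⟩, ⟨.refl _ _⟩⟩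
  · rintro X ⟨e⟩ Y hY
    exact (h Y hY).equiv e.symm
  · rintro X ⟨e⟩
    exact ⟨.of R B, .of R A, _, q, ‹_›, S.comp_equiv e.symm, ⟨.refl _ _⟩⟩
  · rintro X ⟨e⟩
    exact ⟨.of R B, .of R A, j, _, ‹_›, S.equiv_comp e, ⟨.refl _ _⟩⟩

theorem directSum {ι : Type u} {K : ι → Type u} [∀ i, AddCommGroup (K i)] [∀ i, Module R (K i)]
    (h : ∀ i, IsPGF R (K i)) : IsPGF R (⨁ i, K i) := by
  refine ⟨fun X => ∃ M : ι → ModuleCat.{u} R,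
    (∀ i, IsPGF R (M i)) ∧ Nonempty (X ≃ₗ[R] ⨁ i, M i), ⟨?_, ?_, ?_⟩,
    fun i => .of R (K i), h, ⟨.refl _ _⟩⟩
  · rintro X ⟨M, hM, ⟨e⟩⟩ Y hY
    exact (ExtVanishes.directSum fun i => (hM i).ext Y hY).equiv e
  · rintro X ⟨M, hM, ⟨e⟩⟩
    choose P C' j q hP S hC using fun i => (hM i).exists_coresolution
    exact ⟨.of R (⨁ i, P i), .of R (⨁ i, C' i), _, _, Module.Free.directSum R _,
      (IsShortExact.directSum S).comp_equiv e, C', hC, ⟨.refl _ _⟩⟩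
  · rintro X ⟨M, hM, ⟨e⟩⟩
    choose P C' j q hP S hC using fun i => (hM i).exists_resolution
    exact ⟨.of R (⨁ i, P i), .of R (⨁ i, C' i), _, _, Module.Free.directSum R _,
      (IsShortExact.directSum S).equiv_comp e.symm, C', hC, ⟨.refl _ _⟩⟩

end IsPGF

end PGF

section EquationalCriterion

variable {R : Type u} [Ring R] {M : Type u} [AddCommGroup M] [Module R M]

theorem exists_comp_eq_of_moduleInjective {S : Type u} [Ring S] {A B I : Type u} [AddCommGroup A]
    [AddCommGroup B] [AddCommGroup I] [Module S A] [Module S B] [Module S I]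
    (hI : Module.Injective S I) (ρ : A →ₗ[S] B) (g : A →ₗ[S] I) (h : ∀ a, ρ a = 0 → g a = 0) :
    ∃ g' : B →ₗ[S] I, ∀ a, g' (ρ a) = g a := by
  obtain ⟨g₁, hg₁⟩ := exists_factor_of_surjective ρ.rangeRestrict ρ.surjective_rangeRestrict g
    fun a ha => h a (congrArg Subtype.val ha)
  obtain ⟨g₂, hg₂⟩ := hI.out (LinearMap.range ρ).subtype (Submodule.injective_subtype _) g₁
  exact ⟨g₂, fun a => (hg₂ (ρ.rangeRestrict a)).trans (hg₁ a)⟩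

theorem exists_eq_sum_single {B N : Type*} [AddCommMonoid N] (t : B →₀ N) :
    ∃ (n : ℕ) (b : Fin n → B) (x : Fin n → N), t = ∑ i, Finsupp.single (b i) (x i) := by
  let e := t.support.equivFin
  refine ⟨_, fun i => (e.symm i).1, fun i => t (e.symm i).1, ?_⟩
  rw [e.symm.sum_comp fun b => Finsupp.single b.1 (t b.1),
    Finset.sum_coe_sort t.support fun b => Finsupp.single b (t b)]
  exact t.sum_single.symm

section

variable {ι κ : Type} [Fintype ι] [Finite κ]

theorem IsFlat.mem_closure_of_relations (h : IsFlat R M) (v : κ → ι → R) (x : ι → M)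
    (hv : ∀ l, ∑ j, v l j • x j = 0) :
    x ∈ AddSubgroup.closure {z | ∃ (c : ι → R) (y : M), (∀ l, ∑ j, v l j * c j = 0) ∧
      z = fun j => c j • y} := by
  classical
  have := Fintype.ofFinite κ
  refine mem_of_forall_character fun χ hχ => ?_
  let χ' : ι → CharGroup M := fun j => χ.comp (AddMonoidHom.single (fun _ => M) j)
  have hsum : ∀ z, χ z = ∑ j, χ' j (z j) := fun z => by
    conv_lhs => rw [← Finset.univ_sum_single z, map_sum]
    rfl
  let ρ := Fintype.linearCombination Rᵐᵒᵖ fun j l => MulOpposite.op (v l j)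
  obtain ⟨g, hg⟩ := exists_comp_eq_of_moduleInjective h ρ (Fintype.linearCombination Rᵐᵒᵖ χ')
    fun c hc => AddMonoidHom.ext fun y => by
      have hc' : ∀ l, ∑ j, v l j * (c j).unop = 0 := fun l =>
        MulOpposite.op_injective (by simpa [ρ, Fintype.linearCombination_apply] using congrFun hc l)
      simpa [hsum, Fintype.linearCombination_apply, AddMonoidHom.finsetSum_apply] using
        hχ _ (AddSubgroup.subset_closure ⟨_, y, hc', rfl⟩)
  have hχ' : ∀ j, χ' j = ∑ l, MulOpposite.op (v l j) • g (fun k => if l = k then 1 else 0) :=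
    fun j => by
      have := hg (Pi.single j 1)
      rw [Fintype.linearCombination_apply_single, Fintype.linearCombination_apply_single, one_smul,
        one_smul, LinearMap.pi_apply_eq_sum_univ g] at this
      exact this.symm
  calc χ x = ∑ j, ∑ l, g (fun k => if l = k then 1 else 0) (v l j • x j) := by
        simp [hsum, hχ', AddMonoidHom.finsetSum_apply]
    _ = ∑ l, g (fun k => if l = k then 1 else 0) (∑ j, v l j • x j) := by
        rw [Finset.sum_comm]
        simp
    _ = 0 := by simp [hv]

theorem IsFlat.exists_factorization (h : IsFlat R M) (v : κ → ι → R) (x : ι → M)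
    (hv : ∀ l, ∑ j, v l j • x j = 0) :
    ∃ (n : ℕ) (c : ι → Fin n → R) (y : Fin n → M), (∀ j, x j = ∑ i, c j i • y i) ∧
      ∀ l i, ∑ j, v l j * c j i = 0 := by
  have hx := h.mem_closure_of_relations v x hv
  clear hv
  induction hx using AddSubgroup.closure_induction with
  | mem z hz =>
    obtain ⟨c, y, hc, rfl⟩ := hz
    exact ⟨1, fun j _ => c j, fun _ => y, by simp, fun l _ => hc l⟩
  | zero => exact ⟨0, fun _ => Fin.elim0, Fin.elim0, by simp, fun _ i => i.elim0⟩
  | add z w _ _ hz hw =>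
    obtain ⟨n, c, y, hy, hc⟩ := hz
    obtain ⟨m, c', y', hy', hc'⟩ := hw
    refine ⟨n + m, fun j => Fin.append (c j) (c' j), Fin.append y y', fun j => ?_,
      fun l i => i.addCases (fun i => ?_) fun i => ?_⟩
    · simp [Fin.sum_univ_add, hy, hy']
    · simpa using hc l i
    · simpa using hc' l i
  | neg z _ hz =>
    obtain ⟨n, c, y, hy, hc⟩ := hz
    exact ⟨n, c, -y, by simp [hy], hc⟩

end

theorem IsFlat.of_exists_factorization
    (h : ∀ (m : ℕ) (r : Fin m → R) (x : Fin m → M), ∑ j, r j • x j = 0 →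
      ∃ (n : ℕ) (c : Fin m → Fin n → R) (y : Fin n → M), (∀ j, x j = ∑ i, c j i • y i) ∧
        ∀ i, ∑ j, r j * c j i = 0) : IsFlat R M := by
  refine Module.Baer.injective fun I g => ?_
  let α : (I →₀ M) →+ M := Finsupp.liftAddHom fun ρ => DistribSMul.toAddMonoidHom M ρ.1.unop
  let β : (I →₀ M) →+ QModZ := Finsupp.liftAddHom fun ρ => g ρ
  obtain ⟨χ, hχ⟩ := exists_character_extension α β fun t ht => by
    obtain ⟨m, ρ, x, rfl⟩ := exists_eq_sum_single t
    obtain ⟨n, c, y, hy, hc⟩ := h m (fun j => (ρ j).1.unop) x (by simpa [α] using ht)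
    have hρ : ∀ i, ∑ j, MulOpposite.op (c j i) • ρ j = 0 := fun i =>
      Subtype.ext (MulOpposite.unop_injective (by simpa using hc i))
    calc β (∑ j, .single (ρ j) (x j)) = ∑ j, ∑ i, g (MulOpposite.op (c j i) • ρ j) (y i) := by
          simp [β, hy]
      _ = ∑ i, g (∑ j, MulOpposite.op (c j i) • ρ j) (y i) := by
          rw [Finset.sum_comm]
          simp [AddMonoidHom.finsetSum_apply]
      _ = 0 := by simp [hρ]
  refine ⟨LinearMap.toSpanSingleton Rᵐᵒᵖ (CharGroup M) χ, fun r hr => AddMonoidHom.ext fun m => ?_⟩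
  simpa [α, β] using hχ (Finsupp.single ⟨r, hr⟩ m)

end EquationalCriterion

section BasedComplexes

variable {R : Type u} [Ring R] {B : Type u} {M : Type u} [AddCommGroup M] [Module R M]
  {E : Type u} [AddCommGroup E] [Module Rᵐᵒᵖ E]

/-- The differential of `Hom_R(P, M)`, where `P` is the free module on `B` with the endomorphism
sending the basis vector `b` to `d b`. -/
noncomputable def homDiff (d : B → (B →₀ R)) : (B → M) →+ (B → M) where
  toFun h b := Finsupp.linearCombination R h (d b)
  map_zero' := by
    ext b
    simp
  map_add' h k := by
    ext b
    simp [Finsupp.linearCombination_apply, Finsupp.sum_add]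

/-- The differential of `E ⊗_R P`, where `P` is the free module on `B` with the endomorphism
sending the basis vector `b` to `d b`. -/
noncomputable def tensorDiff (d : B → (B →₀ R)) : (B →₀ E) →+ (B →₀ E) :=
  Finsupp.liftAddHom fun b =>
    { toFun e := (d b).mapRange (fun r => MulOpposite.op r • e) (zero_smul _ e)
      map_zero' := by
        ext c
        simp
      map_add' e e' := by
        ext c
        simp }

theorem homDiff_apply (d : B → (B →₀ R)) (h : B → M) (b : B) :
    homDiff d h b = (d b).sum fun c r => r • h c :=
  Finsupp.linearCombination_apply R (d b)

theorem homDiff_homDiff {d : B → (B →₀ R)} (hdd : ∀ b, Finsupp.linearCombination R d (d b) = 0)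
    (h : B → M) : homDiff d (homDiff d h) = 0 := by
  have hcomp : Finsupp.linearCombination R (homDiff d h) =
      Finsupp.linearCombination R h ∘ₗ Finsupp.linearCombination R d :=
    Finsupp.lhom_ext' fun b => LinearMap.ext_ring (by simp [homDiff])
  ext b
  exact (LinearMap.congr_fun hcomp (d b)).trans (by simp [hdd])

theorem homDiff_congr {d : B → (B →₀ R)} {S : Set B} {b : B} (hb : d b ∈ Finsupp.supported R R S)
    {h k : B → M} (H : ∀ c ∈ S, h c = k c) : homDiff d h b = homDiff d k b := by
  simp only [homDiff_apply]
  exact Finsupp.sum_congr fun c hc => by rw [H c (hb hc)]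

theorem homDiff_eq_zero {d : B → (B →₀ R)} {S : Set B} {b : B}
    (hb : d b ∈ Finsupp.supported R R S) {h : B → M} (H : ∀ c ∈ S, h c = 0) :
    homDiff d h b = 0 :=
  (homDiff_congr hb H).trans (congrFun (map_zero (homDiff d)) b)

theorem tensorDiff_single (d : B → (B →₀ R)) (b : B) (e : E) :
    tensorDiff d (Finsupp.single b e) =
      (d b).mapRange (fun r => MulOpposite.op r • e) (zero_smul _ e) :=
  Finsupp.liftAddHom_apply_single _ b e

theorem tensorDiff_apply (d : B → (B →₀ R)) (z : B →₀ E) (c : B) :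
    tensorDiff d z c = z.sum fun b e => MulOpposite.op (d b c) • e :=
  (congrFun (congrArg DFunLike.coe (Finsupp.liftAddHom_apply _ z)) c).trans Finsupp.sum_apply

theorem tensorDiff_mapRange {E' : Type u} [AddCommGroup E'] [Module Rᵐᵒᵖ E']
    (φ : E →ₗ[Rᵐᵒᵖ] E') (d : B → (B →₀ R)) (z : B →₀ E) :
    tensorDiff d (z.mapRange φ (map_zero φ)) = (tensorDiff d z).mapRange φ (map_zero φ) := by
  ext c
  rw [tensorDiff_apply, Finsupp.mapRange_apply, tensorDiff_apply,
    Finsupp.sum_mapRange_index fun _ => smul_zero _, map_finsuppSum]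
  simp only [map_smul]

theorem tensorDiff_mem_supported {d : B → (B →₀ R)} {S : Set B}
    (hS : ∀ b ∈ S, d b ∈ Finsupp.supported R R S) {z : B →₀ E}
    (hz : z ∈ Finsupp.supported E Rᵐᵒᵖ S) : tensorDiff d z ∈ Finsupp.supported E Rᵐᵒᵖ S := by
  refine (Finsupp.mem_supported' _ _).2 fun c hc => ?_
  rw [tensorDiff_apply]
  refine Finset.sum_eq_zero fun b hb => ?_
  simp only [(Finsupp.mem_supported' _ _).1 (hS b (hz hb)) c hc, MulOpposite.op_zero, zero_smul]

section Pairing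

variable {G : Type*} [AddCommGroup G]

/-- The pairing of `M`-valued cochains with `E`-valued chains induced by a pairing of `M` with
`E`. -/
noncomputable def pairing (β : M →+ E →+ G) (h : B → M) : (B →₀ E) →+ G :=
  Finsupp.liftAddHom fun b => β (h b)

theorem pairing_single (β : M →+ E →+ G) (h : B → M) (b : B) (e : E) :
    pairing β h (Finsupp.single b e) = β (h b) e :=
  Finsupp.liftAddHom_apply_single _ b e

theorem pairing_piSingle [DecidableEq B] (β : M →+ E →+ G) (c : B) (m : M) (z : B →₀ E) :
    pairing β (Pi.single c m) z = β m (z c) := by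
  have h : pairing β (Pi.single c m) = (β m).comp (Finsupp.applyAddHom c) := by
    refine Finsupp.addHom_ext fun b e => ?_
    rw [pairing_single, AddMonoidHom.comp_apply, Finsupp.applyAddHom_apply]
    obtain rfl | hbc := eq_or_ne b c
    · rw [Pi.single_eq_same, Finsupp.single_eq_same]
    · rw [Pi.single_eq_of_ne hbc, Finsupp.single_eq_of_ne hbc.symm, map_zero, map_zero,
        AddMonoidHom.zero_apply]
  rw [h]
  rfl

theorem pairing_eq_zero {N : Type u} [AddCommGroup N] {β : N →+ E →+ G} {h : B → N} {S : Set B}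
    {z : B →₀ E}
    (hz : z ∈ Finsupp.supported E Rᵐᵒᵖ S) (H : ∀ b ∈ S, h b = 0) : pairing β h z = 0 :=
  Finset.sum_eq_zero fun b hb => by
    simp only [H b (hz hb), map_zero, AddMonoidHom.zero_apply]

theorem pairing_tensorDiff {β : M →+ E →+ G}
    (hβ : ∀ (r : R) m e, β (r • m) e = β m (MulOpposite.op r • e)) (d : B → (B →₀ R))
    (h : B → M) (z : B →₀ E) : pairing β h (tensorDiff d z) = pairing β (homDiff d h) z := by
  suffices (pairing β h).comp (tensorDiff d) = pairing β (homDiff d h) from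
    DFunLike.congr_fun this z
  refine Finsupp.addHom_ext fun b e => ?_
  rw [AddMonoidHom.comp_apply, tensorDiff_single, pairing, Finsupp.liftAddHom_apply,
    Finsupp.sum_mapRange_index fun _ => map_zero _, pairing_single, homDiff_apply]
  change _ = ((AddMonoidHom.eval e).comp β) _
  rw [map_finsuppSum]
  exact Finsupp.sum_congr fun c _ => (hβ _ _ _).symm

theorem exists_eq_pairing (χ : (B →₀ E) →+ QModZ.{u}) :
    ∃ h : B → CharGroup E, pairing (AddMonoidHom.id (CharGroup E)) h = χ :=
  ⟨fun b => χ.comp (Finsupp.singleAddHom b), Finsupp.addHom_ext fun _ _ => pairing_single ..⟩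

theorem tensorDiff_tensorDiff {d : B → (B →₀ R)}
    (hdd : ∀ b, Finsupp.linearCombination R d (d b) = 0) (z : B →₀ E) :
    tensorDiff d (tensorDiff d z) = 0 := by
  refine eq_zero_of_forall_character fun χ => ?_
  obtain ⟨h, rfl⟩ := exists_eq_pairing χ
  rw [pairing_tensorDiff fun _ _ _ => rfl, pairing_tensorDiff fun _ _ _ => rfl,
    homDiff_homDiff hdd]
  exact pairing_eq_zero (R := R) (S := Set.univ) (fun _ _ => trivial) fun _ _ => rfl

end Pairing

/-- Every `E`-valued chain on `Q` which is a cycle relative to `S` is, relative to `S`, the boundary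
of a chain on `T`, for every injective right module `E`. -/
def FillsCycles (d : B → (B →₀ R)) (S Q T : Set B) : Prop :=
  ∀ (E : Type u) [AddCommGroup E] [Module Rᵐᵒᵖ E], Module.Injective Rᵐᵒᵖ E →
    ∀ z ∈ Finsupp.supported E Rᵐᵒᵖ Q, tensorDiff d z ∈ Finsupp.supported E Rᵐᵒᵖ S →
      ∃ w ∈ Finsupp.supported E Rᵐᵒᵖ T, tensorDiff d w - z ∈ Finsupp.supported E Rᵐᵒᵖ S

namespace FillsCycles

variable {d : B → (B →₀ R)} {S X Y : Set B}

theorem exists_tensorDiff_eq (h : FillsCycles d ∅ X Y) (hE : Module.Injective Rᵐᵒᵖ E) {z : B →₀ E}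
    (hz : z ∈ Finsupp.supported E Rᵐᵒᵖ X) (hdz : tensorDiff d z = 0) :
    ∃ w ∈ Finsupp.supported E Rᵐᵒᵖ Y, tensorDiff d w = z := by
  obtain ⟨w, hw, hwz⟩ := h E hE z hz (hdz ▸ zero_mem _)
  rw [Finsupp.supported_empty, Submodule.mem_bot, sub_eq_zero] at hwz
  exact ⟨w, hw, hwz⟩

theorem of_exists_tensorDiff_eq
    (h : ∀ (E : Type u) [AddCommGroup E] [Module Rᵐᵒᵖ E], Module.Injective Rᵐᵒᵖ E →
      ∀ z ∈ Finsupp.supported E Rᵐᵒᵖ X, tensorDiff d z = 0 →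
        ∃ w ∈ Finsupp.supported E Rᵐᵒᵖ Y, tensorDiff d w = z) : FillsCycles d ∅ X Y := by
  intro E _ _ hE z hz hdz
  rw [Finsupp.supported_empty, Submodule.mem_bot] at hdz
  obtain ⟨w, hw, rfl⟩ := h E hE z hz hdz
  exact ⟨w, hw, by rw [sub_self]; exact zero_mem _⟩

/- If no finite `T` worked, a counterexample for each `T` would give a cycle with coefficients in
the product of the corresponding injective modules, and a filling of it has finite support. -/
theorem exists_finset (h : FillsCycles d S X X) (Q : Finset B) (hQ : ↑Q ⊆ X) :
    ∃ T : Finset B, ↑T ⊆ X ∧ FillsCycles d S Q T := by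
  by_contra! hT
  simp only [FillsCycles] at hT
  push Not at hT
  choose E i₁ i₂ hE z hzQ hdz hz using fun T : {T : Finset B // ↑T ⊆ X} => hT T.1 T.2
  let Z : B →₀ (∀ T, E T) := Finsupp.onFinset Q (fun b T => z T b) fun b hb => by
    by_contra hbQ
    exact hb (funext fun T => (Finsupp.mem_supported' _ _).1 (hzQ T) b hbQ)
  have hZ : ∀ T, Z.mapRange (LinearMap.proj (R := Rᵐᵒᵖ) T) (map_zero _) = z T := fun T => by
    ext b
    simp [Z]
  have hdZ : tensorDiff d Z ∈ Finsupp.supported (∀ T, E T) Rᵐᵒᵖ S := by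
    refine (Finsupp.mem_supported' _ _).2 fun b hb => funext fun T => ?_
    have hT := (Finsupp.mem_supported' _ _).1 (hdz T) b hb
    rwa [← hZ T, tensorDiff_mapRange] at hT
  obtain ⟨w, hwX, hw⟩ := h _ (Module.Injective.pi Rᵐᵒᵖ E) Z
    (fun b hb => hQ (Finsupp.support_onFinset_subset hb)) hdZ
  let T : {T : Finset B // ↑T ⊆ X} := ⟨w.support, hwX⟩
  refine hz T (w.mapRange (LinearMap.proj (R := Rᵐᵒᵖ) T) (map_zero _))
    (fun b hb => Finsupp.support_mapRange hb) ((Finsupp.mem_supported' _ _).2 fun b hb => ?_)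
  rw [tensorDiff_mapRange, ← hZ T, Finsupp.sub_apply, Finsupp.mapRange_apply,
    Finsupp.mapRange_apply, ← map_sub, ← Finsupp.sub_apply,
    (Finsupp.mem_supported' _ _).1 hw b hb, map_zero]

theorem relative (hdd : ∀ b, Finsupp.linearCombination R d (d b) = 0) (hS : FillsCycles d ∅ S S)
    (hX : FillsCycles d ∅ X X) (hSX : S ⊆ X) : FillsCycles d S X X := by
  intro E _ _ hE z hz hdz
  obtain ⟨w₁, hw₁, hdw₁⟩ := hS.exists_tensorDiff_eq hE hdz (tensorDiff_tensorDiff hdd z)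
  obtain ⟨w, hw, hdw⟩ := hX.exists_tensorDiff_eq hE
    (sub_mem hz (Finsupp.supported_mono hSX hw₁)) (by rw [map_sub, hdw₁, sub_self])
  exact ⟨w, hw, by simpa [hdw] using hw₁⟩

theorem union (hdd : ∀ b, Finsupp.linearCombination R d (d b) = 0)
    (hdX : ∀ b ∈ X, d b ∈ Finsupp.supported R R X) (hdY : ∀ b ∈ Y, d b ∈ Finsupp.supported R R Y)
    (hX : FillsCycles d ∅ X X) (hY : FillsCycles d ∅ Y Y)
    (hXY : FillsCycles d ∅ (X ∩ Y) (X ∩ Y)) : FillsCycles d ∅ (X ∪ Y) (X ∪ Y) := by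
  refine of_exists_tensorDiff_eq fun E _ _ hE z hz hdz => ?_
  rw [Finsupp.supported_union] at hz ⊢
  obtain ⟨x, hx, y, hy, rfl⟩ := Submodule.mem_sup.1 hz
  have hdxy : tensorDiff d x = -tensorDiff d y := by
    rwa [eq_neg_iff_add_eq_zero, ← map_add]
  have hdx : tensorDiff d x ∈ Finsupp.supported E Rᵐᵒᵖ (X ∩ Y) := by
    rw [Finsupp.supported_inter]
    exact ⟨tensorDiff_mem_supported hdX hx,
      hdxy ▸ neg_mem (tensorDiff_mem_supported hdY hy)⟩
  obtain ⟨w, hw, hdw⟩ := hXY.exists_tensorDiff_eq hE hdx (tensorDiff_tensorDiff hdd x)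
  rw [Finsupp.supported_inter] at hw
  obtain ⟨w₁, hw₁, hdw₁⟩ := hX.exists_tensorDiff_eq hE (sub_mem hx hw.1) (by
    rw [map_sub, hdw, sub_self])
  obtain ⟨w₂, hw₂, hdw₂⟩ := hY.exists_tensorDiff_eq hE (add_mem hy hw.2) (by
    rw [map_add, hdw, hdxy, add_neg_cancel])
  exact ⟨w₁ + w₂, add_mem (Submodule.mem_sup_left hw₁) (Submodule.mem_sup_right hw₂), by
    rw [map_add, hdw₁, hdw₂, sub_add_add_cancel, add_comm]⟩

theorem of_injTensorExact
    (h : InjTensorExact (Finsupp.linearCombination R d) (Finsupp.linearCombination R d)) :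
    FillsCycles d ∅ Set.univ Set.univ := by
  refine of_exists_tensorDiff_eq fun E _ _ hE z _ hdz => ?_
  suffices z ∈ (tensorDiff (E := E) d).range from this.imp fun w hw => ⟨fun _ _ => trivial, hw⟩
  refine mem_of_forall_character fun χ hχ => ?_
  obtain ⟨h₀, rfl⟩ := exists_eq_pairing χ
  have hdh : homDiff d h₀ = 0 := funext fun b => AddMonoidHom.ext fun e => by
    refine (pairing_single (AddMonoidHom.id (CharGroup E)) (homDiff d h₀) b e).symm.trans ?_
    rw [← pairing_tensorDiff fun _ _ _ => rfl]
    exact hχ _ ⟨_, rfl⟩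
  obtain ⟨ψ, hψ⟩ := h E hE (Finsupp.linearCombination R h₀) fun a => by
    suffices Finsupp.linearCombination R h₀ ∘ₗ Finsupp.linearCombination R d = 0 from
      LinearMap.congr_fun this a
    exact Finsupp.lhom_ext' fun b => LinearMap.ext_ring (by simpa [homDiff] using congrFun hdh b)
  have hk : homDiff d (fun b => ψ (Finsupp.single b 1)) = h₀ := funext fun b => by
    have hψ' : Finsupp.linearCombination R (fun b => ψ (Finsupp.single b 1)) = ψ :=
      Finsupp.lhom_ext' fun b => LinearMap.ext_ring (by simp)
    change Finsupp.linearCombination R _ (d b) = h₀ b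
    simpa [hψ'] using hψ (Finsupp.single b 1)
  rw [← hk, ← pairing_tensorDiff fun _ _ _ => rfl, hdz, map_zero]

theorem exists_homDiff_eq_on_finset {V T : Finset B} (hVT : FillsCycles d S V T) (hM : IsFlat R M)
    {h : B → M} (hS : ∀ b ∈ S, h b = 0) (hT : ∀ b ∈ T, homDiff d h b = 0) :
    ∃ k : B → M, (∀ b ∈ S, k b = 0) ∧ ∀ v ∈ V, homDiff d k v = h v := by
  classical
  let H : AddSubgroup (V → M) := ((AddSubgroup.pi S fun _ => ⊥).map (homDiff d)).map
    (LinearMap.funLeft R M Subtype.val).toAddMonoidHom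
  suffices (fun v : V => h v) ∈ H by
    obtain ⟨_, ⟨k, hk, rfl⟩, hkh⟩ := this
    exact ⟨k, hk, fun v hv => congrFun hkh ⟨v, hv⟩⟩
  refine mem_of_forall_character fun χ hχ => ?_
  let ev : M →+ CharGroup M →+ QModZ.{u} := AddMonoidHom.eval
  have hev : ∀ (r : R) m (e : CharGroup M), ev (r • m) e = ev m (MulOpposite.op r • e) :=
    fun _ _ _ => rfl
  let z : B →₀ CharGroup M := ∑ v : V, Finsupp.single (v : B)
    (χ.comp (AddMonoidHom.single (fun _ : V => M) v))
  have hzV : z ∈ Finsupp.supported (CharGroup M) Rᵐᵒᵖ (V : Set B) :=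
    Submodule.sum_mem _ fun v _ => Finsupp.single_mem_supported _ _ v.2
  have hχz : ∀ k : B → M, pairing ev k z = χ fun v => k v := fun k => by
    rw [map_sum, ← Finset.univ_sum_single fun v : V => k v, map_sum]
    exact Finset.sum_congr rfl fun v _ => pairing_single _ _ _ _
  have hdz : tensorDiff d z ∈ Finsupp.supported (CharGroup M) Rᵐᵒᵖ S := by
    refine (Finsupp.mem_supported' _ _).2 fun c hc => AddMonoidHom.ext fun m => ?_
    change ev m (tensorDiff d z c) = 0
    rw [← pairing_piSingle, pairing_tensorDiff hev, hχz]
    have hk : ∀ b ∈ S, (Pi.single c m : B → M) b = 0 := fun b hb =>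
      Pi.single_eq_of_ne (M := fun _ => M) (ne_of_mem_of_not_mem hb hc) m
    exact hχ _ ⟨_, ⟨_, hk, rfl⟩, rfl⟩
  obtain ⟨w, hwT, hw⟩ := hVT _ hM z hzV hdz
  rw [← hχz, ← sub_sub_cancel (tensorDiff d w) z, map_sub, pairing_eq_zero hw hS,
    pairing_tensorDiff hev, pairing_eq_zero hwT hT, sub_zero]

end FillsCycles

theorem exists_monotone_finset_of_countable {N : Set B} (hN : N.Countable) :
    ∃ V : ℕ → Finset B, Monotone V ∧ ⋃ n, (V n : Set B) = N := by
  obtain ⟨e, he⟩ := Set.countable_iff_exists_injOn.1 hN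
  have hfin : ∀ n : ℕ, {b ∈ N | e b ≤ n}.Finite := fun n =>
    Set.Finite.of_finite_image ((Set.finite_Iic n).subset (by rintro _ ⟨b, hb, rfl⟩; exact hb.2))
      (he.mono fun b hb => hb.1)
  refine ⟨fun n => (hfin n).toFinset, fun m n hmn => ?_, ?_⟩
  · exact Set.Finite.toFinset_mono fun b hb => ⟨hb.1, hb.2.trans hmn⟩
  · ext b
    simpa using fun _ => ⟨e b, le_rfl⟩

theorem exists_limit_of_approximations {N : Type*} {V : ℕ → Finset B} (hV : Monotone V)
    {P : ℕ → (B → N) → Prop} (h₀ : ∃ g, P 0 g)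
    (hstep : ∀ n g, P n g → ∃ g', P (n + 1) g' ∧ ∀ b ∈ V n, g' b = g b) :
    ∃ (G : ℕ → B → N) (g : B → N), (∀ n, P n (G n)) ∧ (∀ n, ∀ b ∈ V n, g b = G n b) ∧
      ∀ b, ∃ n, g b = G n b := by
  classical
  choose next hnext hagree using hstep
  obtain ⟨g₀, hg₀⟩ := h₀
  let G : ∀ n, {g // P n g} := Nat.rec ⟨g₀, hg₀⟩ fun n g => ⟨next n g.1 g.2, hnext n g.1 g.2⟩
  have hG : ∀ m n, m ≤ n → ∀ b ∈ V m, (G n).1 b = (G m).1 b := fun m n hmn => by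
    induction n, hmn using Nat.le_induction with
    | base => exact fun b _ => rfl
    | succ n hmn ih => exact fun b hb => (hagree n _ _ b (hV hmn hb)).trans (ih b hb)
  let ν : B → ℕ := fun b => if h : ∃ n, b ∈ V n then Nat.find h else 0
  refine ⟨fun n => (G n).1, fun b => (G (ν b)).1 b, fun n => (G n).2, fun n b hb => ?_,
    fun b => ⟨ν b, rfl⟩⟩
  have h : ∃ n, b ∈ V n := ⟨n, hb⟩
  have hν : ν b = Nat.find h := dif_pos h
  exact (hG (ν b) n (hν ▸ Nat.find_min' h hb) b (hν ▸ Nat.find_spec h)).symm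

/-- `g` is a cochain vanishing on `S` whose coboundary agrees with `f` on `W`. -/
structure IsPrimitiveOn (d : B → (B →₀ R)) (f : B → M) (S W : Set B) (g : B → M) : Prop where
  eq_zero : ∀ b ∈ S, g b = 0
  homDiff_eq : ∀ b ∈ W, homDiff d g b = f b

/- On a sufficiently large finite set, two primitives differ by a cocycle, hence by a coboundary on
a smaller set; correcting by it makes them agree there. -/
theorem IsPrimitiveOn.exists_agreeing {d : B → (B →₀ R)} {S : Set B} {V T W : Finset B}
    (hVT : FillsCycles d S V T) (hM : IsFlat R M)
    (hdd : ∀ b, Finsupp.linearCombination R d (d b) = 0)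
    (hdS : ∀ b ∈ S, d b ∈ Finsupp.supported R R S) {f g g₁ : B → M}
    (hg : IsPrimitiveOn d f S T g) (hg₁ : IsPrimitiveOn d f S (T ∪ W) g₁) :
    ∃ g', IsPrimitiveOn d f S W g' ∧ ∀ b ∈ V, g' b = g b := by
  obtain ⟨k, hkS, hk⟩ := hVT.exists_homDiff_eq_on_finset hM (h := g₁ - g)
    (fun b hb => by rw [Pi.sub_apply, hg₁.eq_zero b hb, hg.eq_zero b hb, sub_zero])
    fun b hb => by
      rw [map_sub, Pi.sub_apply, hg₁.homDiff_eq b (Or.inl hb), hg.homDiff_eq b hb, sub_self]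
  refine ⟨g₁ - homDiff d k, ⟨fun b hb => ?_, fun b hb => ?_⟩, fun b hb => ?_⟩
  · rw [Pi.sub_apply, hg₁.eq_zero b hb, homDiff_eq_zero (hdS b hb) hkS, sub_zero]
  · rw [map_sub, homDiff_homDiff hdd, sub_zero, hg₁.homDiff_eq b (Or.inr hb)]
  · rw [Pi.sub_apply, hk b hb, Pi.sub_apply, sub_sub_cancel]

theorem IsPrimitiveOn.of_forall_eq {d : B → (B →₀ R)} {S X : Set B} {V : ℕ → Finset B}
    (hVmono : Monotone V) (hV : ⋃ n, (V n : Set B) = X \ S)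
    (hdS : ∀ b ∈ S, d b ∈ Finsupp.supported R R S) (hdX : ∀ b ∈ X, d b ∈ Finsupp.supported R R X)
    {f g : B → M} {G : ℕ → B → M} (hfS : ∀ b ∈ S, f b = 0)
    (hG : ∀ n, IsPrimitiveOn d f S (V n) (G n)) (hgS : ∀ b ∈ S, g b = 0)
    (hgV : ∀ n, ∀ b ∈ V n, g b = G n b) : IsPrimitiveOn d f S X g := by
  classical
  refine ⟨hgS, fun b hbX => ?_⟩
  by_cases hbS : b ∈ S
  · rw [homDiff_eq_zero (hdS b hbS) hgS, hfS b hbS]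
  obtain ⟨n, hn⟩ := Directed.exists_mem_subset_of_finset_subset_biUnion
    (f := fun n => (V n : Set B)) (s := (insert b (d b).support).filter (· ∉ S))
    (Monotone.directed_le hVmono) (by
      intro c hc
      obtain ⟨hc, hcS⟩ := Finset.mem_filter.1 hc
      refine hV ▸ ⟨(Finset.mem_insert.1 hc).elim (fun hcb => hcb ▸ hbX) fun hcd => ?_, hcS⟩
      exact hdX b hbX hcd)
  have hbn : b ∈ V n := hn (by simp [hbS])
  have hdb : d b ∈ Finsupp.supported R R (V n ∪ S) := fun c hc =>
    or_iff_not_imp_right.2 fun hcS => hn (by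
      exact Finset.mem_filter.2 ⟨Finset.mem_insert_of_mem hc, hcS⟩)
  rw [homDiff_congr hdb fun c hc => hc.elim (hgV n c) fun hcS =>
    (hgS c hcS).trans ((hG n).eq_zero c hcS).symm, (hG n).homDiff_eq b hbn]

theorem exists_isPrimitiveOn_of_countable {d : B → (B →₀ R)} {S X : Set B} (hX : (X \ S).Countable)
    (hM : IsFlat R M) (hdd : ∀ b, Finsupp.linearCombination R d (d b) = 0)
    (hdS : ∀ b ∈ S, d b ∈ Finsupp.supported R R S) (hdX : ∀ b ∈ X, d b ∈ Finsupp.supported R R X)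
    (hfill : FillsCycles d S X X) {f : B → M} (hf : homDiff d f = 0) (hfS : ∀ b ∈ S, f b = 0) :
    ∃ g : B → M, IsPrimitiveOn d f S X g := by
  classical
  choose! T hTX hT using hfill.exists_finset
  obtain ⟨V, hVmono, hV⟩ := exists_monotone_finset_of_countable hX
  have hVX : ∀ n, ↑(V n) ⊆ X := fun n => (hV ▸ Set.subset_iUnion _ n).trans Set.sdiff_subset
  have hWX : ∀ n, ↑(V n ∪ T (V n)) ⊆ X := fun n => by
    rw [Finset.coe_union]
    exact Set.union_subset (hVX n) (hTX _ (hVX n))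
  have hfin : ∀ W : Finset B, ↑W ⊆ X → ∃ g : B → M, IsPrimitiveOn d f S W g := fun W hW =>
    ((hT W hW).exists_homDiff_eq_on_finset hM hfS fun b _ => congrFun hf b).imp
      fun g hg => ⟨hg.1, hg.2⟩
  obtain ⟨G, g, hG, hgV, hg⟩ := exists_limit_of_approximations hVmono
    (P := fun n => IsPrimitiveOn d f S ↑(V n ∪ T (V n))) (hfin _ (hWX 0)) fun n g hg => by
      obtain ⟨g₁, hg₁⟩ := hfin (T (V n) ∪ (V (n + 1) ∪ T (V (n + 1)))) (by
        rw [Finset.coe_union]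
        exact Set.union_subset (hTX _ (hVX n)) (hWX (n + 1)))
      rw [Finset.coe_union] at hg hg₁
      exact IsPrimitiveOn.exists_agreeing (hT _ (hVX n)) hM hdd hdS
        ⟨hg.eq_zero, fun b hb => hg.homDiff_eq b (Or.inr hb)⟩ hg₁
  have hgS : ∀ b ∈ S, g b = 0 := fun b hb => by
    obtain ⟨n, hn⟩ := hg b
    rw [hn, (hG n).eq_zero b hb]
  exact ⟨g, .of_forall_eq hVmono hV hdS hdX hfS
    (fun n => ⟨(hG n).eq_zero, fun b hb => (hG n).homDiff_eq b (by simp [hb])⟩) hgS hgV⟩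

/-- A subset of `B` spanning a subcomplex and containing, with every finite set `Q`, the finite set
`T Q`. Used with `T Q` large enough to fill the cycles on `Q`. -/
structure IsFillClosed (d : B → (B →₀ R)) (T : Finset B → Finset B) (Y : Set B) : Prop where
  supported : ∀ b ∈ Y, d b ∈ Finsupp.supported R R Y
  subset : ∀ Q : Finset B, ↑Q ⊆ Y → ↑(T Q) ⊆ Y

namespace IsFillClosed

variable {d : B → (B →₀ R)} {T : Finset B → Finset B} {Y Z : Set B}

theorem univ : IsFillClosed d T Set.univ :=
  ⟨fun _ _ _ _ => trivial, fun _ _ _ _ => trivial⟩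

theorem inter (hY : IsFillClosed d T Y) (hZ : IsFillClosed d T Z) : IsFillClosed d T (Y ∩ Z) where
  supported b hb _ hc := ⟨hY.supported b hb.1 hc, hZ.supported b hb.2 hc⟩
  subset Q hQ :=
    Set.subset_inter (hY.subset Q fun _ h => (hQ h).1) (hZ.subset Q fun _ h => (hQ h).2)

theorem exists_countable (d : B → (B →₀ R)) (T : Finset B → Finset B) (b : B) :
    ∃ Y, IsFillClosed d T Y ∧ b ∈ Y ∧ Y.Countable := by
  let next : Set B → Set B := fun X =>
    X ∪ (⋃ x ∈ X, ((d x).support : Set B)) ∪ ⋃ Q ∈ {Q : Finset B | ↑Q ⊆ X}, (T Q : Set B)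
  let X : ℕ → Set B := fun n => next^[n] {b}
  have hX : ∀ n, X (n + 1) = next (X n) := fun n => Function.iterate_succ_apply' _ _ _
  have hmono : Monotone X := monotone_nat_of_le_succ fun n => by
    rw [hX]
    exact Set.subset_union_left.trans Set.subset_union_left
  refine ⟨⋃ n, X n, ⟨fun x hx c hc => ?_, fun Q hQ x hx => ?_⟩, Set.mem_iUnion.2 ⟨0, rfl⟩,
    Set.countable_iUnion fun n => ?_⟩
  · obtain ⟨n, hn⟩ := Set.mem_iUnion.1 hx
    exact Set.mem_iUnion.2 ⟨n + 1, hX n ▸ Or.inl (Or.inr (Set.mem_biUnion hn hc))⟩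
  · obtain ⟨n, hn⟩ :=
      (Monotone.directed_le hmono).exists_mem_subset_of_finset_subset_biUnion hQ
    exact Set.mem_iUnion.2 ⟨n + 1, hX n ▸ Or.inr (Set.mem_biUnion hn hx)⟩
  · induction n with
    | zero => exact Set.countable_singleton b
    | succ n ih =>
      rw [hX]
      have hfin : {Q : Finset B | ↑Q ⊆ X n}.Countable :=
        ((Set.countable_ofPred_finite_subset ih).preimage Finset.coe_injective).mono
          fun Q hQ => And.intro Q.finite_toSet hQ
      exact (ih.union (ih.biUnion fun _ _ => Finset.countable_toSet _)).union
        (hfin.biUnion fun _ _ => Finset.countable_toSet _)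

theorem fillsCycles (hT : ∀ Q : Finset B, FillsCycles d ∅ Q (T Q)) (hY : IsFillClosed d T Y) :
    FillsCycles d ∅ Y Y :=
  .of_exists_tensorDiff_eq fun E _ _ hE z hz hdz => by
    obtain ⟨w, hw, hwz⟩ := (hT z.support).exists_tensorDiff_eq hE (fun _ h => h) hdz
    exact ⟨w, hw.trans (hY.subset _ hz), hwz⟩

theorem fillsCycles_inter_sUnion (hT : ∀ Q : Finset B, FillsCycles d ∅ Q (T Q))
    (hdd : ∀ b, Finsupp.linearCombination R d (d b) = 0) {𝒴 : Set (Set B)} (h𝒴 : 𝒴.Finite)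
    (hcl : ∀ Y ∈ 𝒴, IsFillClosed d T Y) :
    ∀ C, IsFillClosed d T C → FillsCycles d ∅ (C ∩ ⋃₀ 𝒴) (C ∩ ⋃₀ 𝒴) := by
  induction 𝒴, h𝒴 using Set.Finite.induction_on with
  | empty =>
    intro C _
    rw [Set.sUnion_empty, Set.inter_empty]
    refine .of_exists_tensorDiff_eq fun E _ _ _ z hz _ => ⟨0, zero_mem _, ?_⟩
    rw [Finsupp.supported_empty, Submodule.mem_bot] at hz
    rw [hz, map_zero]
  | @insert Y 𝒴 _ _ ih =>
    intro C hC
    have hY := hcl Y (Set.mem_insert _ _)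
    have h𝒴 : ∀ Z ∈ 𝒴, IsFillClosed d T Z := fun Z hZ => hcl Z (Set.mem_insert_of_mem _ hZ)
    rw [Set.sUnion_insert, Set.inter_union_distrib_left]
    refine .union hdd (hC.inter hY).supported ?_ ((hC.inter hY).fillsCycles hT) (ih h𝒴 C hC) ?_
    · rintro b ⟨hbC, Z, hZ, hbZ⟩ c hc
      exact ⟨hC.supported b hbC hc, Z, hZ, (h𝒴 Z hZ).supported b hbZ hc⟩
    · rw [← Set.inter_inter_distrib_left, ← Set.inter_assoc]
      exact ih h𝒴 _ (hC.inter hY)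

end IsFillClosed

/-- A union of `T`-closed subsets, in the sense of `IsFillClosed`. -/
def IsFillClosedUnion (d : B → (B →₀ R)) (T : Finset B → Finset B) (S : Set B) : Prop :=
  ∀ b ∈ S, ∃ Y ⊆ S, IsFillClosed d T Y ∧ b ∈ Y

namespace IsFillClosedUnion

variable {d : B → (B →₀ R)} {T : Finset B → Finset B} {S : Set B}

theorem supported (hS : IsFillClosedUnion d T S) : ∀ b ∈ S, d b ∈ Finsupp.supported R R S :=
  fun b hb => by
    obtain ⟨Y, hYS, hY, hbY⟩ := hS b hb
    exact (hY.supported b hbY).trans hYS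

theorem sUnion {𝒮 : Set (Set B)} (h : ∀ S ∈ 𝒮, IsFillClosedUnion d T S) :
    IsFillClosedUnion d T (⋃₀ 𝒮) := by
  rintro b ⟨S, hS, hb⟩
  obtain ⟨Y, hYS, hY⟩ := h S hS b hb
  exact ⟨Y, hYS.trans (Set.subset_sUnion_of_mem hS), hY⟩

theorem union (hS : IsFillClosedUnion d T S) {Y : Set B} (hY : IsFillClosed d T Y) :
    IsFillClosedUnion d T (S ∪ Y) := by
  rintro b (hb | hb)
  · obtain ⟨Z, hZS, hZ⟩ := hS b hb
    exact ⟨Z, hZS.trans Set.subset_union_left, hZ⟩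
  · exact ⟨Y, Set.subset_union_right, hY, hb⟩

theorem fillsCycles (hS : IsFillClosedUnion d T S) (hT : ∀ Q : Finset B, FillsCycles d ∅ Q (T Q))
    (hdd : ∀ b, Finsupp.linearCombination R d (d b) = 0) : FillsCycles d ∅ S S := by
  refine .of_exists_tensorDiff_eq fun E _ _ hE z hz hdz => ?_
  choose! Y hYS hY hbY using hS
  obtain ⟨w, hw, hwz⟩ := (IsFillClosed.fillsCycles_inter_sUnion hT hdd
    (z.support.finite_toSet.image Y) (by
      rintro _ ⟨b, hb, rfl⟩
      exact hY b (hz hb)) _ .univ).exists_tensorDiff_eq hE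
    (fun b hb => ⟨trivial, Y b, ⟨b, hb, rfl⟩, hbY b (hz hb)⟩) hdz
  refine ⟨w, fun b hb => ?_, hwz⟩
  obtain ⟨-, _, ⟨c, hc, rfl⟩, hbc⟩ := hw hb
  exact hYS c (hz hc) hbc

end IsFillClosedUnion

theorem exists_homDiff_eq_union {d : B → (B →₀ R)} {T : Finset B → Finset B} {S Y : Set B}
    (hS : IsFillClosedUnion d T S) (hY : IsFillClosed d T Y) (hYc : Y.Countable) (hM : IsFlat R M)
    (hT : ∀ Q : Finset B, FillsCycles d ∅ Q (T Q))
    (hdd : ∀ b, Finsupp.linearCombination R d (d b) = 0) {f g : B → M} (hf : homDiff d f = 0)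
    (hg : ∀ b ∈ S, homDiff d g b = f b) :
    ∃ g' : B → M, (∀ b ∈ S, g' b = g b) ∧ ∀ b ∈ S ∪ Y, homDiff d g' b = f b := by
  have hSY := hS.union hY
  obtain ⟨k, hk⟩ := exists_isPrimitiveOn_of_countable (S := S) (X := S ∪ Y) (f := f - homDiff d g)
    (hYc.mono fun b hb => hb.1.resolve_left hb.2) hM hdd hS.supported hSY.supported
    (.relative hdd (hS.fillsCycles hT hdd) (hSY.fillsCycles hT hdd) Set.subset_union_left)
    (by rw [map_sub, hf, homDiff_homDiff hdd, sub_zero])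
    fun b hb => sub_eq_zero.2 (hg b hb).symm
  refine ⟨g + k, fun b hb => ?_, fun b hb => ?_⟩
  · rw [Pi.add_apply, hk.eq_zero b hb, add_zero]
  · rw [map_add, Pi.add_apply, hk.homDiff_eq b hb, Pi.sub_apply, add_sub_cancel]

theorem exists_forall_eq_of_isChain {ι N : Type*} {S : ι → Set B} {g : ι → B → N} {c : Set ι}
    (hc : IsChain (fun i j => S i ⊆ S j ∧ ∀ b ∈ S i, g j b = g i b) c) [Zero N] :
    ∃ h : B → N, ∀ i ∈ c, ∀ b ∈ S i, h b = g i b := by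
  classical
  refine ⟨fun b => if hb : ∃ i ∈ c, b ∈ S i then g hb.choose b else 0, fun i hi b hb => ?_⟩
  have hex : ∃ i ∈ c, b ∈ S i := ⟨i, hi, hb⟩
  obtain ⟨hj, hbj⟩ := hex.choose_spec
  refine (dif_pos hex).trans ?_
  obtain hij | hij | hij := eq_or_ne hex.choose i |>.imp_right (hc hj hi)
  · rw [hij]
  · exact (hij.2 b hbj).symm
  · exact hij.2 b hb

theorem exists_homDiff_eq_of_fillsCycles {d : B → (B →₀ R)} {T : Finset B → Finset B}
    (hM : IsFlat R M) (hT : ∀ Q : Finset B, FillsCycles d ∅ Q (T Q))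
    (hdd : ∀ b, Finsupp.linearCombination R d (d b) = 0) {f : B → M} (hf : homDiff d f = 0) :
    ∃ g : B → M, homDiff d g = f := by
  let Partial := {p : Set B × (B → M) //
    IsFillClosedUnion d T p.1 ∧ ∀ b ∈ p.1, homDiff d p.2 b = f b}
  obtain ⟨⟨⟨S, g⟩, hS, hg⟩, hmax⟩ := exists_maximal_of_chains_bounded
    (r := fun p q : Partial => p.1.1 ⊆ q.1.1 ∧ ∀ b ∈ p.1.1, q.1.2 b = p.1.2 b) (fun c hc => by
      obtain ⟨g, hg⟩ := exists_forall_eq_of_isChain hc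
      refine ⟨⟨(⋃₀ ((fun p => p.1.1) '' c), g), .sUnion ?_, ?_⟩, fun p hp =>
        ⟨Set.subset_sUnion_of_mem ⟨p, hp, rfl⟩, hg p hp⟩⟩
      · rintro _ ⟨p, -, rfl⟩
        exact p.2.1
      · rintro b ⟨_, ⟨p, hp, rfl⟩, hb⟩
        rw [homDiff_congr (p.2.1.supported b hb) (hg p hp), p.2.2 b hb])
    fun hpq hqr => ⟨hpq.1.trans hqr.1, fun b hb => (hqr.2 b (hpq.1 hb)).trans (hpq.2 b hb)⟩
  refine ⟨g, funext fun b => hg b ?_⟩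
  obtain ⟨Y, hY, hbY, hYc⟩ := IsFillClosed.exists_countable d T b
  obtain ⟨g', hgg', hg'⟩ := exists_homDiff_eq_union hS hY hYc hM hT hdd hf hg
  exact (hmax ⟨(S ∪ Y, g'), hS.union hY, hg'⟩ ⟨Set.subset_union_left, hgg'⟩).1 (Or.inr hbY)

theorem InjTensorExact.exists_homDiff_eq {d : B → (B →₀ R)}
    (h : InjTensorExact (Finsupp.linearCombination R d) (Finsupp.linearCombination R d))
    (hdd : ∀ b, Finsupp.linearCombination R d (d b) = 0) (hM : IsFlat R M) {f : B → M}
    (hf : homDiff d f = 0) : ∃ g : B → M, homDiff d g = f := by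
  choose T _ hT using fun Q =>
    (FillsCycles.of_injTensorExact h).exists_finset Q (Set.subset_univ _)
  exact exists_homDiff_eq_of_fillsCycles hM hT hdd hf

theorem InjTensorExact.exists_extension_of_isFlat {P : Type u} [AddCommGroup P] [Module R P]
    [Module.Free R P] {D : P →ₗ[R] P} (h : InjTensorExact D D) (hDD : ∀ x, D (D x) = 0)
    (hM : IsFlat R M) {f : P →ₗ[R] M} (hf : ∀ x, f (D x) = 0) :
    ∃ g : P →ₗ[R] M, ∀ x, g (D x) = f x := by
  let b := Module.Free.chooseBasis R P
  let d := fun i => b.repr (D (b i))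
  have hd : Finsupp.linearCombination R d = b.repr ∘ₗ D ∘ₗ b.repr.symm :=
    Finsupp.lhom_ext' fun i => LinearMap.ext_ring (by simp [d])
  have hfb : Finsupp.linearCombination R (f ∘ b) = f ∘ₗ b.repr.symm :=
    Finsupp.lhom_ext' fun i => LinearMap.ext_ring (by simp)
  obtain ⟨g, hg⟩ := InjTensorExact.exists_homDiff_eq (d := d) (f := f ∘ b) (by
    intro E _ _ hE φ hφ
    obtain ⟨ψ, hψ⟩ := h E hE (φ ∘ₗ b.repr) fun a => by simpa [hd] using hφ (b.repr a)
    exact ⟨ψ ∘ₗ b.repr.symm, fun x => by simp [hd, hψ]⟩) (fun i => by simp [hd, d, hDD]) hM (by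
    ext i
    exact (LinearMap.congr_fun hfb (d i)).trans (by simp [d, hf]))
  refine ⟨b.constr ℕ g, LinearMap.congr_fun (?_ : b.constr ℕ g ∘ₗ D = f)⟩
  refine b.ext fun i => (b.constr_apply ℕ g (D (b i))).trans ?_
  exact (homDiff_apply d g i).symm.trans (congrFun hg i)

end BasedComplexes

section PeriodicComplexes

variable {R : Type u} [Ring R]

section Kernel

variable {X : Type u} [AddCommGroup X] [Module R X] {δ : X →ₗ[R] X}

theorem IsShortExact.ker_of_exact (h : Function.Exact δ δ) :
    IsShortExact (LinearMap.ker δ).subtype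
      (δ.codRestrict (LinearMap.ker δ) h.apply_apply_eq_zero) :=
  .mk' (fun _ ha => Subtype.ext ha) (fun a => Subtype.ext a.2)
    (fun b hb => ⟨⟨b, congrArg Subtype.val hb⟩, rfl⟩) fun x =>
      ((h x.1).1 x.2).imp fun _ hy => Subtype.ext hy

theorem ExtVanishes.ker_of_exact [Module.Projective R X] (h : Function.Exact δ δ) {A : Type u}
    [AddCommGroup A] [Module R A]
    (hA : ∀ f : X →ₗ[R] A, (∀ x, f (δ x) = 0) → ∃ g : X →ₗ[R] A, ∀ x, g (δ x) = f x) :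
    ExtVanishes R (LinearMap.ker δ) A := by
  have S := IsShortExact.ker_of_exact h
  refine .of_projective_presentation S fun f => ?_
  obtain ⟨g, hg⟩ := hA (f ∘ₗ δ.codRestrict (LinearMap.ker δ) h.apply_apply_eq_zero) fun x =>
    (congrArg f (Subtype.ext (h.apply_apply_eq_zero x))).trans (map_zero f)
  refine ⟨g, fun k => ?_⟩
  obtain ⟨y, rfl⟩ := S.surjective k
  exact hg y

theorem InjTensorExact.of_isFlat_ker (h : Function.Exact δ δ) (hδ : IsFlat R (LinearMap.ker δ)) :
    InjTensorExact δ δ := by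
  intro E _ _ _ φ hφ
  have S := IsShortExact.ker_of_exact h
  obtain ⟨ψ, hψ⟩ := exists_factor_of_surjective _ S.surjective φ fun a ha => by
    obtain ⟨y, rfl⟩ := (h a).1 (congrArg Subtype.val ha)
    exact hφ y
  obtain ⟨g, hg⟩ := ExtVanishes.charGroup_of_isFlat hδ E _ _ _ _ S ψ
  exact ⟨g, fun b => (hg _).trans (hψ b)⟩

theorem IsPGF.ker_of_exact [Module.Free R X] (h : Function.Exact δ δ) (hδ : InjTensorExact δ δ) :
    IsPGF R (LinearMap.ker δ) := by
  have := Module.Projective.of_free (R := R) (P := X)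
  refine .of_periodic (.ker_of_exact h) fun A hA => .ker_of_exact h fun f hf => ?_
  obtain ⟨A, hA⟩ | ⟨E, hE⟩ := hA
  · exact hδ.exists_extension_of_isFlat h.apply_apply_eq_zero hA hf
  · exact hδ E hE f hf

end Kernel

section Extension

variable {F X P : Type u} [AddCommGroup F] [AddCommGroup X] [AddCommGroup P] [Module R F]
  [Module R X] [Module R P] {j : F →ₗ[R] X} {q : X →ₗ[R] P} {d : F →ₗ[R] F} {δ : X →ₗ[R] X}
  {d' : P →ₗ[R] P}

namespace IsShortExact

theorem exists_mem_ker (S : IsShortExact j q) (hj : ∀ f, δ (j f) = j (d f))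
    (hq : ∀ x, q (δ x) = d' (q x)) (hd : Function.Exact d d) (hδ : ∀ x, δ (δ x) = 0) {x : X}
    (hx : d' (q x) = 0) : ∃ y, δ y = 0 ∧ q y = q x := by
  obtain ⟨f, hf⟩ := S.exists_of_apply_eq_zero ((hq x).trans hx)
  obtain ⟨f, rfl⟩ := (hd f).1 (S.eq_zero_of_apply_eq_zero (by rw [← hj, hf, hδ]))
  exact ⟨x - j f, by rw [map_sub, hj, hf, sub_self], by rw [map_sub, S.apply_apply, sub_zero]⟩

theorem exact_of_exact (S : IsShortExact j q) (hj : ∀ f, δ (j f) = j (d f))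
    (hq : ∀ x, q (δ x) = d' (q x)) (hd : Function.Exact d d) (hδ : Function.Exact δ δ) :
    Function.Exact d' d' := by
  refine fun p => ⟨fun hp => ?_, ?_⟩
  · obtain ⟨x, rfl⟩ := S.surjective p
    obtain ⟨y, hy, hyx⟩ := S.exists_mem_ker hj hq hd hδ.apply_apply_eq_zero hp
    obtain ⟨z, rfl⟩ := (hδ y).1 hy
    exact ⟨q z, (hq z).symm.trans hyx⟩
  · rintro ⟨p, rfl⟩
    obtain ⟨x, rfl⟩ := S.surjective p
    rw [← hq, ← hq, hδ.apply_apply_eq_zero, map_zero]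

theorem ker (S : IsShortExact j q) (hj : ∀ f, δ (j f) = j (d f)) (hq : ∀ x, q (δ x) = d' (q x))
    (hd : Function.Exact d d) (hδ : ∀ x, δ (δ x) = 0) :
    IsShortExact
      (j.restrict fun f (hf : f ∈ LinearMap.ker d) =>
        LinearMap.mem_ker.2 ((hj f).trans ((congrArg j hf).trans (map_zero j))))
      (q.restrict fun x (hx : x ∈ LinearMap.ker δ) =>
        LinearMap.mem_ker.2 ((hq x).symm.trans ((congrArg q hx).trans (map_zero q)))) := by
  refine .mk' (fun a ha => Subtype.ext (S.eq_zero_of_apply_eq_zero (congrArg Subtype.val ha)))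
    (fun a => Subtype.ext (S.apply_apply a.1)) ?_ ?_
  · rintro ⟨b, hb⟩ hqb
    obtain ⟨a, rfl⟩ := S.exists_of_apply_eq_zero (congrArg Subtype.val hqb)
    exact ⟨⟨a, S.eq_zero_of_apply_eq_zero ((hj a).symm.trans hb)⟩, rfl⟩
  · rintro ⟨p, hp⟩
    obtain ⟨x, rfl⟩ := S.surjective p
    obtain ⟨y, hy, hyx⟩ := S.exists_mem_ker hj hq hd hδ hp
    exact ⟨⟨y, hy⟩, Subtype.ext hyx⟩

end IsShortExact

theorem InjTensorExact.of_isShortExact [Module.Projective R P] (S : IsShortExact j q)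
    (hj : ∀ f, δ (j f) = j (d f)) (hq : ∀ x, q (δ x) = d' (q x)) (hd : InjTensorExact d d)
    (hδ : InjTensorExact δ δ) (hδδ : ∀ x, δ (δ x) = 0) : InjTensorExact d' d' := by
  intro E _ _ hE φ hφ
  obtain ⟨Ψ, hΨ⟩ := hδ E hE (φ ∘ₗ q) fun x => (congrArg φ (hq x)).trans (hφ (q x))
  obtain ⟨χ, hχ⟩ := hd E hE (Ψ ∘ₗ j) fun f => by
    rw [LinearMap.comp_apply, ← hj, hΨ, LinearMap.comp_apply, S.apply_apply, map_zero]
  obtain ⟨χ', hχ'⟩ := ExtVanishes.of_projective (C := P) _ _ _ _ S χ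
  obtain ⟨ψ, hψ⟩ := exists_factor_of_surjective q S.surjective (Ψ - χ' ∘ₗ δ) fun x hx => by
    obtain ⟨f, rfl⟩ := S.exists_of_apply_eq_zero hx
    rw [LinearMap.sub_apply, LinearMap.comp_apply, hj, hχ', hχ, LinearMap.comp_apply, sub_self]
  refine ⟨ψ, fun p => ?_⟩
  obtain ⟨x, rfl⟩ := S.surjective p
  rw [← hq, hψ, LinearMap.sub_apply, LinearMap.comp_apply, hδδ, map_zero, sub_zero, hΨ,
    LinearMap.comp_apply]

end Extension

section NullHomotopies

variable {X : Type u} [AddCommGroup X] [Module R X]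

/-- `q` is a chain map to the differential module `(X, δ)` from the complex
`R^(m 0) → R^(m 1) → R^(m 2) → ⋯` with matrices `A n`; it is recorded by the images `q n i` of the
basis vectors. -/
structure IsChainMap (δ : X →ₗ[R] X) {m : ℕ → ℕ} (A : ∀ n, Fin (m n) → Fin (m (n + 1)) → R)
    (q : ∀ n, Fin (m n) → X) : Prop where
  mul_eq_zero : ∀ n i k, ∑ j, A n i j * A (n + 1) j k = 0
  apply_eq : ∀ n i, δ (q n i) = ∑ k, A n i k • q (n + 1) k

/-- Every chain map to `(X, δ)` in the sense of `IsChainMap` is null-homotopic. -/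
def KillsChainMaps (δ : X →ₗ[R] X) : Prop :=
  ∀ (m : ℕ → ℕ) (A : ∀ n, Fin (m n) → Fin (m (n + 1)) → R) (q : ∀ n, Fin (m n) → X),
    IsChainMap δ A q →
      ∃ s : ∀ n, Fin (m n) → X, ∀ n i, δ (s n i) = q n i - ∑ k, A n i k • s (n + 1) k

/-- A finite family of cycles of `(X, δ)` together with finitely many linear relations between its
members. -/
structure RelatedCycles (δ : X →ₗ[R] X) where
  card : ℕ
  cycle : Fin card → X
  apply_cycle : ∀ i, δ (cycle i) = 0
  numRels : ℕ
  rel : Fin numRels → Fin card → R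
  rel_smul_cycle : ∀ l, ∑ i, rel l i • cycle i = 0

/- Flatness writes the cycles as combinations `c` of elements `y` so that `c` absorbs the given
relations; the boundaries of `y` are again cycles, now related by `c`. Iterating gives the complex
`A` and the chain map `q`. -/
theorem IsFlat.exists_isChainMap (hX : IsFlat R X) {δ : X →ₗ[R] X} (hδ : ∀ x, δ (δ x) = 0)
    (Z : RelatedCycles δ) :
    ∃ (m : ℕ → ℕ) (A : ∀ n, Fin (m n) → Fin (m (n + 1)) → R) (q : ∀ n, Fin (m n) → X)
      (c : Fin Z.card → Fin (m 0) → R), IsChainMap δ A q ∧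
      (∀ j, Z.cycle j = ∑ i, c j i • q 0 i) ∧ (∀ l i, ∑ j, Z.rel l j * c j i = 0) ∧
      ∀ j k, ∑ i, c j i * A 0 i k = 0 := by
  choose card coeff elt helt hcoeff using fun Z : RelatedCycles δ =>
    hX.exists_factorization Z.rel Z.cycle Z.rel_smul_cycle
  let next : RelatedCycles δ → RelatedCycles δ := fun Z =>
    { card := card Z
      cycle := fun i => δ (elt Z i)
      apply_cycle := fun i => hδ _
      numRels := Z.card
      rel := coeff Z
      rel_smul_cycle := fun j => by
        rw [← Z.apply_cycle j, helt Z j, map_sum]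
        simp only [map_smul] }
  let seq : ℕ → RelatedCycles δ := fun n => Nat.rec Z (fun _ => next) n
  exact ⟨fun n => card (seq n), fun n => coeff (seq (n + 1)), fun n => elt (seq n), coeff Z,
    ⟨fun n => hcoeff (seq (n + 2)), fun n => helt (seq (n + 1))⟩, helt Z, hcoeff Z,
    hcoeff (seq 1)⟩

namespace KillsChainMaps

variable {δ : X →ₗ[R] X}

theorem exists_lift_cycles (h : KillsChainMaps δ) (hX : IsFlat R X) (hδ : ∀ x, δ (δ x) = 0)
    (Z : RelatedCycles δ) :
    ∃ y : Fin Z.card → X, (∀ j, δ (y j) = Z.cycle j) ∧ ∀ l, ∑ j, Z.rel l j • y j = 0 := by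
  obtain ⟨m, A, q, c, hq, hc, hrel, hcA⟩ := hX.exists_isChainMap hδ Z
  obtain ⟨s, hs⟩ := h m A q hq
  have assoc : ∀ {a b : ℕ} {N : Type u} [AddCommGroup N] [Module R N] (u : Fin a → R)
      (v : Fin a → Fin b → R) (t : Fin b → N),
      ∑ j, u j • ∑ i, v j i • t i = ∑ i, (∑ j, u j * v j i) • t i := fun u v t => by
    simp only [Finset.smul_sum, Finset.sum_smul, mul_smul]
    exact Finset.sum_comm
  refine ⟨fun j => ∑ i, c j i • s 0 i, fun j => ?_, fun l => ?_⟩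
  · simp only [map_sum, map_smul, hs, smul_sub, Finset.sum_sub_distrib, assoc, hcA, zero_smul,
      Finset.sum_const_zero, sub_zero, hc]
  · simp only [assoc, hrel, zero_smul, Finset.sum_const_zero]

theorem exact (h : KillsChainMaps δ) (hX : IsFlat R X) (hδ : ∀ x, δ (δ x) = 0) :
    Function.Exact δ δ := by
  refine fun x => ⟨fun hx => ?_, fun ⟨y, hy⟩ => hy ▸ hδ y⟩
  obtain ⟨y, hy, -⟩ := h.exists_lift_cycles hX hδ
    { card := 1
      cycle := fun _ => x
      apply_cycle := fun _ => hx
      numRels := 0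
      rel := Fin.elim0
      rel_smul_cycle := fun l => l.elim0 }
  exact ⟨y 0, hy 0⟩

theorem isFlat_ker (h : KillsChainMaps δ) (hX : IsFlat R X) (hδ : ∀ x, δ (δ x) = 0) :
    IsFlat R (LinearMap.ker δ) := by
  refine .of_exists_factorization fun m r x hr => ?_
  obtain ⟨y, hyx, hry⟩ : ∃ y : Fin m → X, (∀ j, δ (y j) = (x j).1) ∧
      ∀ _ : Fin 1, ∑ j, r j • y j = 0 := h.exists_lift_cycles hX hδ
    { card := m
      cycle := fun i => (x i).1
      apply_cycle := fun i => (x i).2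
      numRels := 1
      rel := fun _ => r
      rel_smul_cycle := fun _ => by simpa using congrArg Subtype.val hr }
  obtain ⟨n, c, w, hy, hrc⟩ := hX.exists_factorization (fun _ : Fin 1 => r) y hry
  refine ⟨n, c, fun i => ⟨δ (w i), hδ _⟩, fun j => Subtype.ext ?_, hrc 0⟩
  simp [← hyx, hy]

end KillsChainMaps

end NullHomotopies

section Cells

/-- Free generators adjoined to a differential module `F` in order to kill all chain maps in the
sense of `IsChainMap`. The datum `m`, `A`, `x`, `l`, `c`, `a` describes a complex of finitely
generated free modules and a candidate chain map `q` with `q n i = x n i + ∑ t, a n i t • c n i t`;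
the cells `mk m A x l c a n i` are the values of a null-homotopy of `q`. -/
inductive Cell (R F : Type u) : Type u
  | mk (m : ℕ → ℕ) (A : ∀ n, Fin (m n) → Fin (m (n + 1)) → R) (x : ∀ n, Fin (m n) → F)
      (l : ∀ n, Fin (m n) → ℕ) (c : ∀ n i, Fin (l n i) → Cell R F) (a : ∀ n i, Fin (l n i) → R)
      (n : ℕ) (i : Fin (m n)) : Cell R F

variable {F C : Type u} [AddCommGroup F] [Module R F]

/-- The element `x + ∑ t, a t • c t` of the module `F × (C →₀ R)`. -/
noncomputable def cellSum (x : F) {l : ℕ} (c : Fin l → C) (a : Fin l → R) : F × (C →₀ R) :=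
  (x, ∑ t, Finsupp.single (c t) (a t))

/-- The endomorphism of `F × (C →₀ R)` that extends `d` by sending the generator `c` to `b c`. -/
noncomputable def extendDiff (d : F →ₗ[R] F) (b : C → F × (C →₀ R)) :
    F × (C →₀ R) →ₗ[R] F × (C →₀ R) :=
  (LinearMap.inl R F (C →₀ R) ∘ₗ d).coprod (Finsupp.linearCombination R b)

variable (d : F →ₗ[R] F)

theorem extendDiff_inl (b : C → F × (C →₀ R)) (f : F) : extendDiff d b (f, 0) = (d f, 0) := by
  simp [extendDiff]

theorem extendDiff_single (b : C → F × (C →₀ R)) (c : C) :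
    extendDiff d b (0, Finsupp.single c 1) = b c := by
  simp [extendDiff]

theorem extendDiff_cellSum (b : C → F × (C →₀ R)) (x : F) {l : ℕ} (c : Fin l → C)
    (a : Fin l → R) : extendDiff d b (cellSum x c a) = (d x, 0) + ∑ t, a t • b (c t) := by
  simp [extendDiff, cellSum]

open Classical in
/-- The boundary of a cell: the null-homotopy formula if the candidate chain map attached to the
cell is a chain map, and `0` otherwise. -/
noncomputable def Cell.boundary : Cell R F → F × (Cell R F →₀ R)
  | mk m A x l c a n i =>
    if (∀ n i k, ∑ j, A n i j * A (n + 1) j k = 0) ∧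
        ∀ n i, (d (x n i), 0) + ∑ t, a n i t • boundary (c n i t) =
          ∑ k, A n i k • cellSum (x (n + 1) k) (c (n + 1) k) (a (n + 1) k) then
      cellSum (x n i) (c n i) (a n i) -
        ∑ k, A n i k • (0, Finsupp.single (mk m A x l c a (n + 1) k) 1)
    else 0

/-- The differential of the module obtained from `(F, d)` by adjoining all cells. -/
noncomputable def cellDiff : F × (Cell R F →₀ R) →ₗ[R] F × (Cell R F →₀ R) :=
  extendDiff d (Cell.boundary d)

section Boundary

variable {m : ℕ → ℕ} {A : ∀ n, Fin (m n) → Fin (m (n + 1)) → R} {x : ∀ n, Fin (m n) → F}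
  {l : ∀ n, Fin (m n) → ℕ} {c : ∀ n i, Fin (l n i) → Cell R F} {a : ∀ n i, Fin (l n i) → R}

theorem cellDiff_single_mk
    (h : IsChainMap (cellDiff d) A fun n i => cellSum (x n i) (c n i) (a n i)) (n : ℕ)
    (i : Fin (m n)) :
    cellDiff d (0, Finsupp.single (.mk m A x l c a n i) 1) = cellSum (x n i) (c n i) (a n i) -
      ∑ k, A n i k • (0, Finsupp.single (.mk m A x l c a (n + 1) k) 1) := by
  rw [cellDiff, extendDiff_single, Cell.boundary, if_pos]
  exact ⟨h.mul_eq_zero, fun n i => by rw [← extendDiff_cellSum]; exact h.apply_eq n i⟩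

theorem cellDiff_single_mk_of_not
    (h : ¬IsChainMap (cellDiff d) A fun n i => cellSum (x n i) (c n i) (a n i)) (n : ℕ)
    (i : Fin (m n)) : cellDiff d (0, Finsupp.single (.mk m A x l c a n i) 1) = 0 := by
  rw [cellDiff, extendDiff_single, Cell.boundary, if_neg]
  exact fun h' => h ⟨h'.1, fun n i => by rw [cellDiff, extendDiff_cellSum]; exact h'.2 n i⟩

end Boundary

theorem cellDiff_cellDiff (hd : ∀ x, d (d x) = 0) (y : F × (Cell R F →₀ R)) :
    cellDiff d (cellDiff d y) = 0 := by
  suffices cellDiff d ∘ₗ cellDiff d = 0 from LinearMap.congr_fun this y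
  refine LinearMap.prod_ext (LinearMap.ext fun f => ?_)
    (Finsupp.lhom_ext' fun b => LinearMap.ext_ring ?_)
  · exact (congrArg _ (extendDiff_inl d _ f)).trans
      ((extendDiff_inl d _ _).trans (Prod.mk_eq_zero.2 ⟨hd f, rfl⟩))
  obtain ⟨m, A, x, l, c, a, n, i⟩ := b
  change cellDiff d (cellDiff d (0, Finsupp.single _ 1)) = 0
  by_cases h : IsChainMap (cellDiff d) A fun n i => cellSum (x n i) (c n i) (a n i)
  · simp only [cellDiff_single_mk d h, map_sub, map_sum, map_smul, h.apply_eq, smul_sub,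
      Finset.sum_sub_distrib, sub_sub_cancel, Finset.smul_sum, smul_smul]
    rw [Finset.sum_comm]
    simp only [← Finset.sum_smul, h.mul_eq_zero, zero_smul, Finset.sum_const_zero]
  · rw [cellDiff_single_mk_of_not d h, map_zero]

theorem killsChainMaps_cellDiff : KillsChainMaps (cellDiff d) := by
  intro m A q hq
  choose l c a hca using fun n i => exists_eq_sum_single (q n i).2
  obtain ⟨x, rfl⟩ : ∃ x : ∀ n, Fin (m n) → F, q = fun n i => cellSum (x n i) (c n i) (a n i) :=
    ⟨fun n i => (q n i).1, funext₂ fun n i => Prod.ext rfl (hca n i)⟩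
  exact ⟨_, cellDiff_single_mk d hq⟩

end Cells

variable (R) in
/-- `M` embeds in a flat module with projectively coresolved Gorenstein flat cokernel. -/
def HasFlatPGFEmbedding (M : Type u) [AddCommGroup M] [Module R M] : Prop :=
  ∃ (D L : ModuleCat.{u} R) (j : M →ₗ[R] D) (q : D →ₗ[R] L),
    IsFlat R D ∧ IsPGF R L ∧ IsShortExact j q

theorem HasFlatPGFEmbedding.ker {F : Type u} [AddCommGroup F] [Module R F] (hF : IsFlat R F)
    {d : F →ₗ[R] F} (hd : Function.Exact d d) (hdE : InjTensorExact d d) :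
    HasFlatPGFEmbedding R (LinearMap.ker d) := by
  let δ := cellDiff d
  let d' := LinearMap.snd R F (Cell R F →₀ R) ∘ₗ δ ∘ₗ LinearMap.inr R F (Cell R F →₀ R)
  have hX : IsFlat R (F × (Cell R F →₀ R)) := hF.prod (.finsupp (.self R))
  have hδδ : ∀ x, δ (δ x) = 0 := cellDiff_cellDiff d hd.apply_apply_eq_zero
  have hδ : Function.Exact δ δ := (killsChainMaps_cellDiff d).exact hX hδδ
  have hker : IsFlat R (LinearMap.ker δ) := (killsChainMaps_cellDiff d).isFlat_ker hX hδδ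
  have S := IsShortExact.inl_snd R F (Cell R F →₀ R)
  have hj : ∀ f, δ (LinearMap.inl R F _ f) = LinearMap.inl R F _ (d f) := extendDiff_inl d _
  have hq : ∀ x, LinearMap.snd R F _ (δ x) = d' (LinearMap.snd R F _ x) := fun x => by
    simp [δ, d', cellDiff, extendDiff]
  exact ⟨.of R (LinearMap.ker δ), .of R (LinearMap.ker d'), _, _, hker,
    .ker_of_exact (S.exact_of_exact hj hq hd hδ)
      (.of_isShortExact S hj hq hdE (.of_isFlat_ker hδ hker) hδδ), S.ker hj hq hd hδδ⟩

end PeriodicComplexes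

section Swindle

variable {R : Type*} [Ring R] {M A : Type*} [AddCommGroup M] [AddCommGroup A] [Module R M]
  [Module R A]

/- The Eilenberg swindle: with `e = s ∘ r`, the quotient map sends a sequence `x` to the sequence
`k ↦ (1 - e) (x k) + e (x (k + 1))`. -/
theorem IsShortExact.exists_swindle {s : M →ₗ[R] A} {r : A →ₗ[R] M} (h : ∀ m, r (s m) = m) :
    ∃ q : (ℕ →₀ A) →ₗ[R] ℕ →₀ A, IsShortExact (Finsupp.lsingle 0 ∘ₗ s) q := by
  let e := s ∘ₗ r
  have he : ∀ a, e (e a) = e a := fun a => congrArg s (h (r a))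
  let shift := Finsupp.lcomapDomain (R := R) (M := A) Nat.succ Nat.succ_injective
  let q : (ℕ →₀ A) →ₗ[R] ℕ →₀ A :=
    LinearMap.id - Finsupp.mapRange.linearMap e + Finsupp.mapRange.linearMap e ∘ₗ shift
  have hq : ∀ x k, q x k = x k - e (x k) + e (x (k + 1)) := fun x k => rfl
  refine ⟨q, .mk' (fun m hm => ?_) (fun m => Finsupp.ext fun k => ?_) (fun x hx => ?_)
    fun y => ?_⟩
  · rw [← h m, Finsupp.single_eq_zero.1 hm, map_zero]
  · rw [hq]
    cases k <;> simp [e, h]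
  · have hx' : ∀ k, x k - e (x k) + e (x (k + 1)) = 0 := fun k => DFunLike.congr_fun hx k
    have hsucc : ∀ k, e (x (k + 1)) = 0 := fun k => by
      simpa only [map_add, map_sub, he, sub_self, zero_add, map_zero] using congrArg e (hx' k)
    have hfix : ∀ k, x k = e (x k) := fun k => by
      simpa only [hsucc, add_zero, sub_eq_zero] using hx' k
    refine ⟨r (x 0), Finsupp.ext fun k => ?_⟩
    cases k with
    | zero => exact Finsupp.single_eq_same.trans (hfix 0).symm
    | succ k => simpa using ((hfix _).trans (hsucc k)).symm
  · refine ⟨y - y.mapRange e (map_zero e) + (y.mapRange e (map_zero e)).mapDomain Nat.succ,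
      Finsupp.ext fun k => ?_⟩
    have hsucc : ∀ k, (y.mapRange e (map_zero e)).mapDomain Nat.succ (k + 1) = e (y k) := fun k =>
      Finsupp.mapDomain_apply Nat.succ_injective _ k
    rw [hq]
    cases k with
    | zero =>
      have hzero : (y.mapRange e (map_zero e)).mapDomain Nat.succ 0 = 0 :=
        Finsupp.mapDomain_of_notMem_range _ _ (by simp)
      simp [hsucc, hzero, he]
    | succ k => simp [hsucc, he]

end Swindle

section FlatPGFEmbedding

variable {R : Type u} [Ring R]

/-- A commutative square
```
M --f--> A
|s       |ι
K --κ--> G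
```
whose columns are embeddings into flat modules with PGF cokernels `N` and `L`, and whose bottom row
is an embedding with flat cokernel `D`. It is a flat replacement of the map `f`. -/
structure FlatPGFSquare {M A : Type u} [AddCommGroup M] [AddCommGroup A] [Module R M] [Module R A]
    (f : M →ₗ[R] A) where
  (K G D N L : ModuleCat.{u} R)
  (s : M →ₗ[R] K) (p : K →ₗ[R] N)
  (ι : A →ₗ[R] G) (l : G →ₗ[R] L)
  (κ : K →ₗ[R] G) (g : G →ₗ[R] D)
  flat_K : IsFlat R K
  flat_G : IsFlat R G
  flat_D : IsFlat R D
  pgf_N : IsPGF R N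
  pgf_L : IsPGF R L
  exact_left : IsShortExact s p
  exact_right : IsShortExact ι l
  exact_bottom : IsShortExact κ g
  comm : ∀ m, κ (s m) = ι (f m)

namespace HasFlatPGFEmbedding

variable {M A B : Type u} [AddCommGroup M] [AddCommGroup A] [AddCommGroup B] [Module R M]
  [Module R A] [Module R B]

theorem equiv (h : HasFlatPGFEmbedding R A) (e : B ≃ₗ[R] A) : HasFlatPGFEmbedding R B := by
  obtain ⟨D, L, j, q, hD, hL, S⟩ := h
  exact ⟨D, L, _, q, hD, hL, S.comp_equiv e⟩

theorem nonempty_flatPGFSquare {j : M →ₗ[R] A} {q : A →ₗ[R] B} (S : IsShortExact j q)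
    (hA : HasFlatPGFEmbedding R A) (hB : HasFlatPGFEmbedding R B) :
    Nonempty (FlatPGFSquare j) := by
  obtain ⟨D, L, jA, qA, hD, hL, SA⟩ := hA
  obtain ⟨D', L', jB, qB, hD', hL', SB⟩ := hB
  obtain ⟨g, hg⟩ := hL.ext_of_isFlat hD' _ _ _ _ SA (jB ∘ₗ q)
  let G : D × (D' →₀ R) →ₗ[R] D' := g.coprod (Finsupp.linearCombination R id)
  have hG : Function.Surjective G := fun d =>
    (Finsupp.linearCombination_id_surjective R D' d).imp' (Prod.mk 0) fun p hp => by simp [G, hp]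
  have hGj : ∀ a, jB (q a) = G (jA a, 0) := fun a => by simp [G, hg]
  let s : M →ₗ[R] LinearMap.ker G :=
    (LinearMap.inl R D (D' →₀ R) ∘ₗ jA ∘ₗ j).codRestrict _ fun m =>
      (hGj (j m)).symm.trans (by rw [S.apply_apply, map_zero])
  have SA' := SA.inl_comp (D' →₀ R)
  have hs : Function.Injective s := fun a b hab =>
    S.injective (SA'.injective (congrArg Subtype.val hab))
  have SG := IsShortExact.of_surjective G hG
  have Ss := IsShortExact.of_injective (B := LinearMap.ker G) s hs
  have hDP := hD.prod (.finsupp (B := D') (.self R))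
  have hLP := hL.prod (.of_free (C := D' →₀ R))
  obtain ⟨_, _, T, -⟩ := S.nineLemma_coker SG Ss SA' SB (fun _ => rfl) hGj
  exact ⟨{
    K := .of R (LinearMap.ker G)
    G := .of R (D × (D' →₀ R))
    D := D'
    N := .of R _
    L := .of R (L × (D' →₀ R))
    s := s
    p := _
    ι := _
    l := _
    κ := (LinearMap.ker G).subtype
    g := G
    flat_K := .of_kernel SG hDP hD'
    flat_G := hDP
    flat_D := hD'
    pgf_N := .of_kernel T hLP hL'
    pgf_L := hLP
    exact_left := Ss
    exact_right := SA'
    exact_bottom := SG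
    comm := fun _ => rfl }⟩

theorem of_kernel {j : M →ₗ[R] A} {q : A →ₗ[R] B} (S : IsShortExact j q)
    (hA : HasFlatPGFEmbedding R A) (hB : HasFlatPGFEmbedding R B) : HasFlatPGFEmbedding R M :=
  have ⟨c⟩ := hA.nonempty_flatPGFSquare S hB
  ⟨c.K, c.N, c.s, c.p, c.flat_K, c.pgf_N, c.exact_left⟩

theorem directSum {ι : Type u} {N : ι → Type u} [∀ i, AddCommGroup (N i)] [∀ i, Module R (N i)]
    (h : ∀ i, HasFlatPGFEmbedding R (N i)) : HasFlatPGFEmbedding R (⨁ i, N i) := by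
  choose D L j q hD hL S using h
  exact ⟨.of R (⨁ i, D i), .of R (⨁ i, L i), _, _, .directSum hD, .directSum hL, .directSum S⟩

theorem retract (hA : HasFlatPGFEmbedding R A) {s : M →ₗ[R] A} {r : A →ₗ[R] M}
    (h : ∀ m, r (s m) = m) : HasFlatPGFEmbedding R M := by
  classical
  obtain ⟨q, S⟩ := IsShortExact.exists_swindle h
  have hsum : HasFlatPGFEmbedding R (ℕ →₀ A) :=
    (directSum fun _ : ULift.{u} ℕ => hA).equiv <|
      (Finsupp.domLCongr Equiv.ulift.symm).trans (finsuppLEquivDirectSum R A (ULift.{u} ℕ))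
  exact .of_kernel S hsum hsum

end HasFlatPGFEmbedding

section Total

variable {ι : Type u} {σ : Equiv.Perm ι} {F : ι → Type u} [∀ i, AddCommGroup (F i)]
  [∀ i, Module R (F i)] {d : ∀ i, F i →ₗ[R] F (σ i)}

open Classical in
/-- The differential on the direct sum of a family of modules induced by a family of maps of
"degree" `σ`, where `σ` permutes the index set. -/
noncomputable def totalDiff (d : ∀ i, F i →ₗ[R] F (σ i)) : (⨁ i, F i) →ₗ[R] ⨁ i, F i :=
  DirectSum.toModule R ι _ fun i => DirectSum.lof R ι F (σ i) ∘ₗ d i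

open Classical in
theorem totalDiff_lof (i : ι) (x : F i) :
    totalDiff d (DirectSum.lof R ι F i x) = DirectSum.lof R ι F (σ i) (d i x) := by
  rw [totalDiff, DirectSum.toModule_lof, LinearMap.comp_apply]

theorem totalDiff_apply (x : ⨁ i, F i) (i : ι) : totalDiff d x (σ i) = d i (x i) := by
  classical
  suffices DirectSum.component R ι F (σ i) ∘ₗ totalDiff d = d i ∘ₗ DirectSum.component R ι F i from
    LinearMap.congr_fun this x
  refine DirectSum.linearMap_ext R fun k => LinearMap.ext fun y => ?_
  simp only [LinearMap.comp_apply, totalDiff_lof]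
  obtain rfl | h := eq_or_ne k i
  · rw [DirectSum.component.lof_self, DirectSum.component.lof_self]
  · rw [DirectSum.component.of, DirectSum.component.of, dif_neg h, map_zero,
      dif_neg (σ.injective.ne h)]

theorem totalDiff_eq_zero_iff {x : ⨁ i, F i} : totalDiff d x = 0 ↔ ∀ i, d i (x i) = 0 := by
  refine ⟨fun h i => ?_, fun h => DFinsupp.ext fun i => ?_⟩
  · rw [← totalDiff_apply, h, DirectSum.zero_apply]
  · obtain ⟨i, rfl⟩ := σ.surjective i
    exact (totalDiff_apply x i).trans (h i)

theorem exact_totalDiff (hd : ∀ i, Function.Exact (d i) (d (σ i))) :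
    Function.Exact (totalDiff d) (totalDiff d) := by
  classical
  refine fun x => ⟨fun hx => ?_, ?_⟩
  · rw [← DirectSum.sum_support_of x]
    refine Submodule.sum_mem (LinearMap.range (totalDiff d)) fun i _ => ?_
    obtain ⟨i, rfl⟩ := σ.surjective i
    obtain ⟨y, hy⟩ := (hd i _).1 (totalDiff_eq_zero_iff.1 hx (σ i))
    exact ⟨DirectSum.lof R ι F i y, (totalDiff_lof i y).trans (congrArg _ hy)⟩
  · rintro ⟨y, rfl⟩
    refine totalDiff_eq_zero_iff.2 fun i => ?_
    obtain ⟨i, rfl⟩ := σ.surjective i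
    rw [totalDiff_apply, (hd i).apply_apply_eq_zero]

theorem injTensorExact_totalDiff (hd : ∀ i, InjTensorExact (d i) (d (σ i))) :
    InjTensorExact (totalDiff d) (totalDiff d) := by
  classical
  intro E _ _ hE φ hφ
  have hext : ∀ i, ∃ ψ : F i →ₗ[R] CharGroup E, ∀ k, σ k = i → ∀ x : F k,
      ψ (totalDiff d (DirectSum.lof R ι F k x) i) = φ (DirectSum.lof R ι F k x) := by
    intro i
    obtain ⟨i, rfl⟩ := σ.surjective i
    obtain ⟨i, rfl⟩ := σ.surjective i
    obtain ⟨ψ, hψ⟩ := hd i E hE (φ ∘ₗ DirectSum.lof R ι F (σ i)) fun x => by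
      rw [LinearMap.comp_apply, ← totalDiff_lof, hφ]
    refine ⟨ψ, fun k hk => ?_⟩
    obtain rfl := σ.injective hk
    intro x
    rw [totalDiff_apply]
    exact (congrArg (fun y => ψ (d _ y)) (DirectSum.component.lof_self R _ x)).trans (hψ x)
  choose ψ hψ using hext
  suffices h : DirectSum.toModule R ι _ ψ ∘ₗ totalDiff d = φ from
    ⟨DirectSum.toModule R ι _ ψ, LinearMap.congr_fun h⟩
  refine DirectSum.linearMap_ext R fun i => LinearMap.ext fun x => ?_
  simp only [LinearMap.comp_apply, ← hψ (σ i) i rfl, totalDiff_lof, DirectSum.toModule_lof]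
  exact congrArg _ (DirectSum.component.lof_self R (σ i) (d i x)).symm

theorem HasFlatPGFEmbedding.ker_of_family (hF : ∀ i, IsFlat R (F i))
    (hd : ∀ i, Function.Exact (d i) (d (σ i))) (hdE : ∀ i, InjTensorExact (d i) (d (σ i)))
    (i : ι) : HasFlatPGFEmbedding R (LinearMap.ker (d i)) := by
  classical
  have hker := HasFlatPGFEmbedding.ker (.directSum hF) (exact_totalDiff hd)
    (injTensorExact_totalDiff hdE)
  refine hker.retract
    (s := (DirectSum.lof R ι F i).restrict fun x hx => ?_)
    (r := (DirectSum.component R ι F i).restrict fun x hx => totalDiff_eq_zero_iff.1 hx i)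
    fun x => Subtype.ext (DirectSum.component.lof_self R i x.1)
  rw [LinearMap.mem_ker, totalDiff_lof, LinearMap.mem_ker.1 hx, map_zero]

end Total

theorem IsGorensteinFlatModule.hasFlatPGFEmbedding {M : ModuleCat.{u} R}
    (h : IsGorensteinFlatModule R M) : HasFlatPGFEmbedding R M := by
  obtain ⟨F, d, hF, hd, ⟨e⟩, hdE⟩ := h
  let σ : Equiv.Perm (ULift.{u} ℤ) := Equiv.ulift.trans ((Equiv.addRight 1).trans Equiv.ulift.symm)
  refine (HasFlatPGFEmbedding.ker_of_family (σ := σ) (F := fun i => F i.down)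
    (d := fun i => (d i.down).hom) (fun i => isFlatModule_iff.1 (hF i.down))
    (fun i => hd i.down) (fun i => ?_) ⟨0⟩).equiv e
  intro E _ _ hE
  exact (NcTensor.map_exact_iff (hd i.down).apply_apply_eq_zero).1
    (hdE (.of _ E) ((Module.injective_iff_injective_object _ _).1 hE) i.down)

end FlatPGFEmbedding

section GorensteinFlat

theorem exists_int_sequence {α : Type*} {r : α → α → Prop} (hr : ∀ a, ∃ b, r a b)
    (hl : ∀ a, ∃ b, r b a) (x : α) : ∃ z : ℤ → α, z 0 = x ∧ ∀ n, r (z n) (z (n + 1)) := by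
  choose f hf using hr
  choose g hg using hl
  exact ⟨Int.rec (Nat.rec x fun _ => f) (Nat.rec (g x) fun _ => g), rfl, fun
    | .ofNat _ => hf _
    | .negSucc 0 => hg x
    | .negSucc (_ + 1) => hg _⟩

variable {R : Type u} [Ring R]

/- The differentials of the spliced complex are `j (n + 1) ∘ q n`. -/
theorem IsGorensteinFlatModule.of_isShortExact {K F : ℤ → ModuleCat.{u} R}
    {j : ∀ n, K n →ₗ[R] F n} {q : ∀ n, F n →ₗ[R] K (n + 1)}
    (S : ∀ n, IsShortExact (j n) (q n)) (hF : ∀ n, IsFlat R (F n))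
    (hK : ∀ n (E : Type u) [AddCommGroup E] [Module Rᵐᵒᵖ E], Module.Injective Rᵐᵒᵖ E →
      ExtVanishes R (K n) (CharGroup E)) : IsGorensteinFlatModule R (K 0) := by
  have hker : ∀ n x, j (n + 1) (q n x) = 0 ↔ ∃ k, j n k = x := fun n x =>
    ⟨fun h => (S n).exists_of_apply_eq_zero ((S (n + 1)).eq_zero_of_apply_eq_zero h), by
      rintro ⟨k, rfl⟩
      rw [(S n).apply_apply, map_zero]⟩
  have hd : ∀ n, Function.Exact (j (n + 1) ∘ₗ q n) (j (n + 1 + 1) ∘ₗ q (n + 1)) := fun n x =>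
    (hker (n + 1) x).trans ((S n).surjective.exists)
  refine ⟨F, fun n => ModuleCat.ofHom (j (n + 1) ∘ₗ q n), fun n => isFlatModule_iff.2 (hF n), hd,
    ⟨.ofBijective ((j 0).codRestrict _ fun k => (hker 0 _).2 ⟨k, rfl⟩) ⟨fun a b h =>
      (S 0).injective (congrArg Subtype.val h), fun x =>
      ((hker 0 x).1 x.2).imp fun k hk => Subtype.ext hk⟩⟩, fun E hE n => ?_⟩
  refine (NcTensor.map_exact_iff (hd n).apply_apply_eq_zero).2 fun φ hφ => ?_
  obtain ⟨ψ, hψ⟩ := exists_factor_of_surjective (q (n + 1)) (S (n + 1)).surjective φ fun x hx => by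
    obtain ⟨k, rfl⟩ := (S (n + 1)).exists_of_apply_eq_zero hx
    obtain ⟨y, rfl⟩ := (S n).surjective k
    exact hφ y
  obtain ⟨φ', hφ'⟩ := hK _ E ((Module.injective_iff_injective_object _ _).2 hE) _ _ _ _
    (S (n + 1 + 1)) ψ
  exact ⟨φ', fun x => (hφ' _).trans (hψ x)⟩

theorem IsFlatModule.isGorensteinFlatModule {M : ModuleCat.{u} R} (h : IsFlatModule R M) :
    IsGorensteinFlatModule R M := by
  have hM := isFlatModule_iff.1 h
  exact .of_isShortExact (K := fun _ => M) (F := fun _ => .of R (M × M))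
    (fun _ => .inl_snd R M M) (fun _ => hM.prod hM) fun _ E _ _ _ => .charGroup_of_isFlat hM E

theorem IsPGF.isGorensteinFlatModule {M : ModuleCat.{u} R} (h : IsPGF R M) :
    IsGorensteinFlatModule R M := by
  let r : {X : ModuleCat.{u} R // IsPGF R X} → {X : ModuleCat.{u} R // IsPGF R X} → Prop :=
    fun X Y => ∃ (P : ModuleCat.{u} R) (j : X.1 →ₗ[R] P) (q : P →ₗ[R] Y.1),
      Module.Free R P ∧ IsShortExact j q
  obtain ⟨Z, hZ, hr⟩ := exists_int_sequence (r := r)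
    (fun X =>
      have ⟨P, Y, j, q, hP, S, hY⟩ := X.2.exists_coresolution
      ⟨⟨Y, hY⟩, P, j, q, hP, S⟩)
    (fun X =>
      have ⟨P, Y, j, q, hP, S, hY⟩ := X.2.exists_resolution
      ⟨⟨Y, hY⟩, P, j, q, hP, S⟩) ⟨M, h⟩
  choose P j q hP S using hr
  obtain rfl : (Z 0).1 = M := congrArg Subtype.val hZ
  exact .of_isShortExact S (fun n => .of_free) fun n E _ _ hE =>
    (Z n).2.ext _ (.charGroup (.of _ E) hE)

end GorensteinFlat

section VertexExtension

variable {R : Type u} [Ring R]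

theorem IsPGF.isFlat_of_isShortExact {A B C : Type u} [AddCommGroup A] [AddCommGroup B]
    [AddCommGroup C] [Module R A] [Module R B] [Module R C] {j : A →ₗ[R] B} {q : B →ₗ[R] C}
    (hC : IsPGF R C) (S : IsShortExact j q) (hA : IsFlat R A) (hB : IsFlat R B) : IsFlat R C := by
  obtain ⟨r, hr⟩ := hC.ext_of_isFlat hA _ _ _ _ S LinearMap.id
  have hsplit := (S.exact.split_tfae S.injective S.surjective).out 0 1
  obtain ⟨s, hs⟩ := hsplit.2 ⟨r, LinearMap.ext hr⟩
  exact hB.retract s q (LinearMap.congr_fun hs)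

variable {T L M N : Type u} [AddCommGroup T] [AddCommGroup L] [AddCommGroup M] [AddCommGroup N]
  [Module R T] [Module R L] [Module R M] [Module R N] {μ : T →ₗ[R] M} {ν : M →ₗ[R] N}

/- The cokernel is the pushout of `ν` along `σ`, hence an extension of `N` by `L`. -/
theorem IsShortExact.exists_isPGF_coker_prod (S : IsShortExact μ ν) (σ : T →ₗ[R] L)
    (hL : IsPGF R L) (hN : IsPGF R N) :
    ∃ (C : ModuleCat.{u} R) (r : L × M →ₗ[R] C), IsPGF R C ∧ IsShortExact (σ.prod μ) r := by
  have hinj : Function.Injective (σ.prod μ) := fun _ _ h => S.injective (Prod.ext_iff.1 h).2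
  obtain ⟨_, _, S', -⟩ := (zero_id R T PUnit.{u + 1}).nineLemma_coker (.inl_snd R L M)
    (.zero_id R L PUnit.{u + 1}) (.of_injective _ hinj) S
    (fun _ => by rw [LinearMap.zero_apply, LinearMap.zero_apply, map_zero, map_zero]) fun _ => rfl
  exact ⟨.of R _, _, .of_extension S' hL hN, .of_injective _ hinj⟩

namespace FlatPGFSquare

variable {A X TG : Type u} [AddCommGroup A] [AddCommGroup X] [AddCommGroup TG]
  [Module R A] [Module R X] [Module R TG] {f : X →ₗ[R] A} {a : X →ₗ[R] TG} {b : TG →ₗ[R] T}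

theorem isFlat_coker_prod (c : FlatPGFSquare f) (S : IsShortExact a b) (hTG : IsFlat R TG)
    {τ : TG →ₗ[R] c.K} (hτ : ∀ x, τ (a x) = c.s x) (Sμ : IsShortExact μ ν) (hM : IsFlat R M)
    (hN : IsPGF R N) : ∃ (C : ModuleCat.{u} R) (r : c.G × M →ₗ[R] C),
      IsFlat R C ∧ IsShortExact ((c.κ ∘ₗ τ).prod (μ ∘ₗ b)) r := by
  let θ : TG →ₗ[R] c.K × M := τ.prod (μ ∘ₗ b)
  have hθa : ∀ x, θ (a x) = LinearMap.inl R c.K M (c.s x) := fun x => by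
    simp [θ, hτ, S.apply_apply]
  have hθ : ∀ t, θ t = 0 → t = 0 := fun t ht => by
    obtain ⟨x, rfl⟩ := S.exists_of_apply_eq_zero (Sμ.eq_zero_of_apply_eq_zero (Prod.ext_iff.1 ht).2)
    rw [c.exact_left.eq_zero_of_apply_eq_zero ((hτ x).symm.trans (Prod.ext_iff.1 ht).1), map_zero]
  have Sθ := IsShortExact.of_injective θ ((injective_iff_map_eq_zero _).2 hθ)
  have SK := c.exact_bottom.prodMap_id M
  obtain ⟨_, _, SZ, -⟩ := S.nineLemma_coker (.inl_snd R c.K M) c.exact_left Sθ Sμ hθa fun _ => rfl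
  have hZ := (IsPGF.of_extension SZ c.pgf_N hN).isFlat_of_isShortExact Sθ hTG (c.flat_K.prod hM)
  obtain ⟨_, _, SC⟩ := Sθ.exists_coker_comp SK
  exact ⟨.of R _, _, .of_extension SC hZ c.flat_D,
    .of_injective _ (SK.injective.comp Sθ.injective)⟩

theorem exists_extension (c : FlatPGFSquare f) (S : IsShortExact a b) (hTG : IsFlat R TG)
    (hT : IsPGF R T) : ∃ θ : TG →ₗ[R] c.G, (∀ x, θ (a x) = c.ι (f x)) ∧
      ∀ {M N : ModuleCat.{u} R} {μ : T →ₗ[R] M} {ν : M →ₗ[R] N}, IsShortExact μ ν →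
        IsFlat R M → IsPGF R N → ∃ (C : ModuleCat.{u} R) (r : c.G × M →ₗ[R] C),
          IsFlat R C ∧ IsShortExact (θ.prod (μ ∘ₗ b)) r := by
  obtain ⟨τ, hτ⟩ := hT.ext_of_isFlat c.flat_K _ _ _ _ S c.s
  exact ⟨c.κ ∘ₗ τ, fun x => (congrArg c.κ (hτ x)).trans (c.comm x),
    fun Sμ hM hN => c.isFlat_coker_prod S hTG hτ Sμ hM hN⟩

end FlatPGFSquare

end VertexExtension

section Cylinder

variable {R : Type u} [Ring R] {V : Type u} [Quiver.{u} V]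

/-- The source `⨁_{a : j ⟶ i} G j` of the canonical homomorphism `φ_i` of a representation with
underlying family of modules `G`. A representation amounts to a family of linear maps
`Incoming G i →ₗ[R] G i`, and a morphism to a family of linear maps compatible with these. -/
abbrev Incoming (G : V → Type u) [∀ i, AddCommGroup (G i)] (i : V) : Type u :=
  ⨁ p : Σ j : V, j ⟶ i, G p.1

/-- The value at `i` of the representation freely generated by the family of modules `M`: the
direct sum of the `M k` over all paths `k → i`. -/
abbrev FreeRep (M : V → Type u) [∀ i, AddCommGroup (M i)] (i : V) : Type u :=
  ⨁ p : Σ k : V, Quiver.Path k i, M p.1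

variable {G H : V → Type u} [∀ i, AddCommGroup (G i)] [∀ i, AddCommGroup (H i)]
  [∀ i, Module R (G i)] [∀ i, Module R (H i)]

namespace Incoming

open Classical in
variable (R G) in
/-- The inclusion of the summand indexed by an arrow. -/
noncomputable def of {j i : V} (a : j ⟶ i) : G j →ₗ[R] Incoming G i :=
  DirectSum.lof R (Σ j : V, j ⟶ i) (fun p => G p.1) ⟨j, a⟩

/-- The functorial action of `Incoming` on families of linear maps. -/
noncomputable def map (f : ∀ i, G i →ₗ[R] H i) (i : V) : Incoming G i →ₗ[R] Incoming H i :=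
  DirectSum.lmap fun p : Σ j : V, j ⟶ i => f p.1

open Classical in
@[ext]
theorem hom_ext {N : Type*} [AddCommGroup N] [Module R N] {i : V} {f g : Incoming G i →ₗ[R] N}
    (h : ∀ j (a : j ⟶ i), f ∘ₗ of R G a = g ∘ₗ of R G a) : f = g :=
  DirectSum.linearMap_ext R fun p => h p.1 p.2

open Classical in
/-- The map out of `Incoming G i` with prescribed components. -/
noncomputable def desc {N : Type*} [AddCommGroup N] [Module R N] {i : V}
    (f : ∀ ⦃j⦄, (j ⟶ i) → G j →ₗ[R] N) : Incoming G i →ₗ[R] N :=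
  DirectSum.toModule R (Σ j : V, j ⟶ i) N fun p => f p.2

open Classical in
@[simp]
theorem desc_of {N : Type*} [AddCommGroup N] [Module R N] {i : V}
    (f : ∀ ⦃j⦄, (j ⟶ i) → G j →ₗ[R] N) {j : V} (a : j ⟶ i) (x : G j) :
    desc f (of R G a x) = f a x := by
  simp [desc, of]

open Classical in
@[simp]
theorem map_of (f : ∀ i, G i →ₗ[R] H i) {j i : V} (a : j ⟶ i) (x : G j) :
    map f i (of R G a x) = of R H a (f j x) :=
  DirectSum.lmap_lof _ _ _

theorem isShortExact_map {K : V → Type u} [∀ i, AddCommGroup (K i)] [∀ i, Module R (K i)]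
    {f : ∀ i, G i →ₗ[R] H i} {g : ∀ i, H i →ₗ[R] K i} (S : ∀ i, IsShortExact (f i) (g i)) (i : V) :
    IsShortExact (map f i) (map g i) :=
  .directSum fun p : Σ j : V, j ⟶ i => S p.1

end Incoming

namespace FreeRep

variable {M : V → Type u} [∀ i, AddCommGroup (M i)] [∀ i, Module R (M i)]

open Classical in
variable (R M) in
/-- The inclusion of the summand indexed by a path. -/
noncomputable def of {k i : V} (p : Quiver.Path k i) : M k →ₗ[R] FreeRep M i :=
  DirectSum.lof R (Σ k : V, Quiver.Path k i) (fun p => M p.1) ⟨k, p⟩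

open Classical in
theorem hom_ext {N : Type*} [AddCommGroup N] [Module R N] {i : V} {f g : FreeRep M i →ₗ[R] N}
    (h : ∀ k (p : Quiver.Path k i), f ∘ₗ of R M p = g ∘ₗ of R M p) : f = g :=
  DirectSum.linearMap_ext R fun p => h p.1 p.2

open Classical in
/-- The map out of `FreeRep M i` with prescribed components. -/
noncomputable def desc {N : Type*} [AddCommGroup N] [Module R N] {i : V}
    (f : ∀ ⦃k⦄, Quiver.Path k i → M k →ₗ[R] N) : FreeRep M i →ₗ[R] N :=
  DirectSum.toModule R (Σ k : V, Quiver.Path k i) N fun p => f p.2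

open Classical in
@[simp]
theorem desc_of {N : Type*} [AddCommGroup N] [Module R N] {i : V}
    (f : ∀ ⦃k⦄, Quiver.Path k i → M k →ₗ[R] N) {k : V} (p : Quiver.Path k i) (x : M k) :
    desc f (of R M p x) = f p x := by
  simp [desc, of]

variable (R M) in
/-- The structure maps of the free representation, which append an arrow to a path. -/
noncomputable def act (i : V) : Incoming (FreeRep M) i →ₗ[R] FreeRep M i :=
  Incoming.desc fun _ a => desc fun _ p => of R M (p.cons a)

variable (R M) in
/-- The inclusion of the summand indexed by the trivial path. -/
noncomputable abbrev unit (i : V) : M i →ₗ[R] FreeRep M i :=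
  of R M .nil

variable (R M) in
/-- The component at a path of the projection onto the summand of the trivial path. -/
def pathProj : ∀ {k i : V}, Quiver.Path k i → M k →ₗ[R] M i
  | _, _, .nil => .id
  | _, _, .cons _ _ => 0

variable (R M) in
/-- The component at a path of the map splitting off its last arrow. -/
noncomputable def pathUncons : ∀ {k i : V}, Quiver.Path k i → M k →ₗ[R] Incoming (FreeRep M) i
  | _, _, .nil => 0
  | _, _, .cons p a => Incoming.of R (FreeRep M) a ∘ₗ of R M p

variable (R M) in
/-- The projection onto the summand indexed by the trivial path. -/
noncomputable def proj (i : V) : FreeRep M i →ₗ[R] M i :=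
  desc fun _ p => pathProj R M p

variable (R M) in
/-- The retraction of `act`, splitting off the last arrow of a nontrivial path. -/
noncomputable def uncons (i : V) : FreeRep M i →ₗ[R] Incoming (FreeRep M) i :=
  desc fun _ p => pathUncons R M p

@[simp]
theorem act_of {j i : V} (a : j ⟶ i) {k : V} (p : Quiver.Path k j) (x : M k) :
    act R M i (Incoming.of R (FreeRep M) a (of R M p x)) = of R M (p.cons a) x := by
  rw [act, Incoming.desc_of, desc_of]

@[simp]
theorem proj_unit (i : V) (m : M i) : proj R M i (unit R M i m) = m :=
  desc_of _ _ _

theorem proj_act (i : V) (z : Incoming (FreeRep M) i) : proj R M i (act R M i z) = 0 := by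
  suffices proj R M i ∘ₗ act R M i = 0 from LinearMap.congr_fun this z
  refine Incoming.hom_ext fun j a => hom_ext fun k p => LinearMap.ext fun x => ?_
  simp [proj, pathProj]

theorem uncons_act (i : V) (z : Incoming (FreeRep M) i) : uncons R M i (act R M i z) = z := by
  suffices uncons R M i ∘ₗ act R M i = .id from LinearMap.congr_fun this z
  refine Incoming.hom_ext fun j a => hom_ext fun k p => LinearMap.ext fun x => ?_
  simp [uncons, pathUncons]

theorem unit_proj_add_act_uncons (i : V) (w : FreeRep M i) :
    unit R M i (proj R M i w) + act R M i (uncons R M i w) = w := by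
  suffices unit R M i ∘ₗ proj R M i + act R M i ∘ₗ uncons R M i = .id from
    LinearMap.congr_fun this w
  refine hom_ext fun k p => LinearMap.ext fun x => ?_
  cases p <;> simp [proj, pathProj, uncons, pathUncons]

variable (R M) in
theorem isShortExact_act_proj (i : V) : IsShortExact (act R M i) (proj R M i) where
  injective := Function.LeftInverse.injective (uncons_act i)
  exact w := ⟨fun hw => ⟨uncons R M i w, by
    simpa only [hw, map_zero, zero_add] using unit_proj_add_act_uncons (R := R) i w⟩, by
      rintro ⟨z, rfl⟩
      exact proj_act i z⟩
  surjective m := ⟨unit R M i m, proj_unit i m⟩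

end FreeRep

theorem IsShortExact.cylinder {T T' G M F C : Type*} [AddCommGroup T] [AddCommGroup T']
    [AddCommGroup G] [AddCommGroup M] [AddCommGroup F] [AddCommGroup C] [Module R T] [Module R T']
    [Module R G] [Module R M] [Module R F] [Module R C] {θ : T →ₗ[R] G} {μ : T →ₗ[R] M}
    {r : G × M →ₗ[R] C} (S : IsShortExact (θ.prod μ) r) {α : T' →ₗ[R] F} {π : F →ₗ[R] M}
    (S' : IsShortExact α π) {e : M →ₗ[R] F} (he : ∀ m, π (e m) = m) :
    IsShortExact ((θ.prod (e ∘ₗ μ)).coprod (LinearMap.inr R G F ∘ₗ α))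
      (r ∘ₗ LinearMap.id.prodMap π) := by
  have hπ : ∀ z, LinearMap.id.prodMap π ((θ.prod (e ∘ₗ μ)).coprod (LinearMap.inr R G F ∘ₗ α) z) =
      θ.prod μ z.1 := fun z => by simp [he, S'.apply_apply]
  refine .mk' (fun ⟨t, z⟩ h => ?_) (fun z => ?_) (fun ⟨g, w⟩ h => ?_) ?_
  · obtain rfl : t = 0 := S.eq_zero_of_apply_eq_zero (by rw [← hπ (t, z), h, map_zero])
    have hz : α z = 0 := by simpa using (Prod.ext_iff.1 h).2
    rw [S'.eq_zero_of_apply_eq_zero hz, Prod.mk_zero_zero]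
  · rw [LinearMap.comp_apply, hπ, S.apply_apply]
  · obtain ⟨t, ht⟩ := S.exists_of_apply_eq_zero (b := (g, π w)) h
    obtain ⟨hθ, hμ⟩ := Prod.ext_iff.1 ht
    obtain ⟨z, hz⟩ := S'.exists_of_apply_eq_zero (b := w - e (π w)) (by simp [he])
    exact ⟨(t, z), Prod.ext (by simpa using hθ) (by simp [hz, show μ t = π w from hμ])⟩
  · exact S.surjective.comp (Function.surjective_id.prodMap S'.surjective)

variable {M : V → Type u} [∀ i, AddCommGroup (M i)] [∀ i, Module R (M i)]

variable (R G H) in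
/-- `Incoming` commutes with binary products. -/
noncomputable def Incoming.prodEquiv (i : V) :
    Incoming (fun i => G i × H i) i ≃ₗ[R] Incoming G i × Incoming H i :=
  .ofLinearMap
    ((map (fun i => LinearMap.fst R (G i) (H i)) i).prod
      (map (fun i => LinearMap.snd R (G i) (H i)) i))
    ((map (fun i => LinearMap.inl R (G i) (H i)) i).coprod
      (map (fun i => LinearMap.inr R (G i) (H i)) i))
    (by ext <;> simp)
    (by ext <;> simp)

/-- The structure maps on the family `G i × FreeRep M i` obtained from the structure maps `θ` on
`G` and those of the free representation by adding the component `μ` from `G` to the generators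
`M`: the mapping cylinder of `μ`. -/
noncomputable def cylinder (θ : ∀ i, Incoming G i →ₗ[R] G i) (μ : ∀ i, Incoming G i →ₗ[R] M i)
    (i : V) : Incoming (fun i => G i × FreeRep M i) i →ₗ[R] G i × FreeRep M i :=
  ((θ i).prod (FreeRep.unit R M i ∘ₗ μ i)).coprod (LinearMap.inr R _ _ ∘ₗ FreeRep.act R M i) ∘ₗ
    (Incoming.prodEquiv R G (FreeRep M) i).toLinearMap

theorem isShortExact_cylinder {θ : ∀ i, Incoming G i →ₗ[R] G i}
    {μ : ∀ i, Incoming G i →ₗ[R] M i} {i : V} {C : Type*} [AddCommGroup C] [Module R C]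
    {r : G i × M i →ₗ[R] C} (S : IsShortExact ((θ i).prod (μ i)) r) :
    IsShortExact (cylinder θ μ i) (r ∘ₗ LinearMap.id.prodMap (FreeRep.proj R M i)) :=
  (S.cylinder (FreeRep.isShortExact_act_proj R M i) (FreeRep.proj_unit i)).comp_equiv _

theorem cylinder_of (θ : ∀ i, Incoming G i →ₗ[R] G i) (μ : ∀ i, Incoming G i →ₗ[R] M i)
    {j i : V} (a : j ⟶ i) (x : G j × FreeRep M j) :
    cylinder θ μ i (Incoming.of R _ a x) =
      (θ i (Incoming.of R G a x.1), FreeRep.unit R M i (μ i (Incoming.of R G a x.1)) +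
        FreeRep.act R M i (Incoming.of R _ a x.2)) := by
  simp [cylinder, Incoming.prodEquiv]

variable {L : V → Type u} [∀ i, AddCommGroup (L i)] [∀ i, Module R (L i)]
  {ξ : ∀ i, Incoming H i →ₗ[R] H i} {θ : ∀ i, Incoming G i →ₗ[R] G i}
  {σ : ∀ i, Incoming L i →ₗ[R] L i} {ι : ∀ i, H i →ₗ[R] G i} {l : ∀ i, G i →ₗ[R] L i}

theorem inl_comp_eq_cylinder_comp_map (hι : ∀ i, ι i ∘ₗ ξ i = θ i ∘ₗ Incoming.map ι i)
    (μ : ∀ i, Incoming L i →ₗ[R] M i) (hlι : ∀ i x, l i (ι i x) = 0) (i : V) :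
    (LinearMap.inl R (G i) (FreeRep M i) ∘ₗ ι i) ∘ₗ ξ i =
      cylinder θ (fun i => μ i ∘ₗ Incoming.map l i) i ∘ₗ
        Incoming.map (fun i => LinearMap.inl R _ _ ∘ₗ ι i) i := by
  refine Incoming.hom_ext fun j a => LinearMap.ext fun x => ?_
  have hx : ι i (ξ i (Incoming.of R H a x)) = θ i (Incoming.of R G a (ι j x)) := by
    simpa using LinearMap.congr_fun (hι i) (Incoming.of R H a x)
  simp [cylinder_of, hx, hlι]

theorem prodMap_id_comp_cylinder (hl : ∀ i, l i ∘ₗ θ i = σ i ∘ₗ Incoming.map l i)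
    (μ : ∀ i, Incoming L i →ₗ[R] M i) (i : V) :
    (l i).prodMap LinearMap.id ∘ₗ cylinder θ (fun i => μ i ∘ₗ Incoming.map l i) i =
      cylinder σ μ i ∘ₗ Incoming.map (fun i => (l i).prodMap LinearMap.id) i := by
  refine Incoming.hom_ext fun j a => LinearMap.ext fun x => ?_
  have hx : l i (θ i (Incoming.of R G a x.1)) = σ i (Incoming.of R L a (l j x.1)) := by
    simpa using LinearMap.congr_fun (hl i) (Incoming.of R G a x.1)
  simp [cylinder_of, hx]

end Cylinder

section Representations

variable {R : Type u} [Ring R] {V : Type u} [Quiver.{u} V]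

theorem isShortExact_cokernel_π {A B : ModuleCat.{u} R} (f : A ⟶ B) [Mono f] :
    IsShortExact f.hom (cokernel.π f).hom where
  injective := (ModuleCat.mono_iff_injective f).1 ‹_›
  exact := (ShortComplex.ShortExact.moduleCat_exact_iff_function_exact _).1
    (ShortComplex.exact_cokernel f)
  surjective := (ModuleCat.epi_iff_surjective _).1 inferInstance

theorem IsShortExact.nonempty_linearEquiv {A B C C' : Type*} [AddCommGroup A] [AddCommGroup B]
    [AddCommGroup C] [AddCommGroup C'] [Module R A] [Module R B] [Module R C] [Module R C']
    {j : A →ₗ[R] B} {q : B →ₗ[R] C} {q' : B →ₗ[R] C'} (S : IsShortExact j q)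
    (S' : IsShortExact j q') : Nonempty (C ≃ₗ[R] C') :=
  ⟨(S.exact.linearEquivOfSurjective S.surjective).symm ≪≫ₗ
    S'.exact.linearEquivOfSurjective S'.surjective⟩

/-- The canonical homomorphism `φ_i` of a representation, as a linear map on a direct sum of
modules. -/
noncomputable def structureMap (X : Paths V ⥤ ModuleCat.{u} R) (i : V) :
    Incoming (fun i => X.obj (vtx i)) i →ₗ[R] X.obj (vtx i) :=
  Incoming.desc fun _ a => (X.map a.toPath).hom

theorem structureMap_of (X : Paths V ⥤ ModuleCat.{u} R) {j i : V} (a : j ⟶ i)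
    (x : X.obj (vtx j)) :
    structureMap X i (Incoming.of R (fun i => X.obj (vtx i)) a x) = (X.map a.toPath).hom x := by
  rw [structureMap, Incoming.desc_of]

open Classical in
theorem phi_eq (X : Paths V ⥤ ModuleCat.{u} R) (i : V) :
    phi X i = (ModuleCat.coprodIsoDirectSum fun p : Σ j : V, j ⟶ i => X.obj (vtx p.1)).hom ≫
      ModuleCat.ofHom (structureMap X i) := by
  refine Sigma.hom_ext _ _ fun p => ?_
  rw [phi, Sigma.ι_desc, ← Category.assoc, ModuleCat.ι_coprodIsoDirectSum_hom]
  ext x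
  exact (structureMap_of X p.2 x).symm

theorem exists_phi_hom_eq (X : Paths V ⥤ ModuleCat.{u} R) (i : V) :
    ∃ e : (∐ fun p : Σ j : V, j ⟶ i => X.obj (vtx p.1) : ModuleCat.{u} R) ≃ₗ[R]
        Incoming (fun i => X.obj (vtx i)) i,
      (phi X i).hom = structureMap X i ∘ₗ e.toLinearMap := by
  classical
  exact ⟨(ModuleCat.coprodIsoDirectSum _).toLinearEquiv, congrArg ModuleCat.Hom.hom (phi_eq X i)⟩

theorem isShortExact_structureMap (X : Paths V ⥤ ModuleCat.{u} R) (i : V) [Mono (phi X i)] :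
    IsShortExact (structureMap X i) (cokernel.π (phi X i)).hom := by
  obtain ⟨e, he⟩ := exists_phi_hom_eq X i
  have S := (isShortExact_cokernel_π (phi X i)).comp_equiv e.symm
  rwa [he, LinearMap.comp_assoc, LinearEquiv.comp_symm, LinearMap.comp_id] at S

theorem mono_phi_of_isShortExact {X : Paths V ⥤ ModuleCat.{u} R} {i : V} {C : Type*}
    [AddCommGroup C] [Module R C] {r : X.obj (vtx i) →ₗ[R] C}
    (S : IsShortExact (structureMap X i) r) :
    Mono (phi X i) ∧ Nonempty (C ≃ₗ[R] (cokernel (phi X i) : ModuleCat.{u} R)) := by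
  obtain ⟨e, he⟩ := exists_phi_hom_eq X i
  have S' := S.comp_equiv e
  rw [← he] at S'
  have : Mono (phi X i) := (ModuleCat.mono_iff_injective _).2 S'.injective
  exact ⟨this, S'.nonempty_linearEquiv (isShortExact_cokernel_π (phi X i))⟩

theorem exists_shortExact {X Y Z : Paths V ⥤ ModuleCat.{u} R}
    {f : ∀ i, X.obj (vtx i) →ₗ[R] Y.obj (vtx i)} {g : ∀ i, Y.obj (vtx i) →ₗ[R] Z.obj (vtx i)}
    (hf : ∀ i, f i ∘ₗ structureMap X i = structureMap Y i ∘ₗ Incoming.map f i)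
    (hg : ∀ i, g i ∘ₗ structureMap Y i = structureMap Z i ∘ₗ Incoming.map g i)
    (S : ∀ i, IsShortExact (f i) (g i)) :
    ∃ (f : X ⟶ Y) (g : Y ⟶ Z) (w : f ≫ g = 0), (ShortComplex.mk f g w).ShortExact := by
  have comm {X Y : Paths V ⥤ ModuleCat.{u} R} {f : ∀ i, X.obj (vtx i) →ₗ[R] Y.obj (vtx i)}
      (hf : ∀ i, f i ∘ₗ structureMap X i = structureMap Y i ∘ₗ Incoming.map f i) {j i : V}
      (a : j ⟶ i) : X.map a.toPath ≫ ModuleCat.ofHom (f i) =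
        ModuleCat.ofHom (f j) ≫ Y.map a.toPath := by
    refine ModuleCat.hom_ext (LinearMap.ext fun x => ?_)
    have hx := LinearMap.congr_fun (hf i) (Incoming.of R _ a x)
    rwa [LinearMap.comp_apply, LinearMap.comp_apply, Incoming.map_of, structureMap_of,
      structureMap_of] at hx
  let φ : X ⟶ Y := Paths.liftNatTrans (fun i => ModuleCat.ofHom (f i)) (comm hf)
  let ψ : Y ⟶ Z := Paths.liftNatTrans (fun i => ModuleCat.ofHom (g i)) (comm hg)
  have w : φ ≫ ψ = 0 :=
    NatTrans.ext (funext fun i => ModuleCat.hom_ext (LinearMap.ext (S i).apply_apply))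
  have hP : JointlyReflectIsomorphisms
      fun i : Paths V => (evaluation (Paths V) (ModuleCat.{u} R)).obj i :=
    ⟨fun φ _ => (NatTrans.isIso_iff_isIso_app φ).2 ‹_›⟩
  exact ⟨φ, ψ, w, (hP.shortExact_iff _).2 fun i =>
    ModuleCat.shortComplex_shortExact _ (S i).exact (S i).injective (S i).surjective⟩

/-- The representation with modules `G` and structure maps `θ`. -/
noncomputable def ofStructureMaps {G : V → Type u} [∀ i, AddCommGroup (G i)] [∀ i, Module R (G i)]
    (θ : ∀ i, Incoming G i →ₗ[R] G i) : Paths V ⥤ ModuleCat.{u} R :=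
  Paths.lift
    { obj := fun i => ModuleCat.of R (G i)
      map := fun {_ i} a => ModuleCat.ofHom (θ i ∘ₗ Incoming.of R G a) }

theorem structureMap_ofStructureMaps {G : V → Type u} [∀ i, AddCommGroup (G i)]
    [∀ i, Module R (G i)] (θ : ∀ i, Incoming G i →ₗ[R] G i) (i : V) :
    structureMap (ofStructureMaps θ) i = θ i := by
  refine Incoming.hom_ext (G := G) fun j a => LinearMap.ext fun x => ?_
  have ha : (ofStructureMaps θ).map a.toPath = ModuleCat.ofHom (θ i ∘ₗ Incoming.of R G a) :=
    Paths.lift_toPath _ a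
  exact (structureMap_of (ofStructureMaps θ) a x).trans (by rw [ha]; rfl)

theorem exists_shortExact_ofStructureMaps {X : Paths V ⥤ ModuleCat.{u} R} {G L : V → Type u}
    [∀ i, AddCommGroup (G i)] [∀ i, AddCommGroup (L i)] [∀ i, Module R (G i)]
    [∀ i, Module R (L i)] {θ : ∀ i, Incoming G i →ₗ[R] G i} {σ : ∀ i, Incoming L i →ₗ[R] L i}
    {f : ∀ i, X.obj (vtx i) →ₗ[R] G i} {g : ∀ i, G i →ₗ[R] L i}
    (hf : ∀ i, f i ∘ₗ structureMap X i = θ i ∘ₗ Incoming.map f i)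
    (hg : ∀ i, g i ∘ₗ θ i = σ i ∘ₗ Incoming.map g i) (S : ∀ i, IsShortExact (f i) (g i)) :
    ∃ (f : X ⟶ ofStructureMaps θ) (g : ofStructureMaps θ ⟶ ofStructureMaps σ) (w : f ≫ g = 0),
      (ShortComplex.mk f g w).ShortExact := by
  refine exists_shortExact (f := f) (g := g) (fun i => ?_) (fun i => ?_) S
  · rw [structureMap_ofStructureMaps]
    exact hf i
  · rw [structureMap_ofStructureMaps, structureMap_ofStructureMaps]
    exact hg i

theorem ofStructureMaps_mem_phiClass {S : Set (ModuleCat.{u} R)}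
    (hS : ∀ {M N : ModuleCat.{u} R}, (M ≃ₗ[R] N) → M ∈ S → N ∈ S) {G : V → Type u}
    [∀ i, AddCommGroup (G i)] [∀ i, Module R (G i)] {θ : ∀ i, Incoming G i →ₗ[R] G i}
    (hG : ∀ i, ModuleCat.of R (G i) ∈ S)
    (hC : ∀ i, ∃ (C : ModuleCat.{u} R) (r : G i →ₗ[R] C), C ∈ S ∧ IsShortExact (θ i) r) :
    ofStructureMaps θ ∈ PhiClass S := fun i => by
  obtain ⟨C, r, hC, S⟩ := hC i
  rw [← structureMap_ofStructureMaps θ i] at S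
  obtain ⟨hmono, ⟨e⟩⟩ := mono_phi_of_isShortExact S
  exact ⟨hmono, hG i, hS e hC⟩

theorem phiClass_mono {S S' : Set (ModuleCat.{u} R)} (h : S ⊆ S') :
    PhiClass (V := V) S ⊆ PhiClass S' :=
  fun _ hX i => ⟨(hX i).1, h (hX i).2.1, h (hX i).2.2⟩

end Representations

section Embedding

variable {R : Type u} [Ring R] {V : Type u} [Quiver.{u} V]

theorem FlatPGFSquare.exists_structureMaps {H : V → Type u} [∀ i, AddCommGroup (H i)]
    [∀ i, Module R (H i)] {ξ : ∀ i, Incoming H i →ₗ[R] H i} (c : ∀ i, FlatPGFSquare (ξ i)) :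
    ∃ (θ : ∀ i, Incoming (fun i => (c i).G) i →ₗ[R] (c i).G)
      (σ : ∀ i, Incoming (fun i => (c i).L) i →ₗ[R] (c i).L),
      (∀ i, (c i).ι ∘ₗ ξ i = θ i ∘ₗ Incoming.map (fun i => (c i).ι) i) ∧
      (∀ i, (c i).l ∘ₗ θ i = σ i ∘ₗ Incoming.map (fun i => (c i).l) i) ∧
      ∀ i {M N : ModuleCat.{u} R} {μ : Incoming (fun i => (c i).L) i →ₗ[R] M} {ν : M →ₗ[R] N},
        IsShortExact μ ν → IsFlat R M → IsPGF R N →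
          ∃ (C : ModuleCat.{u} R) (r : (c i).G × M →ₗ[R] C), IsFlat R C ∧
            IsShortExact ((θ i).prod (μ ∘ₗ Incoming.map (fun i => (c i).l) i)) r := by
  have S := Incoming.isShortExact_map fun i => (c i).exact_right
  choose θ hθ hC using fun i => (c i).exists_extension (S i)
    (.directSum fun p => (c p.1).flat_G) (.directSum fun p => (c p.1).pgf_L)
  choose σ hσ using fun i => exists_factor_of_surjective
    (Incoming.map (fun i => (c i).l) i) (S i).surjective ((c i).l ∘ₗ θ i) fun z hz => by
      obtain ⟨x, rfl⟩ := (S i).exists_of_apply_eq_zero hz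
      rw [LinearMap.comp_apply, hθ, (c i).exact_right.apply_apply]
  exact ⟨θ, σ, fun i => LinearMap.ext fun x => (hθ i x).symm,
    fun i => LinearMap.ext fun z => (hσ i z).symm, fun i => hC i⟩

theorem exists_shortExact_of_mem_phiClass {X : Paths V ⥤ ModuleCat.{u} R}
    (hX : X ∈ PhiClass (V := V) {M : ModuleCat.{u} R | IsGorensteinFlatModule R M}) :
    ∃ (F Y : Paths V ⥤ ModuleCat.{u} R) (f : X ⟶ F) (g : F ⟶ Y) (w : f ≫ g = 0),
      (ShortComplex.mk f g w).ShortExact ∧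
      F ∈ PhiClass (V := V) {M : ModuleCat.{u} R | IsFlat R M} ∧
      Y ∈ PhiClass (V := V) {M : ModuleCat.{u} R | IsPGF R M} := by
  have c i : FlatPGFSquare (structureMap X i) :=
    have := (hX i).1
    ((hX i).2.1.hasFlatPGFEmbedding.nonempty_flatPGFSquare (isShortExact_structureMap X i)
      (hX i).2.2.hasFlatPGFEmbedding).some
  obtain ⟨θ, σ, hθ, hσ, hC⟩ := FlatPGFSquare.exists_structureMaps c
  choose M N μ ν hM Sμ hN using fun i =>
    (IsPGF.directSum fun p : Σ j : V, j ⟶ i => (c p.1).pgf_L).exists_coresolution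
  have S i := (c i).exact_right
  have hf := inl_comp_eq_cylinder_comp_map hθ μ fun i => (S i).apply_apply
  have hg := prodMap_id_comp_cylinder hσ μ
  obtain ⟨f, g, w, hfg⟩ := exists_shortExact_ofStructureMaps hf hg fun i => (S i).inl_comp _
  refine ⟨_, _, f, g, w, hfg, ofStructureMaps_mem_phiClass (fun e h => h.equiv e)
    (fun i => (c i).flat_G.prod (.directSum fun _ => .of_free)) fun i => ?_,
    ofStructureMaps_mem_phiClass (fun e h => h.equiv e)
    (fun i => (c i).pgf_L.prod (.directSum fun _ => .of_free)) fun i => ?_⟩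
  · obtain ⟨C, r, hC, S⟩ := hC i (Sμ i) .of_free (hN i)
    exact ⟨C, _, hC, isShortExact_cylinder S⟩
  · obtain ⟨C, r, hC, S⟩ := (Sμ i).exists_isPGF_coker_prod (σ i) (c i).pgf_L (hN i)
    exact ⟨C, _, hC, isShortExact_cylinder S⟩

end Embedding

end QuiverGF

theorem stmt12_general (R : Type u) [Ring R] (V : Type u) [Quiver.{u} V] :
    IsCogenerator (PhiClass (V := V) {M : ModuleCat.{u} R | IsFlatModule R M})
      (PhiClass (V := V) {M : ModuleCat.{u} R | IsGorensteinFlatModule R M}) := by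
  refine ⟨phiClass_mono fun _ => IsFlatModule.isGorensteinFlatModule, fun X hX => ?_⟩
  obtain ⟨F, Y, f, g, w, hfg, hF, hY⟩ := exists_shortExact_of_mem_phiClass hX
  exact ⟨F, Y, f, g, w, hfg, phiClass_mono (fun _ => isFlatModule_iff.2) hF,
    phiClass_mono (fun _ => IsPGF.isGorensteinFlatModule) hY⟩

theorem stmt12 (R : Type u) [Ring R] (V : Type u) [Quiver.{u} V] (hV : LeftRooted V) :
    IsCogenerator (PhiClass (V := V) {M : ModuleCat.{u} R | IsFlatModule R M})
      (PhiClass (V := V) {M : ModuleCat.{u} R | IsGorensteinFlatModule R M}) :=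
  stmt12_general R V

end Statements
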